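/- arXiv:1107.0817 — 2 statements merged into one kernel-verified Lean document; each statement's English description precedes it below -/
import Mathlib

section
/- Let f be an orientation-preserving homeomorphism of ℝ² satisfying (P1) and (P2) and such that Fix(f) is not compact. Then for every finite Borel measure μ on ℝ² invariant under f and every real a > 0, the quantity μ({z ∈ Rec⁺(f) : ρ_{z'}(z) is defined and |ρ_{z'}(z)| ≥ a}) tends to 0 as z' tends to infinity along Fix(f); that is, for every ε > 0 there is a compact set K ⊂ ℝ² such that this measure is less than ε for every z' ∈ Fix(f) ∖ K. -/
open MeasureTheory Filter Topology Set Metric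

noncomputable section

attribute [local instance] Classical.propDecidable

/-- An isotopy (within homeomorphisms of `X`) from the identity to `f`,
parametrised by `t ∈ [0,1]` (the values for `t ∉ [0,1]` are irrelevant). -/
structure HIsotopy {X : Type*} [TopologicalSpace X] (f : X ≃ₜ X) where
  F : ℝ → X ≃ₜ X
  cont : Continuous fun p : ℝ × X => F p.1 p.2
  cont_symm : Continuous fun p : ℝ × X => (F p.1).symm p.2
  zero : F 0 = Homeomorph.refl X
  one : F 1 = f

/-- The set of fixed points of a map. -/
def FixPts {X : Type*} (g : X → X) : Set X := {z | g z = z}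

/-- The set of positively recurrent points of `f`. -/
def RecPlus (f : ℂ ≃ₜ ℂ) : Set ℂ :=
  {z | ∃ n : ℕ → ℕ, StrictMono n ∧ Tendsto (fun k => (⇑f)^[n k] z) atTop (𝓝 z)}

/-- The total angular variation (number of turns around the origin, i.e. the
integral of the polar-angle form `dθ`) of a continuous path `[0,1] → ℂ ∖ {0}`,
defined via a continuous lift of the argument (junk value otherwise). -/
def angVar (γ : ℝ → ℂ) : ℝ :=
  if h : ∃ θ : ℝ → ℝ, ContinuousOn θ (Set.Icc 0 1) ∧
      ∀ t ∈ Set.Icc (0 : ℝ) 1, γ t = (‖γ t‖ : ℂ) * Complex.exp ((θ t : ℂ) * Complex.I)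
  then (h.choose 1 - h.choose 0) / (2 * Real.pi)
  else 0

/-- `Enlace_I(z,z')`: the integral of `dθ` along `t ↦ f_t(z) - f_t(z')`. -/
def Enlace {f : ℂ ≃ₜ ℂ} (I : HIsotopy f) (z z' : ℂ) : ℝ :=
  angVar fun t => I.F t z - I.F t z'

/-- `Tourne_I(z)`: the integral of `dθ` along `t ↦ f_t(z)`. -/
def Tourne {f : ℂ ≃ₜ ℂ} (I : HIsotopy f) (z : ℂ) : ℝ :=
  angVar fun t => I.F t z

/-- Property (P1): `Enlace_I` is bounded on pairs of distinct fixed points. -/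
def P1 {f : ℂ ≃ₜ ℂ} (I : HIsotopy f) : Prop :=
  ∃ M : ℝ, ∀ z ∈ FixPts ⇑f, ∀ z' ∈ FixPts ⇑f, z ≠ z' → |Enlace I z z'| ≤ M

/-- Property (P2): `Tourne_I` is constant on the fixed points in a
neighbourhood of infinity (i.e. outside some compact set). -/
def P2 {f : ℂ ≃ₜ ℂ} (I : HIsotopy f) : Prop :=
  ∃ K : Set ℂ, IsCompact K ∧
    ∀ z ∈ FixPts ⇑f \ K, ∀ z' ∈ FixPts ⇑f \ K, Tourne I z = Tourne I z'

/-- An isotopy is adapted if `Tourne_I` vanishes on the fixed points in a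
neighbourhood of infinity. -/
def Adapted {f : ℂ ≃ₜ ℂ} (I : HIsotopy f) : Prop :=
  ∃ K : Set ℂ, IsCompact K ∧ ∀ z ∈ FixPts ⇑f \ K, Tourne I z = 0

/-- The orbit of `z` has rotation number `ρ` around `z'` (with respect to the
isotopy `I`): along every strictly increasing sequence of integers `(n k)` with
`f^[n k] z → z`, the Birkhoff averages of `Enlace I · z'` converge to `ρ`. -/
def HasRot {f : ℂ ≃ₜ ℂ} (I : HIsotopy f) (z' z : ℂ) (ρ : ℝ) : Prop :=
  ∀ n : ℕ → ℕ, StrictMono n → Tendsto (fun k => (⇑f)^[n k] z) atTop (𝓝 z) →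
    Tendsto (fun k => (∑ r ∈ Finset.range (n k), Enlace I ((⇑f)^[r] z) z') / (n k : ℝ))
      atTop (𝓝 ρ)

/-- The rotation number `ρ_{z'}(z)` as a function (junk value `0` if it is
not defined). -/
def rho {f : ℂ ≃ₜ ℂ} (I : HIsotopy f) (z' z : ℂ) : ℝ :=
  if h : ∃ ρ : ℝ, HasRot I z' z ρ then h.choose else 0

/-- A free disc for `f`: an open set homeomorphic to the plane and disjoint
from its image. -/
def FreeDisc (f : ℂ ≃ₜ ℂ) (U : Set ℂ) : Prop :=
  IsOpen U ∧ Nonempty (U ≃ₜ ℂ) ∧ Disjoint (⇑f '' U) U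

/-- The first return time `τ_U(z)` to `U` (junk value `0` if the orbit never
returns). -/
def retTime (f : ℂ ≃ₜ ℂ) (U : Set ℂ) (z : ℂ) : ℕ :=
  sInf {n : ℕ | 0 < n ∧ (⇑f)^[n] z ∈ U}

/-- `γ` is a path in `U` from `x` to `y` (parametrised by `[0,1]`). -/
def IsPathIn (U : Set ℂ) (x y : ℂ) (γ : ℝ → ℂ) : Prop :=
  ContinuousOn γ (Set.Icc 0 1) ∧ (∀ t ∈ Set.Icc (0 : ℝ) 1, γ t ∈ U) ∧ γ 0 = x ∧ γ 1 = y

/-- `α_{U,z'}(z) = Σ_{0 ≤ ℓ < τ_U(z)} Enlace_I(f^ℓ(z),z') + ∫_{γ_{U,z} - z'} dθ`,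
where `γ_{U,z}` is a path in `U` joining the first return `F_U(z)` to `z`. -/
def alphaU {f : ℂ ≃ₜ ℂ} (I : HIsotopy f) (U : Set ℂ) (z' z : ℂ) : ℝ :=
  (∑ ℓ ∈ Finset.range (retTime f U z), Enlace I ((⇑f)^[ℓ] z) z') +
    if h : ∃ γ : ℝ → ℂ, IsPathIn U ((⇑f)^[retTime f U z] z) z γ
    then angVar fun t => h.choose t - z' else 0

/-- `α̂_{U,R}(z) = sup { |α_{U,z'}(z)| : z' ∈ Fix(f), ‖z'‖ ≥ R }`. -/
def alphaHat {f : ℂ ≃ₜ ℂ} (I : HIsotopy f) (U : Set ℂ) (R : ℝ) (z : ℂ) : ℝ :=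
  sSup {a : ℝ | ∃ z' ∈ FixPts ⇑f, R ≤ ‖z'‖ ∧ a = |alphaU I U z' z|}

/-- The (closed) support of a measure. -/
def measSupport {X : Type*} [TopologicalSpace X] {m : MeasurableSpace X}
    (μ : Measure X) : Set X :=
  {x | ∀ U : Set X, IsOpen U → x ∈ U → μ U ≠ 0}

/-- The standard unit sphere `S² ⊂ ℝ³`. -/
notation "𝕊²" => Metric.sphere (0 : EuclideanSpace ℝ (Fin 3)) 1

instance : Fact (Module.finrank ℝ (EuclideanSpace ℝ (Fin 3)) = 3) :=
  ⟨finrank_euclideanSpace_fin⟩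

open Manifold in
/-- `g` is a `C¹` diffeomorphism of the standard sphere. -/
def IsC1SphereDiffeo (g : 𝕊² → 𝕊²) : Prop :=
  Function.Bijective g ∧ ContMDiff (𝓡 2) (𝓡 2) 1 g ∧
    ∃ g' : 𝕊² → 𝕊², Function.LeftInverse g' g ∧ Function.RightInverse g' g ∧
      ContMDiff (𝓡 2) (𝓡 2) 1 g'

/-- `f` extends to a `C¹` diffeomorphism of `S² = ℝ² ⊔ {∞}` for some smooth
structure on `S²`: transporting the extension of `f` to the one-point
compactification through some homeomorphism with the standard sphere yields a
`C¹` diffeomorphism. -/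
def ExtendsToC1SphereDiffeo (f : ℂ ≃ₜ ℂ) : Prop :=
  ∃ φ : OnePoint ℂ ≃ₜ 𝕊², IsC1SphereDiffeo fun x => φ (OnePoint.map (⇑f) (φ.symm x))

/-- The commutator loop `t ↦ [f₁^t, f₂^t] = f₁^t ∘ f₂^t ∘ (f₁^t)⁻¹ ∘ (f₂^t)⁻¹`. -/
def commLoop {X : Type*} [TopologicalSpace X] {f₁ f₂ : X ≃ₜ X}
    (I₁ : HIsotopy f₁) (I₂ : HIsotopy f₂) (t : ℝ) : X ≃ₜ X :=
  (I₂.F t).symm.trans ((I₁.F t).symm.trans ((I₂.F t).trans (I₁.F t)))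

/-- The invariant `W(f₁,f₂)` vanishes: for isotopies from the identity to
`f₁`, `f₂`, the commutator loop is null-homotopic (rel basepoint) in the group
of homeomorphisms. -/
def WVanishes {X : Type*} [TopologicalSpace X] (f₁ f₂ : X ≃ₜ X) : Prop :=
  ∃ (I₁ : HIsotopy f₁) (I₂ : HIsotopy f₂) (H : ℝ → ℝ → X ≃ₜ X),
    Continuous (fun p : (ℝ × ℝ) × X => H p.1.1 p.1.2 p.2) ∧
    Continuous (fun p : (ℝ × ℝ) × X => (H p.1.1 p.1.2).symm p.2) ∧
    (∀ t, H 0 t = commLoop I₁ I₂ t) ∧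
    (∀ t, H 1 t = Homeomorph.refl X) ∧
    (∀ s, H s 0 = Homeomorph.refl X) ∧
    (∀ s, H s 1 = Homeomorph.refl X)

/-- The shorter great-circle arc joining `p` to `z` on the unit sphere
(for `z` neither `p` nor its antipode): the points of the sphere which are
nonnegative linear combinations of `p` and `z`. -/
def minorArcS (p z : 𝕊²) : Set 𝕊² :=
  {x | ∃ a b : ℝ, 0 ≤ a ∧ 0 ≤ b ∧
    (x : EuclideanSpace ℝ (Fin 3)) =
      a • (p : EuclideanSpace ℝ (Fin 3)) + b • (z : EuclideanSpace ℝ (Fin 3))}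

/-- The longer great-circle arc joining `p` to `z` on the unit sphere. -/
def majorArcS (p z : 𝕊²) : Set 𝕊² :=
  {x | ∃ a b : ℝ, (a ≤ 0 ∨ b ≤ 0) ∧
    (x : EuclideanSpace ℝ (Fin 3)) =
      a • (p : EuclideanSpace ℝ (Fin 3)) + b • (z : EuclideanSpace ℝ (Fin 3))}

/-!
Fix `z' ∈ Fix(f)` and a free ball `U`, that is `f(U) ∩ U = ∅`. The rotation around `z'` of an orbit
segment with endpoints in `U`, closed up inside `U`, is an integer `A`, additive along successive
returns. If `A` took the value `0` at one first return to `U` and a value larger than `n k` at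
another one, of time `n`, where `k` bounds the linking numbers of fixed points, then suitable lifts
of these two returns would form a closed chain of free discs for the lift of `f` to the universal
cover of `ℂ ∖ {z'}`, shifted by `k` turns. By Franks' lemma, a consequence of Brouwer's theorem on
plane homeomorphisms without fixed points, this shifted lift would have a fixed point, which
contradicts the choice of `k`.

Since the isotopy is adapted, points of a compact set turn little around a fixed point `z'` near
infinity, so that `A = 0` at all first returns of time at most `m`. Hence `|A|` is at most `k` times
the time spent in the part of the Kakutani tower over `U` above the first returns of time greater
than `m`. Points of `U` with rotation number at least `a` in absolute value visit this part with
upper frequency at least `a / (2 k)`; by the maximal ergodic inequality they have measure at most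
`2 k / a` times that of this part of the tower, which tends to `0` as `m → ∞`.
-/

/-! ### Continuous logarithms -/

theorem eq_of_exp_comp_eq_const {X : Type*} [TopologicalSpace X] {S : Set X}
    (hS : IsPreconnected S) {g : X → ℂ} (hg : ContinuousOn g S) {c : ℂ}
    (hc : ∀ x ∈ S, Complex.exp (g x) = c) {x y : X} (hx : x ∈ S) (hy : y ∈ S) : g x = g y :=
  Complex.isCoveringMap_exp.constOn_of_comp hS hg
    (fun x hx y hy => Subtype.ext ((hc x hx).trans (hc y hy).symm)) hx hy

theorem exists_log_homotopy {A : Type*} [TopologicalSpace A] {u : unitInterval × A → ℂ}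
    (hu : Continuous u) (hu₀ : ∀ p, u p ≠ 0) {v : A → ℂ} (hv : Continuous v)
    (hvu : ∀ a, Complex.exp (v a) = u (0, a)) :
    ∃ V : unitInterval × A → ℂ, Continuous V ∧ (∀ p, Complex.exp (V p) = u p) ∧
      ∀ a, V (0, a) = v a := by
  let H : C(unitInterval × A, {z : ℂ // z ≠ 0}) := ⟨fun p => ⟨u p, hu₀ p⟩, hu.subtype_mk _⟩
  let v' : C(A, ℂ) := ⟨v, hv⟩
  have hH₀ : ∀ a, H (0, a) = ⟨_, (v' a).exp_ne_zero⟩ := fun a => Subtype.ext (hvu a).symm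
  let V := Complex.isCoveringMap_exp.liftHomotopy H v' hH₀
  have hV := Complex.isCoveringMap_exp.liftHomotopy_lifts H v' hH₀
  exact ⟨V, V.continuous, fun p => congrArg Subtype.val (congrFun hV p),
    Complex.isCoveringMap_exp.liftHomotopy_zero H v' hH₀⟩

theorem exists_continuous_log {X : Type*} [TopologicalSpace X] [ContractibleSpace X] {u : X → ℂ}
    (hu : Continuous u) (hu₀ : ∀ x, u x ≠ 0) :
    ∃ φ : X → ℂ, Continuous φ ∧ ∀ x, Complex.exp (φ x) = u x := by
  obtain ⟨x₀, ⟨h⟩⟩ := id_nullhomotopic X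
  obtain ⟨V, hV, hVu, -⟩ := exists_log_homotopy (u := fun p => u (h.symm p)) (by fun_prop)
    (fun p => hu₀ _) (v := fun _ => Complex.log (u x₀)) continuous_const
    (fun x => by simp [Complex.exp_log (hu₀ x₀)])
  exact ⟨fun x => V (1, x), by fun_prop, fun x => by simp [hVu]⟩

theorem exists_continuousOn_log_of_convex {E : Type*} [AddCommGroup E] [Module ℝ E]
    [TopologicalSpace E] [ContinuousAdd E] [ContinuousSMul ℝ E] {S : Set E} (hS : Convex ℝ S)
    {u : E → ℂ} (hu : ContinuousOn u S) (hu₀ : ∀ x ∈ S, u x ≠ 0) :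
    ∃ φ : E → ℂ, ContinuousOn φ S ∧ ∀ x ∈ S, Complex.exp (φ x) = u x := by
  rcases S.eq_empty_or_nonempty with rfl | hne
  · exact ⟨0, by simp, by simp⟩
  have := hS.contractibleSpace hne
  obtain ⟨φ, hφ, hφu⟩ := exists_continuous_log hu.domRestrict fun x : S => hu₀ x x.2
  have hext : S.domRestrict (Function.extend (Subtype.val : S → E) φ 0) = φ :=
    funext fun x => Subtype.val_injective.extend_apply φ 0 x
  refine ⟨Function.extend Subtype.val φ 0, ?_, fun x hx => ?_⟩
  · rwa [continuousOn_iff_continuous_domRestrict, hext]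
  · exact (congrArg Complex.exp (congrFun hext ⟨x, hx⟩)).trans (hφu ⟨x, hx⟩)

/-! ### Chord logarithms -/

/-- `L` is a continuous symmetric logarithm of the difference quotient `(h z - h w) / (z - w)`.
Its imaginary part measures how the direction of the chord from `w` to `z` turns under `h`; for
planar homeomorphisms it plays the role of an isotopy from the identity to `h`. -/
structure IsChordLog (h : ℂ → ℂ) (L : ℂ → ℂ → ℂ) : Prop where
  continuousOn : ContinuousOn (Function.uncurry L) {p | p.1 ≠ p.2}
  exp_mul_sub : ∀ z w, z ≠ w → Complex.exp (L z w) * (z - w) = h z - h w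
  symm : ∀ z w, z ≠ w → L z w = L w z

/-- Existence of a chord logarithm of `h`; see `IsChordLog`. -/
def HasChordLog (h : ℂ → ℂ) : Prop := ∃ L, IsChordLog h L

theorem IsChordLog.injective {h : ℂ → ℂ} {L : ℂ → ℂ → ℂ} (hL : IsChordLog h L) :
    Function.Injective h := by
  intro z w hzw
  by_contra hne
  have := hL.exp_mul_sub z w hne
  simp [hzw, sub_ne_zero.2 hne] at this

theorem HasChordLog.id : HasChordLog id :=
  ⟨fun _ _ => 0, continuousOn_const, by simp, by simp⟩

theorem HasChordLog.comp {g h : ℂ → ℂ} (hg : HasChordLog g) (hh : HasChordLog h)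
    (hc : Continuous h) : HasChordLog (g ∘ h) := by
  obtain ⟨L, hL⟩ := hg
  obtain ⟨K, hK⟩ := hh
  have hinj := hK.injective
  refine ⟨fun z w => L (h z) (h w) + K z w, ?_, fun z w hzw => ?_, fun z w hzw => ?_⟩
  · have hmaps : MapsTo (fun p : ℂ × ℂ => (h p.1, h p.2)) {p | p.1 ≠ p.2} {p | p.1 ≠ p.2} :=
      fun p hp => hinj.ne hp
    exact (hL.continuousOn.comp (by fun_prop) hmaps).add hK.continuousOn
  · rw [Complex.exp_add, mul_assoc, hK.exp_mul_sub z w hzw, hL.exp_mul_sub _ _ (hinj.ne hzw),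
      Function.comp_apply, Function.comp_apply]
  · simp only [hL.symm _ _ (hinj.ne hzw), hK.symm z w hzw]

theorem HasChordLog.add_const {h : ℂ → ℂ} (hh : HasChordLog h) (c : ℂ) :
    HasChordLog fun z => h z + c := by
  obtain ⟨L, hL⟩ := hh
  exact ⟨L, hL.continuousOn, fun z w hzw => by rw [hL.exp_mul_sub z w hzw]; ring, hL.symm⟩

theorem HasChordLog.id_add_of_lipschitzWith {v : ℂ → ℂ} {K : NNReal} (hv : LipschitzWith K v)
    (hK : K < 1) : HasChordLog fun z => z + v z := by
  have hquot : ∀ z w, z ≠ w → 1 + (v z - v w) / (z - w) ∈ Complex.slitPlane := by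
    intro z w hzw
    have hpos : 0 < ‖z - w‖ := norm_sub_pos_iff.2 hzw
    apply Complex.mem_slitPlane_of_norm_lt_one
    rw [norm_div, div_lt_one hpos]
    exact (hv.norm_sub_le z w).trans_lt (mul_lt_of_lt_one_left hpos hK)
  refine ⟨fun z w => Complex.log (1 + (v z - v w) / (z - w)), ?_, fun z w hzw => ?_,
    fun z w _ => ?_⟩
  · refine ContinuousOn.clog ?_ fun p hp => hquot p.1 p.2 hp
    have hvc := hv.continuous
    exact continuousOn_const.add (ContinuousOn.div (by fun_prop) (by fun_prop)
      fun p hp => sub_ne_zero.2 hp)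
  · rw [Complex.exp_log (Complex.slitPlane_ne_zero (hquot z w hzw))]
    field_simp [sub_ne_zero.2 hzw]
    ring
  · rw [← neg_sub (v w), ← neg_sub w, neg_div_neg_eq]

/-! ### Equivariant curves -/

/-- `φ` is a continuous logarithm of the chords `Λ b - Λ a` of the curve `Λ`, for parameters in the
strip `a < b < a + P`. -/
structure IsStripLog (Λ : ℝ → ℂ) (P : ℝ) (φ : ℝ → ℝ → ℂ) : Prop where
  continuousOn : ContinuousOn (Function.uncurry φ) {p | p.1 < p.2 ∧ p.2 < p.1 + P}
  exp_eq : ∀ a b, a < b → b < a + P → Complex.exp (φ a b) = Λ b - Λ a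

theorem convex_strip (P : ℝ) : Convex ℝ {p : ℝ × ℝ | p.1 < p.2 ∧ p.2 < p.1 + P} := by
  have hlin : IsLinearMap ℝ fun p : ℝ × ℝ => p.2 - p.1 :=
    (LinearMap.snd ℝ ℝ ℝ - LinearMap.fst ℝ ℝ ℝ).isLinear
  convert! (convex_halfSpace_gt hlin 0).inter (convex_halfSpace_lt hlin P) using 1
  ext p
  simp only [mem_ofPred_eq, mem_inter_iff, sub_pos, sub_lt_iff_lt_add']

section StripLog

variable {h : ℂ → ℂ} {L : ℂ → ℂ → ℂ} {Λ : ℝ → ℂ} {P : ℝ} {φ : ℝ → ℝ → ℂ}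

theorem exists_isStripLog (hΛ : Continuous Λ) (hinj : ∀ a b, a < b → b < a + P → Λ a ≠ Λ b) :
    ∃ φ, IsStripLog Λ P φ := by
  obtain ⟨φ, hφ, hexp⟩ := exists_continuousOn_log_of_convex (convex_strip P)
    (u := fun p => Λ p.2 - Λ p.1) (by fun_prop)
    fun p hp => sub_ne_zero.2 (hinj p.1 p.2 hp.1 hp.2).symm
  exact ⟨fun a b => φ (a, b), hφ, fun a b hab hbP => hexp (a, b) ⟨hab, hbP⟩⟩

theorem IsStripLog.ne (hφ : IsStripLog Λ P φ) {a b : ℝ} (hab : a < b) (hbP : b < a + P) :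
    Λ a ≠ Λ b := fun heq =>
  Complex.exp_ne_zero (φ a b) (by rw [hφ.exp_eq a b hab hbP, heq, sub_self])

theorem IsStripLog.comp_continuousOn (hφ : IsStripLog Λ P φ) {X : Type*} [TopologicalSpace X]
    {S : Set X} {α β : X → ℝ} (hα : Continuous α) (hβ : Continuous β)
    (hS : ∀ x ∈ S, α x < β x ∧ β x < α x + P) : ContinuousOn (fun x => φ (α x) (β x)) S :=
  hφ.continuousOn.comp (hα.prodMk hβ).continuousOn hS

theorem IsStripLog.shift_sub_eq (hφ : IsStripLog Λ P φ) (hL : IsChordLog h L) (hΛ : Continuous Λ)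
    (hΛh : ∀ t, Λ (t + 1) = h (Λ t)) {a b c d : ℝ} (hab : a < b) (hbP : b < a + P) (hcd : c < d)
    (hdP : d < c + P) : φ (a + 1) (b + 1) - φ a b - L (Λ a) (Λ b) =
      φ (c + 1) (d + 1) - φ c d - L (Λ c) (Λ d) := by
  refine eq_of_exp_comp_eq_const (convex_strip P).isPreconnected (c := 1)
    (g := fun p : ℝ × ℝ => φ (p.1 + 1) (p.2 + 1) - φ p.1 p.2 - L (Λ p.1) (Λ p.2)) (x := (a, b))
    (y := (c, d)) ?_ (fun p hp => ?_) ⟨hab, hbP⟩ ⟨hcd, hdP⟩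
  · have hΛne : MapsTo (fun p : ℝ × ℝ => (Λ p.1, Λ p.2)) {p | p.1 < p.2 ∧ p.2 < p.1 + P}
        {q | q.1 ≠ q.2} := fun p hp => hφ.ne hp.1 hp.2
    refine ((hφ.comp_continuousOn (by fun_prop) (by fun_prop) fun p hp => ?_).sub
      hφ.continuousOn).sub (hL.continuousOn.comp (by fun_prop) hΛne)
    exact ⟨by linarith [hp.1], by linarith [hp.2]⟩
  · obtain ⟨hlt, hltP⟩ := hp
    have hchord := hL.exp_mul_sub _ _ (hφ.ne hlt hltP)
    rw [Complex.exp_sub, Complex.exp_sub, hφ.exp_eq _ _ hlt hltP,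
      hφ.exp_eq _ _ (by linarith) (by linarith), hΛh, hΛh, div_div, div_eq_one_iff_eq
        (mul_ne_zero (sub_ne_zero.2 (hφ.ne hlt hltP).symm) (Complex.exp_ne_zero _))]
    linear_combination hchord

theorem IsStripLog.eq_of_apply_eq (hφ : IsStripLog Λ P φ) (hc : Continuous h)
    (hfix : ∀ z, h z ≠ z) (hΛ : Continuous Λ) (hΛh : ∀ t, Λ (t + 1) = h (Λ t)) (hP : 1 < P)
    {a b : ℝ} (hab : Λ a = Λ b) : φ a (a + 1) = φ b (b + 1) := by
  obtain ⟨θ, hθ, hθh⟩ := exists_continuous_log (u := fun z => h z - z) (by fun_prop)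
    fun z => sub_ne_zero.2 (hfix z)
  have hconst : φ a (a + 1) - θ (Λ a) = φ b (b + 1) - θ (Λ b) := by
    refine eq_of_exp_comp_eq_const isPreconnected_univ (c := 1)
      (g := fun t => φ t (t + 1) - θ (Λ t)) ?_ (fun t _ => ?_) (mem_univ a) (mem_univ b)
    · exact (hφ.comp_continuousOn (by fun_prop) (by fun_prop) fun t _ => ⟨by simp, by simpa⟩).sub
        (by fun_prop)
    · rw [Complex.exp_sub, hφ.exp_eq _ _ (by simp) (by simpa), hθh, hΛh,
        div_self (sub_ne_zero.2 (hfix _))]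
  rwa [hab, sub_left_inj] at hconst

theorem IsStripLog.exists_eq_of_apply_add_eq (hφ : IsStripLog Λ P φ) {s : ℝ}
    (hs : Λ (s + P) = Λ s) :
    ∃ κ, κ ≠ 0 ∧ ∀ b ∈ Ioo s (s + P), φ b (s + P) - φ s b = κ := by
  have hexp : ∀ b ∈ Ioo s (s + P), Complex.exp (φ b (s + P) - φ s b) = -1 := by
    intro b hb
    have hne := hφ.ne hb.1 hb.2
    rw [Complex.exp_sub, hφ.exp_eq _ _ hb.2 (by linarith [hb.1]), hφ.exp_eq _ _ hb.1 hb.2, hs,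
      ← neg_sub (Λ b), neg_div, div_self (sub_ne_zero.2 hne.symm)]
  rcases (Ioo s (s + P)).eq_empty_or_nonempty with hempty | ⟨c, hc⟩
  · exact ⟨1, one_ne_zero, by simp [hempty]⟩
  refine ⟨φ c (s + P) - φ s c, fun h₀ => ?_, fun b hb => ?_⟩
  · have := hexp c hc
    rw [h₀, Complex.exp_zero] at this
    norm_num at this
  · exact eq_of_exp_comp_eq_const isPreconnected_Ioo (g := fun b => φ b (s + P) - φ s b)
      ((hφ.comp_continuousOn (by fun_prop) (by fun_prop) fun b hb => ⟨hb.2, by linarith [hb.1]⟩).sub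
        (hφ.comp_continuousOn (by fun_prop) (by fun_prop) fun b hb => hb)) hexp hb hc

-- At a first coincidence `Λ (s + P) = Λ s` the chords through the double point give
-- `φ b (s + P) - φ s b = κ` for all `b`, where `exp κ = -1`. Comparing `b = s + 1` with
-- `b = s + P - 1` through the action of `h` on chords yields `κ = -κ`.
theorem apply_add_ne_of_injective_on_strip (hh : HasChordLog h) (hc : Continuous h)
    (hfix : ∀ z, h z ≠ z) (hΛ : Continuous Λ) (hΛh : ∀ t, Λ (t + 1) = h (Λ t)) (hP : 1 < P)
    (hinj : ∀ a b, a < b → b < a + P → Λ a ≠ Λ b) (s : ℝ) : Λ (s + P) ≠ Λ s := by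
  intro hs
  obtain ⟨L, hL⟩ := hh
  obtain ⟨φ, hφ⟩ := exists_isStripLog hΛ hinj
  obtain ⟨κ, hκ₀, hκ⟩ := hφ.exists_eq_of_apply_add_eq hs
  have hκ₁ := hκ (s + 1) ⟨by linarith, by linarith⟩
  have hκ₂ := hκ (s + P - 1) ⟨by linarith, by linarith⟩
  have hshift := hφ.shift_sub_eq hL hΛ hΛh (a := s) (b := s + P - 1) (c := s + P - 1) (d := s + P)
    (by linarith) (by linarith) (by linarith) (by linarith)
  have hdiag := hφ.eq_of_apply_eq hc hfix hΛ hΛh hP hs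
  have hsymm := hL.symm _ _ (hinj s (s + P - 1) (by linarith) (by linarith))
  rw [sub_add_cancel, hs] at hshift
  exact hκ₀ (by linear_combination (1 / 2 : ℂ) * (hshift - hκ₁ - hκ₂ + hdiag + hsymm))

end StripLog

/-! ### Brouwer's lemma on periodic points -/

theorem exists_mem_Ico_apply_add_eq {X : Type*} {Λ : ℝ → X}
    (hper : ∀ a b, Λ (a + 1) = Λ (b + 1) ↔ Λ a = Λ b) {a P : ℝ} (heq : Λ (a + P) = Λ a) :
    ∃ a' ∈ Ico (0 : ℝ) 1, Λ (a' + P) = Λ a' := by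
  have hperP : Function.Periodic (fun a => Λ (a + P) = Λ a) 1 := fun a => by
    simp only [add_right_comm a 1 P, hper]
  obtain ⟨a', ha', h'⟩ := hperP.exists_mem_Ico₀ one_pos a
  exact ⟨a', ha', h' ▸ heq⟩

theorem exists_first_coincidence {Λ : ℝ → ℂ} (hΛ : Continuous Λ)
    (hper : ∀ a b, Λ (a + 1) = Λ (b + 1) ↔ Λ a = Λ b)
    (hinj : ∀ a b, a < b → b ≤ a + 1 → Λ a ≠ Λ b) {a b : ℝ} (hab : a < b) (heq : Λ a = Λ b) :
    ∃ s P, 1 < P ∧ Λ (s + P) = Λ s ∧ ∀ a b, a < b → b < a + P → Λ a ≠ Λ b := by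
  let gaps : Set ℝ := {P | 1 ≤ P ∧ ∃ a ∈ Icc (0 : ℝ) 1, Λ (a + P) = Λ a}
  have hgaps_closed : IsClosed gaps := by
    have himage : gaps = Ici 1 ∩
        Prod.snd '' {p : Icc (0 : ℝ) 1 × ℝ | Λ (p.1 + p.2) = Λ p.1} := by
      ext P; simp [gaps]
    rw [himage]
    exact isClosed_Ici.inter
      (isClosedMap_snd_of_compactSpace _ (isClosed_eq (by fun_prop) (by fun_prop)))
  have hmem_gaps : ∀ a b, a < b → Λ a = Λ b → b - a ∈ gaps := by
    intro a b hab heq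
    obtain ⟨a', ha', heq'⟩ := exists_mem_Ico_apply_add_eq hper
      (show Λ (a + (b - a)) = Λ a by rw [add_sub_cancel, heq])
    exact ⟨not_lt.1 fun hlt => hinj a b hab (by linarith) heq, a', Ico_subset_Icc_self ha', heq'⟩
  have hbdd : BddBelow gaps := ⟨1, fun P hP => hP.1⟩
  obtain ⟨hone, s, -, hs⟩ := hgaps_closed.csInf_mem ⟨_, hmem_gaps a b hab heq⟩ hbdd
  refine ⟨s, sInf gaps, hone.lt_of_ne fun hone_eq => ?_, hs, fun a b hab hb heq => ?_⟩
  · exact hinj s (s + sInf gaps) (by linarith) (by linarith) hs.symm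
  · linarith [csInf_le hbdd (hmem_gaps a b hab heq)]

theorem injective_of_equivariant_curve {h : ℂ → ℂ} (hh : HasChordLog h) (hc : Continuous h)
    (hfix : ∀ z, h z ≠ z) {Λ : ℝ → ℂ} (hΛ : Continuous Λ) (hΛh : ∀ t, Λ (t + 1) = h (Λ t))
    (hinj : ∀ a b, a < b → b ≤ a + 1 → Λ a ≠ Λ b) : Function.Injective Λ := by
  have hh_inj : Function.Injective h := hh.choose_spec.injective
  refine Function.Injective.of_lt_imp_ne fun a b hab heq => ?_
  obtain ⟨s, P, hP, hs, hne⟩ := exists_first_coincidence hΛ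
    (fun a b => by rw [hΛh, hΛh, hh_inj.eq_iff]) hinj hab heq
  exact apply_add_ne_of_injective_on_strip hh hc hfix hΛ hΛh hP hne s hs

section OrbitCurve

variable {X : Type*} [TopologicalSpace X]

/-- The concatenation of the images of the arc `α : [0, 1] → X` under all powers of `h`, meant for
arcs from a point to its image. -/
def orbitCurve (h : X ≃ₜ X) (α : ℝ → X) (t : ℝ) : X := (h ^ ⌊t⌋) (α (Int.fract t))

variable {h : X ≃ₜ X} {α : ℝ → X}

theorem orbitCurve_add_one (t : ℝ) : orbitCurve h α (t + 1) = h (orbitCurve h α t) := by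
  rw [orbitCurve, orbitCurve, Int.floor_add_one, Int.fract_add_one, add_comm, zpow_one_add]
  rfl

theorem orbitCurve_of_mem_Icc (hα : α 1 = h (α 0)) {n : ℤ} {t : ℝ} (ht : t ∈ Icc (n : ℝ) (n + 1)) :
    orbitCurve h α t = (h ^ n) (α (t - n)) := by
  rcases ht.2.eq_or_lt with rfl | hlt
  · rw [orbitCurve, ← Int.cast_one, ← Int.cast_add, Int.floor_intCast, Int.fract_intCast,
      zpow_add_one, Int.cast_add, add_sub_cancel_left, Int.cast_one, hα]
    rfl
  · have hfloor : ⌊t⌋ = n := Int.floor_eq_iff.2 ⟨ht.1, hlt⟩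
    rw [orbitCurve, ← Int.self_sub_floor, hfloor]

theorem continuous_orbitCurve (hα : α 1 = h (α 0)) (hαc : Continuous α) :
    Continuous (orbitCurve h α) := by
  have hpiece : ∀ n : ℤ, ContinuousOn (orbitCurve h α) (Icc n (n + 1)) := fun n =>
    ((h ^ n).continuous.comp (hαc.comp (continuous_sub_right (n : ℝ)))).continuousOn.congr
      fun t ht => orbitCurve_of_mem_Icc hα ht
  refine continuous_iff_continuousAt.2 fun t => ?_
  have hunion : ContinuousOn (orbitCurve h α) (Icc (⌊t⌋ - 1) (⌊t⌋ + 1)) := by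
    have hprev := hpiece (⌊t⌋ - 1)
    rw [Int.cast_sub, Int.cast_one, sub_add_cancel] at hprev
    rw [← Icc_union_Icc_eq_Icc (b := (⌊t⌋ : ℝ)) (by linarith) (by linarith)]
    exact hprev.union_of_isClosed (hpiece _) isClosed_Icc isClosed_Icc
  exact hunion.continuousAt (Icc_mem_nhds (by linarith [Int.floor_le t]) (Int.lt_floor_add_one t))

theorem orbitCurve_ne_of_le_add_one (hα : α 1 = h (α 0)) (hinj : InjOn α (Icc 0 1))
    (hne : ∀ s ∈ Ioo (0 : ℝ) 1, ∀ t ∈ Icc (0 : ℝ) 1, h (α s) ≠ α t) {a b : ℝ} (hab : a < b)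
    (hb : b ≤ a + 1) : orbitCurve h α a ≠ orbitCurve h α b := by
  intro heq
  obtain ⟨c, hc, heq⟩ := exists_mem_Ico_apply_add_eq (Λ := orbitCurve h α)
    (fun a b => by simp only [orbitCurve_add_one, h.injective.eq_iff])
    (show orbitCurve h α (a + (b - a)) = orbitCurve h α a by rw [add_sub_cancel, heq])
  have hα_eq : ∀ t ∈ Icc (0 : ℝ) 1, orbitCurve h α t = α t := fun t ht => by
    simpa using orbitCurve_of_mem_Icc (n := 0) hα (by simpa using ht)
  have hcI := Ico_subset_Icc_self hc
  rw [hα_eq c hcI] at heq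
  rcases le_or_gt (c + (b - a)) 1 with hle | hlt
  · have hmem : c + (b - a) ∈ Icc (0 : ℝ) 1 := ⟨by linarith [hc.1], hle⟩
    rw [hα_eq _ hmem] at heq
    linarith [hinj hmem hcI heq]
  · have hmem : c + (b - a) - 1 ∈ Ioo (0 : ℝ) 1 := ⟨by linarith, by linarith [hc.2]⟩
    rw [← sub_add_cancel (c + (b - a)) 1, orbitCurve_add_one,
      hα_eq _ (Ioo_subset_Icc_self hmem)] at heq
    exact hne _ hmem c hcI heq

end OrbitCurve

theorem exists_critical_ball {E : Type*} [NormedAddCommGroup E] [NormedSpace ℝ E] [ProperSpace E]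
    (h : E ≃ₜ E) (hfix : ∀ z, h z ≠ z) (x : E) :
    ∃ y, ∃ r > 0, dist y x = r ∧ dist (h y) x = r ∧ Disjoint (ball x r) (h ⁻¹' ball x r) := by
  let m : E → ℝ := fun z => max (dist z x) (dist (h z) x)
  obtain ⟨y, hy⟩ := (show Continuous m by fun_prop).exists_forall_le
    (tendsto_atTop_mono (fun z => le_max_left _ _) (tendsto_dist_right_cocompact_atTop x))
  have hr : 0 < m y := by
    by_contra hle
    obtain ⟨hyx, hhyx⟩ := max_le_iff.1 (not_lt.1 hle)
    exact hfix y ((dist_le_zero.1 hhyx).trans (dist_le_zero.1 hyx).symm)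
  have hdisj : Disjoint (ball x (m y)) (h ⁻¹' ball x (m y)) :=
    disjoint_left.2 fun z hz hhz => (max_lt hz hhz).not_ge (hy z)
  have hyB : y ∈ closure (ball x (m y)) := by
    rw [closure_ball x hr.ne']
    exact le_max_left (dist y x) _
  have hhyB : y ∈ closure (h ⁻¹' ball x (m y)) := by
    rw [← h.preimage_closure, closure_ball x hr.ne']
    exact le_max_right _ (dist (h y) x)
  refine ⟨y, m y, hr, (le_max_left _ _).antisymm (not_lt.1 fun hlt => ?_),
    (le_max_right _ _).antisymm (not_lt.1 fun hlt => ?_), hdisj⟩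
  · exact disjoint_left.1 (hdisj.closure_right isOpen_ball) hlt hhyB
  · exact disjoint_left.1 (hdisj.closure_left (isOpen_ball.preimage h.continuous)) hyB hlt

section BentArc

variable {E : Type*} [NormedAddCommGroup E] [NormedSpace ℝ E] {u v : E} {r : ℝ}

/-- An arc from `u` through `0` (at time `1 / 2`) to `v`, smooth in the parameter. When `u` and `v`
lie on a sphere centred at `0`, the rest of the arc lies inside that sphere. -/
def bentArc (u v : E) (s : ℝ) : E := (1 - 2 * s) • ((1 - s) • u - s • v)

theorem continuous_bentArc : Continuous (bentArc u v) := by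
  unfold bentArc; fun_prop

theorem norm_bentArc_le (hu : ‖u‖ = r) (hv : ‖v‖ = r) {s : ℝ} (hs : s ∈ Icc (0 : ℝ) 1) :
    ‖bentArc u v s‖ ≤ |1 - 2 * s| * r := by
  rw [bentArc, norm_smul, Real.norm_eq_abs]
  refine mul_le_mul_of_nonneg_left ((norm_sub_le _ _).trans_eq ?_) (abs_nonneg _)
  rw [norm_smul, norm_smul, Real.norm_of_nonneg hs.1, Real.norm_of_nonneg (sub_nonneg.2 hs.2), hu,
    hv]
  ring

theorem norm_bentArc_lt (hr : 0 < r) (hu : ‖u‖ = r) (hv : ‖v‖ = r) {s : ℝ}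
    (hs : s ∈ Ioo (0 : ℝ) 1) : ‖bentArc u v s‖ < r :=
  (norm_bentArc_le hu hv (Ioo_subset_Icc_self hs)).trans_lt
    (mul_lt_of_lt_one_left hr (abs_lt.2 ⟨by linarith [hs.2], by linarith [hs.1]⟩))

theorem norm_bentArc_le_radius (hu : ‖u‖ = r) (hv : ‖v‖ = r) {s : ℝ} (hs : s ∈ Icc (0 : ℝ) 1) :
    ‖bentArc u v s‖ ≤ r :=
  (norm_bentArc_le hu hv hs).trans (mul_le_of_le_one_left (hu ▸ norm_nonneg u)
    (abs_le.2 ⟨by linarith [hs.2], by linarith [hs.1]⟩))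

theorem injective_bentArc (hr : 0 < r) (hu : ‖u‖ = r) (hv : ‖v‖ = r) (huv : u ≠ v) :
    Function.Injective (bentArc u v) := by
  intro s t hst
  have hsub : ((1 - 2 * s) * (1 - s) - (1 - 2 * t) * (1 - t)) • u =
      ((1 - 2 * s) * s - (1 - 2 * t) * t) • v := by
    simp only [bentArc] at hst
    linear_combination (norm := module) hst
  have hnorm := congrArg norm hsub
  rw [norm_smul, norm_smul, hu, hv, mul_left_inj' hr.ne', Real.norm_eq_abs, Real.norm_eq_abs,
    abs_eq_abs] at hnorm
  rcases hnorm with heq | heq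
  · rw [heq] at hsub
    rcases eq_or_ne ((1 - 2 * s) * s - (1 - 2 * t) * t) 0 with hzero | hzero
    · linarith
    · exact absurd (smul_right_injective E hzero hsub) huv
  · linarith

end BentArc

theorem exists_translation_arc (h : ℂ ≃ₜ ℂ) (hfix : ∀ z, h z ≠ z) (x : ℂ) :
    ∃ α : ℝ → ℂ, Continuous α ∧ Function.Injective α ∧ α 1 = h (α 0) ∧ α (1 / 2) = x ∧
      ∀ s ∈ Ioo (0 : ℝ) 1, ∀ t ∈ Icc (0 : ℝ) 1, h (α s) ≠ α t := by
  obtain ⟨y, r, hr, hyx, hhyx, hdisj⟩ := exists_critical_ball h hfix x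
  rw [dist_eq_norm] at hyx hhyx
  let α : ℝ → ℂ := fun s => x + bentArc (y - x) (h y - x) s
  have hα_ball : ∀ s ∈ Ioo (0 : ℝ) 1, α s ∈ ball x r := fun s hs => by
    simpa [α] using norm_bentArc_lt hr hyx hhyx hs
  have hα_closure : ∀ t ∈ Icc (0 : ℝ) 1, α t ∈ closure (ball x r) := fun t ht => by
    rw [closure_ball x hr.ne']
    simpa [α] using norm_bentArc_le_radius hyx hhyx ht
  refine ⟨α, continuous_const.add continuous_bentArc,
    (add_right_injective x).comp (injective_bentArc hr hyx hhyx fun heq =>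
      hfix y (sub_left_injective heq).symm),
    by simp [α, bentArc]; ring, by simp [α, bentArc], fun s hs t ht heq => ?_⟩
  have himage : Disjoint (closure (ball x r)) (h '' ball x r) :=
    (disjoint_image_right.2 hdisj.symm).closure_left (h.isOpenMap _ isOpen_ball)
  exact disjoint_left.1 himage (hα_closure t ht) (heq ▸ mem_image_of_mem h (hα_ball s hs))

theorem notMem_periodicPts_of_forall_ne {h : ℂ ≃ₜ ℂ} (hh : HasChordLog h) (hfix : ∀ z, h z ≠ z)
    (x : ℂ) : x ∉ Function.periodicPts h := by
  rintro ⟨n, hn, hx⟩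
  obtain ⟨α, hα, hα_inj, hα₁, hαx, hne⟩ := exists_translation_arc h hfix x
  have hΛ_inj : Function.Injective (orbitCurve h α) :=
    injective_of_equivariant_curve hh h.continuous hfix (continuous_orbitCurve hα₁ hα)
      orbitCurve_add_one fun a b => orbitCurve_ne_of_le_add_one hα₁ hα_inj.injOn hne
  have hΛx : orbitCurve h α (1 / 2) = x := by
    rw [orbitCurve_of_mem_Icc (n := 0) hα₁ (by norm_num), Int.cast_zero, sub_zero, zpow_zero, hαx]
    rfl
  have hiter := (show Function.Semiconj (orbitCurve h α) (· + 1) h from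
    orbitCurve_add_one).iterate_right n (1 / 2)
  rw [add_right_iterate, hΛx, hx.eq] at hiter
  have := hΛ_inj (hiter.trans hΛx.symm)
  simp [hn.ne'] at this

/-! ### Franks' lemma -/

/-- `g` is a homeomorphism supported in `D` along which a fixed point free homeomorphism may be
modified without leaving the scope of `notMem_periodicPts_of_forall_ne`. -/
structure IsPush (D : Set ℂ) (g : ℂ ≃ₜ ℂ) : Prop where
  hasChordLog : HasChordLog g
  eqOn_compl : EqOn g id Dᶜ

namespace IsPush

variable {D E : Set ℂ} {g k : ℂ ≃ₜ ℂ}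

theorem refl (D : Set ℂ) : IsPush D (Homeomorph.refl ℂ) :=
  ⟨HasChordLog.id, fun _ _ => rfl⟩

theorem trans (hg : IsPush D g) (hk : IsPush D k) : IsPush D (g.trans k) :=
  ⟨hk.hasChordLog.comp hg.hasChordLog g.continuous, fun z hz => by
    simp [hg.eqOn_compl hz, hk.eqOn_compl hz]⟩

theorem mono (hg : IsPush D g) (hDE : D ⊆ E) : IsPush E g :=
  ⟨hg.hasChordLog, hg.eqOn_compl.mono (compl_subset_compl.2 hDE)⟩

theorem mapsTo (hg : IsPush D g) : MapsTo g D D := fun z hz => by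
  by_contra hgz
  exact hgz ((g.injective (hg.eqOn_compl hgz)).symm ▸ hz)

end IsPush

theorem lipschitzWith_cone_smul {E : Type*} [NormedAddCommGroup E] [NormedSpace ℝ E] (x w : E)
    {r : ℝ} (hr : 0 < r) :
    LipschitzWith (‖w‖₊ / r.toNNReal) fun z => max 0 (1 - ‖z - x‖ / r) • w := by
  refine LipschitzWith.of_dist_le_mul fun p q => ?_
  rw [dist_eq_norm, ← sub_smul, norm_smul, Real.norm_eq_abs]
  have hmax : |max 0 (1 - ‖p - x‖ / r) - max 0 (1 - ‖q - x‖ / r)| ≤ dist p q / r := by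
    refine (abs_max_sub_max_le_max _ _ _ _).trans
      (max_le (by rw [sub_self, abs_zero]; positivity) ?_)
    rw [sub_sub_sub_cancel_left, ← sub_div, abs_div, abs_of_pos hr, dist_comm,
      ← dist_sub_right q p x, dist_eq_norm]
    gcongr
    exact abs_norm_sub_norm_le _ _
  calc _ ≤ dist p q / r * ‖w‖ := by gcongr
    _ = _ := by simp [hr.le]; ring

theorem exists_isPush_ball {x y : ℂ} {r : ℝ} (hy : y ∈ ball x r) :
    ∃ g, IsPush (ball x r) g ∧ g x = y := by
  have hr : 0 < r := pos_of_mem_ball hy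
  let v : ℂ → ℂ := fun z => max 0 (1 - ‖z - x‖ / r) • (y - x)
  have hv : LipschitzWith (‖y - x‖₊ / r.toNNReal) v := lipschitzWith_cone_smul x (y - x) hr
  have hlt : ‖y - x‖₊ / r.toNNReal < 1 := by
    rw [div_lt_one (by simpa using hr), ← NNReal.coe_lt_coe]
    simpa [hr.le, dist_eq_norm] using hy
  have happrox : ApproximatesLinearOn (fun z => z + v z)
      ((ContinuousLinearEquiv.refl ℝ ℂ : ℂ ≃L[ℝ] ℂ) : ℂ →L[ℝ] ℂ) univ
      (‖y - x‖₊ / r.toNNReal) := fun p _ q _ => by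
    simpa [add_sub_add_comm] using hv.norm_sub_le p q
  refine ⟨happrox.toHomeomorph _ (Or.inr (by simpa using hlt)),
    ⟨HasChordLog.id_add_of_lipschitzWith hv hlt, fun z hz => ?_⟩, ?_⟩
  · change z + v z = z
    rw [mem_compl_iff, mem_ball, not_lt, dist_eq_norm] at hz
    have : 1 - ‖z - x‖ / r ≤ 0 := sub_nonpos.2 ((one_le_div hr).2 hz)
    simp [v, max_eq_left this]
  · change x + v x = y
    simp [v]

theorem exists_isPush {D : Set ℂ} (ho : IsOpen D) (hD : IsPreconnected D) {x y : ℂ} (hx : x ∈ D)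
    (hy : y ∈ D) : ∃ g, IsPush D g ∧ g x = y := by
  refine hD.induction₂' (fun x y => ∃ g, IsPush D g ∧ g x = y) (fun x hx => ?_) ?_ hx hy
  · obtain ⟨r, hr, hball⟩ := Metric.isOpen_iff.1 ho x hx
    filter_upwards [mem_nhdsWithin_of_mem_nhds (ball_mem_nhds x (half_pos hr))] with y hy
    have hsub : ball y (r / 2) ⊆ ball x r :=
      ball_subset_ball' (by linarith [mem_ball.1 hy])
    obtain ⟨g, hg, hgx⟩ := exists_isPush_ball hy
    obtain ⟨k, hk, hky⟩ := exists_isPush_ball (mem_ball_comm.1 hy)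
    exact ⟨⟨g, hg.mono ((ball_subset_ball (half_le_self hr.le)).trans hball), hgx⟩,
      ⟨k, hk.mono (hsub.trans hball), hky⟩⟩
  · rintro x y z - - - ⟨g, hg, rfl⟩ ⟨k, hk, rfl⟩
    exact ⟨g.trans k, hg.trans hk, rfl⟩

section Family

variable {ι : Type*} {D : ι → Set ℂ}

theorem exists_isPush_iUnion (s : Finset ι) (ho : ∀ i, IsOpen (D i))
    (hD : ∀ i, IsPreconnected (D i)) (hdisj : Pairwise (Function.onFun Disjoint D)) {e o : ι → ℂ}
    (he : ∀ i, e i ∈ D i) (hoD : ∀ i, o i ∈ D i) :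
    ∃ g, IsPush (⋃ i ∈ s, D i) g ∧ (∀ i ∈ s, g (e i) = o i) ∧ ∀ i, MapsTo g (D i) (D i) := by
  induction s using Finset.induction_on with
  | empty => exact ⟨Homeomorph.refl ℂ, .refl _, by simp, fun i => mapsTo_id _⟩
  | insert j s hj ih =>
    obtain ⟨g, hg, hgo, hgD⟩ := ih
    obtain ⟨k, hk, hkj⟩ := exists_isPush (ho j) (hD j) (he j) (hoD j)
    have hk_fix : ∀ i ≠ j, ∀ z ∈ D i, k z = z := fun i hij z hz =>
      hk.eqOn_compl (disjoint_left.1 (hdisj hij) hz)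
    have hg_fix : g (e j) = e j := hg.eqOn_compl fun hmem => by
      obtain ⟨i, hi, hij⟩ := mem_iUnion₂.1 hmem
      exact disjoint_left.1 (hdisj (ne_of_mem_of_not_mem hi hj)) hij (he j)
    refine ⟨g.trans k, (hg.mono ?_).trans (hk.mono ?_), fun i hi => ?_, fun i => ?_⟩
    · exact biUnion_subset_biUnion_left (Finset.subset_insert j s)
    · exact subset_biUnion_of_mem (u := D) (Finset.mem_insert_self j s)
    · rcases Finset.mem_insert.1 hi with rfl | hi
      · simpa [hg_fix] using hkj
      · simpa [hgo i hi] using hk_fix i (ne_of_mem_of_not_mem hi hj) _ (hoD i)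
    · rcases eq_or_ne i j with rfl | hij
      · exact hk.mapsTo.comp (hgD i)
      · exact fun z hz => (hk_fix i hij _ (hgD i hz)).symm ▸ hgD i hz

theorem iterate_birkhoffSum_apply {X : Type*} {h : X → X} {σ : ι → ι} {n : ι → ℕ} {o : ι → X}
    (ho : ∀ i, h^[n i] (o i) = o (σ i)) (k : ℕ) (i : ι) :
    h^[birkhoffSum σ n k i] (o i) = o (σ^[k] i) := by
  induction k with
  | zero => simp
  | succ k ih =>
    rw [birkhoffSum_succ, add_comm, Function.iterate_add_apply, ih, ho,
      Function.iterate_succ_apply']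

/-- One modification of `h` by pushes supported in the discs closes up the chain of orbit segments
into a periodic orbit, without creating fixed points because the discs are free. -/
theorem exists_fixed_of_permuted_free_discs [Finite ι] [Nonempty ι] {h : ℂ ≃ₜ ℂ}
    (hh : HasChordLog h) (ho : ∀ i, IsOpen (D i)) (hD : ∀ i, IsPreconnected (D i))
    (hdisj : Pairwise (Function.onFun Disjoint D)) (hfree : ∀ i, ∀ z ∈ D i, h z ∉ D i)
    (σ : Equiv.Perm ι) {o : ι → ℂ} {n : ι → ℕ} (hn : ∀ i, 0 < n i) (hoD : ∀ i, o i ∈ D i)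
    (hret : ∀ i, h^[n i] (o i) ∈ D (σ i))
    (hno : ∀ i r, 0 < r → r < n i → ∀ j, h^[r] (o i) ∉ D j) : ∃ z, h z = z := by
  have := Fintype.ofFinite ι
  by_contra! hfix
  obtain ⟨g, hg, hgo, hgD⟩ := exists_isPush_iUnion Finset.univ ho hD hdisj
    (e := fun i => h^[n (σ.symm i)] (o (σ.symm i))) (fun i => by simpa using hret (σ.symm i)) hoD
  have hg_fix : ∀ z, (∀ i, z ∉ D i) → g z = z := fun z hz => hg.eqOn_compl (by simpa using hz)
  have hgh_fix : ∀ z, h.trans g z ≠ z := fun z (hz : g (h z) = z) => by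
    by_cases hmem : ∃ i, h z ∈ D i
    · obtain ⟨i, hi⟩ := hmem
      exact hfree i z (hz ▸ hgD i hi) hi
    · exact hfix z ((hg_fix _ (not_exists.1 hmem)).symm.trans hz)
  have hiter : ∀ i r, r < n i → (h.trans g)^[r] (o i) = h^[r] (o i) := by
    intro i r hr
    induction r with
    | zero => rfl
    | succ r ih =>
      rw [Function.iterate_succ_apply', ih (by lia), Homeomorph.trans_apply,
        ← Function.iterate_succ_apply' h, hg_fix _ (hno i (r + 1) r.succ_pos hr)]
  have hclose : ∀ i, (h.trans g)^[n i] (o i) = o (σ i) := by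
    intro i
    obtain ⟨m, hm⟩ := Nat.exists_eq_add_one.2 (hn i)
    rw [← hgo (σ i) (Finset.mem_univ _), σ.symm_apply_apply, hm, Function.iterate_succ_apply',
      hiter i m (by lia), Homeomorph.trans_apply, ← Function.iterate_succ_apply' h]
  obtain ⟨i⟩ := ‹Nonempty ι›
  obtain ⟨k, hk, hki⟩ := σ.injective.mem_periodicPts i
  have hgh : HasChordLog (h.trans g) := hg.hasChordLog.comp hh h.continuous
  refine notMem_periodicPts_of_forall_ne hgh hgh_fix (o i) ⟨birkhoffSum σ n k i, ?_, ?_⟩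
  · exact Finset.sum_pos (fun _ _ => hn _) ⟨0, Finset.mem_range.2 hk⟩
  · rw [Function.IsPeriodicPt, Function.IsFixedPt, iterate_birkhoffSum_apply hclose, hki.eq]

end Family

/-! ### Lifts to the universal cover of a punctured plane -/

theorem eq_of_exp_comp_eq {X : Type*} [TopologicalSpace X] [PreconnectedSpace X] {φ ψ : X → ℂ}
    (hφ : Continuous φ) (hψ : Continuous ψ) (h : ∀ x, Complex.exp (φ x) = Complex.exp (ψ x))
    {x₀ : X} (hx₀ : φ x₀ = ψ x₀) (x : X) : φ x = ψ x :=
  congrFun (Complex.isCoveringMap_exp.eq_of_comp_eq hφ hψ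
    (funext fun x => Subtype.ext (h x)) x₀ hx₀) x

theorem angVar_eq_of_log {γ : ℝ → ℂ} {Λ : unitInterval → ℂ} (hΛ : Continuous Λ)
    (h : ∀ t : unitInterval, Complex.exp (Λ t) = γ t) :
    angVar γ = (Λ 1 - Λ 0).im / (2 * Real.pi) := by
  have hpolar : ∀ t : unitInterval, γ t = ‖γ t‖ * Complex.exp ((Λ t).im * Complex.I) := fun t => by
    rw [← h t, Complex.norm_exp, Complex.ofReal_exp, ← Complex.exp_add, Complex.re_add_im]
  have hex : ∃ θ : ℝ → ℝ, ContinuousOn θ (Icc 0 1) ∧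
      ∀ t ∈ Icc (0 : ℝ) 1, γ t = (‖γ t‖ : ℂ) * Complex.exp ((θ t : ℂ) * Complex.I) := by
    refine ⟨IccExtend zero_le_one fun t => (Λ t).im, Continuous.continuousOn (by fun_prop),
      fun t ht => ?_⟩
    rw [IccExtend_of_mem _ _ ht]
    exact hpolar ⟨t, ht⟩
  rw [angVar, dif_pos hex]
  obtain ⟨hcont, hexp⟩ := hex.choose_spec
  generalize hex.choose = θ at hcont hexp ⊢
  have hθ : Continuous fun t : unitInterval => θ t := hcont.domRestrict
  have hconst := eq_of_exp_comp_eq_const (c := 1) isPreconnected_univ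
    (g := fun t : unitInterval => ((θ t : ℂ) - (Λ t).im) * Complex.I)
    (((Complex.continuous_ofReal.comp hθ).sub (by fun_prop)).mul continuous_const).continuousOn
    (fun t _ => ?_) (mem_univ 1) (mem_univ 0)
  · have hre : θ 1 - (Λ 1).im = θ 0 - (Λ 0).im := by
      exact_mod_cast mul_right_cancel₀ Complex.I_ne_zero hconst
    rw [Complex.sub_im]
    congr 1
    linarith
  · have hnorm : (‖γ t‖ : ℂ) ≠ 0 := by simp [← h t]
    rw [sub_mul, Complex.exp_sub, div_eq_one_iff_eq (Complex.exp_ne_zero _)]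
    exact mul_left_cancel₀ hnorm ((hexp t t.2).symm.trans (hpolar t))

theorem HasChordLog.of_isotopy {V : unitInterval × ℂ → ℂ} (hV : Continuous V)
    (hV₀ : ∀ w, V (0, w) = w) (hinj : ∀ t, Function.Injective fun w => V (t, w)) :
    HasChordLog fun w => V (1, w) := by
  have hsub : ∀ p : {p : ℂ × ℂ // p.1 ≠ p.2}, p.1.1 - p.1.2 ≠ 0 := fun p => sub_ne_zero.2 p.2
  obtain ⟨L, hL, hLV, hL₀⟩ := exists_log_homotopy (A := {p : ℂ × ℂ // p.1 ≠ p.2})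
    (u := fun q => (V (q.1, q.2.1.1) - V (q.1, q.2.1.2)) / (q.2.1.1 - q.2.1.2))
    (Continuous.div (by fun_prop) (by fun_prop) fun q => hsub q.2)
    (fun q => div_ne_zero (sub_ne_zero.2 ((hinj q.1).ne q.2.2)) (hsub q.2))
    (v := fun _ => 0) continuous_const (fun p => by simp [hV₀, hsub p])
  have hsymm : ∀ z w (hzw : z ≠ w) t, L (t, ⟨(z, w), hzw⟩) = L (t, ⟨(w, z), hzw.symm⟩) := by
    intro z w hzw
    refine eq_of_exp_comp_eq (by fun_prop) (by fun_prop) (fun t => ?_)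
      ((hL₀ _).trans (hL₀ _).symm)
    rw [hLV, hLV, ← neg_sub (V (t, w)), ← neg_sub w, neg_div_neg_eq]
  refine ⟨fun z w => if h : z ≠ w then L (1, ⟨(z, w), h⟩) else 0, ?_, fun z w hzw => ?_,
    fun z w hzw => ?_⟩
  · rw [continuousOn_iff_continuous_domRestrict]
    refine (show Continuous fun p : {p : ℂ × ℂ // p.1 ≠ p.2} => L (1, p) by fun_prop).congr
      fun p => ?_
    have hp : p.1.1 ≠ p.1.2 := p.2
    simp [Set.domRestrict, Function.uncurry, hp]
  · simp only [dif_pos hzw, hLV, div_mul_cancel₀ _ (sub_ne_zero.2 hzw)]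
  · simp only [dif_pos hzw, dif_pos hzw.symm, hsymm z w hzw]

/-- `H` lifts `f`, restricted to the complement of the fixed point `z'`, through the universal
covering `w ↦ exp w + z'`, commutes with the deck transformations, and has a chord logarithm. -/
structure IsPuncturedLift (f : ℂ → ℂ) (z' : ℂ) (H : ℂ ≃ₜ ℂ) : Prop where
  hasChordLog : HasChordLog H
  semiconj : Function.Semiconj (fun w => Complex.exp w + z') H f
  map_add_period : ∀ w, H (w + 2 * Real.pi * Complex.I) = H w + 2 * Real.pi * Complex.I

namespace IsPuncturedLift

variable {f : ℂ → ℂ} {z' : ℂ} {H : ℂ ≃ₜ ℂ}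

theorem exp_iterate (hH : IsPuncturedLift f z' H) (n : ℕ) (w : ℂ) :
    Complex.exp (H^[n] w) = f^[n] (Complex.exp w + z') - z' :=
  eq_sub_of_add_eq (hH.semiconj.iterate_right n w)

theorem iterate_add_int_mul (hH : IsPuncturedLift f z' H) (n : ℕ) (w : ℂ) (k : ℤ) :
    H^[n] (w + k * (2 * Real.pi * Complex.I)) = H^[n] w + k * (2 * Real.pi * Complex.I) := by
  let F : AddConstMap ℂ ℂ (2 * Real.pi * Complex.I) (2 * Real.pi * Complex.I) :=
    ⟨H, hH.map_add_period⟩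
  simpa [F, AddConstMap.coe_pow] using AddConstMapClass.map_add_zsmul (F ^ n) w k

theorem trans_addRight (hH : IsPuncturedLift f z' H) (k : ℤ) :
    IsPuncturedLift f z' (H.trans (Homeomorph.addRight (k * (2 * Real.pi * Complex.I)))) where
  hasChordLog := hH.hasChordLog.add_const _
  semiconj w := by
    simpa [Complex.exp_periodic.int_mul k (H w)] using hH.semiconj w
  map_add_period w := by
    simp only [Homeomorph.trans_apply, hH.map_add_period, Homeomorph.coe_addRight]
    ring

end IsPuncturedLift

section Isotopy

variable {f : ℂ ≃ₜ ℂ} (I : HIsotopy f) (z' : ℂ)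

theorem exists_lift_isotopy : ∃ V V' : unitInterval × ℂ → ℂ, Continuous V ∧ Continuous V' ∧
    (∀ w, V (0, w) = w) ∧ (∀ p, V (p.1, V' p) = p.2) ∧ (∀ p, V' (p.1, V p) = p.2) ∧
    ∀ p, Complex.exp (V p) = I.F p.1 (Complex.exp p.2 + z') - I.F p.1 z' := by
  have hF : ∀ {u : unitInterval × ℂ → ℂ}, Continuous u → Continuous fun p => I.F p.1 (u p) :=
    fun hu => I.cont.comp ((continuous_subtype_val.comp continuous_fst).prodMk hu)
  have hF_symm : ∀ {u : unitInterval × ℂ → ℂ}, Continuous u →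
      Continuous fun p => (I.F p.1).symm (u p) := fun hu =>
    I.cont_symm.comp ((continuous_subtype_val.comp continuous_fst).prodMk hu)
  have hz' := hF (u := fun _ => z') continuous_const
  obtain ⟨V, hV, hVexp, hV₀⟩ := exists_log_homotopy
    (u := fun p : unitInterval × ℂ => I.F p.1 (Complex.exp p.2 + z') - I.F p.1 z')
    ((hF (by fun_prop)).sub hz')
    (fun p => sub_ne_zero.2 ((I.F p.1).injective.ne (by simp))) continuous_id (by simp [I.zero])
  obtain ⟨V', hV', hVexp', hV₀'⟩ := exists_log_homotopy
    (u := fun p : unitInterval × ℂ => (I.F p.1).symm (Complex.exp p.2 + I.F p.1 z') - z')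
    ((hF_symm (by fun_prop)).sub continuous_const)
    (fun p => sub_ne_zero.2 fun h => by simpa using (I.F p.1).symm_apply_eq.1 h) continuous_id
    (by simp [I.zero])
  refine ⟨V, V', hV, hV', hV₀, fun p => ?_, fun p => ?_, hVexp⟩
  · exact eq_of_exp_comp_eq (φ := fun t => V (t, V' (t, p.2))) (by fun_prop) continuous_const
      (fun t => by simp [hVexp, hVexp']) (x₀ := 0) (by simp [hV₀, hV₀']) p.1
  · exact eq_of_exp_comp_eq (φ := fun t => V' (t, V (t, p.2))) (by fun_prop) continuous_const
      (fun t => by simp [hVexp, hVexp']) (x₀ := 0) (by simp [hV₀, hV₀']) p.1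

theorem exists_isPuncturedLift (hz' : f z' = z') : ∃ H : ℂ ≃ₜ ℂ, IsPuncturedLift f z' H ∧
    ∀ w, Enlace I (Complex.exp w + z') z' = (H w - w).im / (2 * Real.pi) := by
  obtain ⟨V, V', hV, hV', hV₀, hVV', hV'V, hVexp⟩ := exists_lift_isotopy I z'
  refine ⟨⟨⟨fun w => V (1, w), fun w => V' (1, w), fun w => hV'V (1, w), fun w => hVV' (1, w)⟩,
    by fun_prop, by fun_prop⟩, ⟨?_, fun w => ?_, fun w => ?_⟩, fun w => ?_⟩
  · exact .of_isotopy hV hV₀ fun t => Function.LeftInverse.injective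
      (g := fun w => V' (t, w)) fun w => hV'V (t, w)
  · change Complex.exp (V (1, w)) + z' = f (Complex.exp w + z')
    simp [hVexp, I.one, hz']
  · exact eq_of_exp_comp_eq (φ := fun t => V (t, w + 2 * Real.pi * Complex.I))
      (ψ := fun t => V (t, w) + 2 * Real.pi * Complex.I) (by fun_prop) (by fun_prop)
      (fun t => by simp [hVexp, Complex.exp_add]) (x₀ := 0) (by simp [hV₀]) 1
  · simpa [hV₀, Enlace] using angVar_eq_of_log (γ := fun t => I.F t (Complex.exp w + z') - I.F t z')
      (Λ := fun t => V (t, w)) (by fun_prop) fun t => hVexp (t, w)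

end Isotopy

/-! ### First returns to a free set -/

/-- `n` is the first return time of the point `z` of `U` to `U`. -/
structure IsFirstReturn {X : Type*} (f : X → X) (U : Set X) (n : ℕ) (z : X) : Prop where
  mem : z ∈ U
  pos : 0 < n
  iterate_mem : f^[n] z ∈ U
  notMem : ∀ r, 0 < r → r < n → f^[r] z ∉ U

/-- `A n z`, defined when `z` and `f^[n] z` lie in `U`, is additive along orbits returning to
`U`. -/
def IsReturnCocycle {X : Type*} (f : X → X) (U : Set X) (A : ℕ → X → ℤ) : Prop :=
  ∀ m n z, z ∈ U → f^[m] z ∈ U → f^[n] (f^[m] z) ∈ U → A (m + n) z = A m z + A n (f^[m] z)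

/-- For a branch `ℓ` of `log (· - z')` on `U` and a lift `H` of `f` to the universal cover of
`ℂ ∖ {z'}`, the integer number of turns around `z'` made by an orbit segment of length `n` which
starts and ends in `U`, closed up inside `U`. -/
def returnTurns (f H ℓ : ℂ → ℂ) (n : ℕ) (z : ℂ) : ℤ :=
  round ((H^[n] (ℓ z) - ℓ (f^[n] z)).im / (2 * Real.pi))

section Returns

variable {f ℓ : ℂ → ℂ} {H : ℂ ≃ₜ ℂ} {z' : ℂ} {U : Set ℂ}

theorem returnTurns_eq {n : ℕ} {z : ℂ} {m : ℤ}
    (h : H^[n] (ℓ z) = ℓ (f^[n] z) + m * (2 * Real.pi * Complex.I)) :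
    returnTurns f H ℓ n z = m := by
  have him : (m * (2 * Real.pi * Complex.I) : ℂ).im / (2 * Real.pi) = m := by
    simp [Complex.mul_im, Real.pi_ne_zero]
  rw [returnTurns, h, add_sub_cancel_left, him, round_intCast]

theorem IsPuncturedLift.iterate_log_eq (hH : IsPuncturedLift f z' H)
    (hℓ : ∀ z ∈ U, Complex.exp (ℓ z) = z - z') {n : ℕ} {z : ℂ} (hz : z ∈ U) (hn : f^[n] z ∈ U) :
    H^[n] (ℓ z) = ℓ (f^[n] z) + returnTurns f H ℓ n z * (2 * Real.pi * Complex.I) := by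
  have hexp : Complex.exp (H^[n] (ℓ z)) = Complex.exp (ℓ (f^[n] z)) := by
    rw [hH.exp_iterate, hℓ z hz, hℓ _ hn, sub_add_cancel]
  obtain ⟨m, hm⟩ := Complex.exp_eq_exp_iff_exists_int.1 hexp
  rw [returnTurns_eq hm, hm]

theorem IsPuncturedLift.isReturnCocycle_returnTurns (hH : IsPuncturedLift f z' H)
    (hℓ : ∀ z ∈ U, Complex.exp (ℓ z) = z - z') :
    IsReturnCocycle f U (returnTurns f H ℓ) := by
  intro m n z hz hm hn
  apply returnTurns_eq
  rw [add_comm m n, Function.iterate_add_apply, Function.iterate_add_apply,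
    hH.iterate_log_eq hℓ hz hm, hH.iterate_add_int_mul, hH.iterate_log_eq hℓ hm hn]
  push_cast
  ring

theorem IsPuncturedLift.returnTurns_trans_addRight (hH : IsPuncturedLift f z' H)
    (hℓ : ∀ z ∈ U, Complex.exp (ℓ z) = z - z') (k : ℤ) {n : ℕ} {z : ℂ} (hz : z ∈ U)
    (hn : f^[n] z ∈ U) :
    returnTurns f (H.trans (Homeomorph.addRight (k * (2 * Real.pi * Complex.I)))) ℓ n z =
      returnTurns f H ℓ n z + n * k := by
  have hcomm : Function.Commute (· + (k : ℂ) * (2 * Real.pi * Complex.I)) H := fun w =>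
    (hH.iterate_add_int_mul 1 w k).symm
  have hiter : ∀ w, (H.trans (Homeomorph.addRight (k * (2 * Real.pi * Complex.I))))^[n] w =
      H^[n] w + n • (k * (2 * Real.pi * Complex.I)) := fun w => by
    rw [← congrFun (add_right_iterate (k * (2 * Real.pi * Complex.I) : ℂ) n) (H^[n] w)]
    exact congrFun (hcomm.comp_iterate n) w
  apply returnTurns_eq
  rw [hiter, hH.iterate_log_eq hℓ hz hn, nsmul_eq_mul]
  push_cast
  ring

/-- The lift of `U` to the universal cover of `ℂ ∖ {z'}` given by the `j`-th translate of the branch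
`ℓ` of `log (· - z')`. -/
def logDisc (ℓ : ℂ → ℂ) (U : Set ℂ) (j : ℤ) : Set ℂ :=
  (fun z => ℓ z + j * (2 * Real.pi * Complex.I)) '' U

theorem exp_log_add (hℓ : ∀ z ∈ U, Complex.exp (ℓ z) = z - z') {z : ℂ} (hz : z ∈ U) (j : ℤ) :
    Complex.exp (ℓ z + j * (2 * Real.pi * Complex.I)) = z - z' :=
  (Complex.exp_periodic.int_mul j (ℓ z)).trans (hℓ z hz)

theorem exp_add_mem_of_mem_logDisc (hℓ : ∀ z ∈ U, Complex.exp (ℓ z) = z - z') {j : ℤ} {w : ℂ}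
    (hw : w ∈ logDisc ℓ U j) : Complex.exp w + z' ∈ U := by
  obtain ⟨z, hz, rfl⟩ := hw
  simpa [exp_log_add hℓ hz] using hz

theorem isOpen_logDisc (hU : IsOpen U) (hℓc : ContinuousOn ℓ U)
    (hℓ : ∀ z ∈ U, Complex.exp (ℓ z) = z - z') (j : ℤ) : IsOpen (logDisc ℓ U j) := by
  let ψ : ℂ → ℂ := fun z => ℓ z + j * (2 * Real.pi * Complex.I)
  have hψ : Continuous (U.domRestrict ψ) := (hℓc.add continuousOn_const).domRestrict
  have hcomp : Complex.exp ∘ U.domRestrict ψ = Homeomorph.subRight z' ∘ Subtype.val :=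
    funext fun z => exp_log_add hℓ z.2 j
  have hexp : IsLocalHomeomorph Complex.exp :=
    (isOpen_ne.isOpenEmbedding_subtypeVal.isLocalHomeomorph (X := {z : ℂ // z ≠ 0})).comp
      Complex.isCoveringMap_exp.isLocalHomeomorph
  have hemb : Topology.IsOpenEmbedding (U.domRestrict ψ) :=
    hexp.isOpenEmbedding_of_comp
      (hcomp ▸ (Homeomorph.subRight z').isOpenEmbedding.comp hU.isOpenEmbedding_subtypeVal) hψ
  rw [logDisc, ← range_domRestrict]
  exact hemb.isOpen_range

theorem pairwise_disjoint_logDisc (hℓ : ∀ z ∈ U, Complex.exp (ℓ z) = z - z') :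
    Pairwise (Function.onFun Disjoint (logDisc ℓ U)) := by
  intro i j hij
  rw [Function.onFun, disjoint_left]
  rintro _ ⟨z, hz, rfl⟩ ⟨w, hw, hwz⟩
  have hexp := congrArg Complex.exp hwz
  simp only [exp_log_add hℓ hz, exp_log_add hℓ hw, sub_left_inj] at hexp
  subst hexp
  simp [Real.pi_ne_zero, hij.symm] at hwz

theorem exists_fixed_of_permuted_first_returns {ι : Type*} [Finite ι] [Nonempty ι]
    (hH : IsPuncturedLift f z' H) (hU : IsOpen U) (hU' : IsPreconnected U)
    (hfree : MapsTo f U Uᶜ) (hℓc : ContinuousOn ℓ U)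
    (hℓ : ∀ z ∈ U, Complex.exp (ℓ z) = z - z') {e : ι → ℤ} (he : Function.Injective e)
    (σ : Equiv.Perm ι) {n : ι → ℕ} {x : ι → ℂ} (hx : ∀ i, IsFirstReturn f U (n i) (x i))
    (hσ : ∀ i, e (σ i) = e i + returnTurns f H ℓ (n i) (x i)) : ∃ w, H w = w := by
  refine exists_fixed_of_permuted_free_discs (D := fun i => logDisc ℓ U (e i)) hH.hasChordLog
    (fun i => isOpen_logDisc hU hℓc hℓ _)
    (fun i => hU'.image _ (hℓc.add continuousOn_const))
    (fun i j hij => pairwise_disjoint_logDisc hℓ (he.ne hij)) (fun i w hw hHw => ?_) σ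
    (o := fun i => ℓ (x i) + e i * (2 * Real.pi * Complex.I)) (fun i => (hx i).pos)
    (fun i => ⟨x i, (hx i).mem, rfl⟩) (fun i => ⟨_, (hx i).iterate_mem, ?_⟩)
    fun i r hr hrn j hmem => ?_
  · exact hfree (exp_add_mem_of_mem_logDisc hℓ hw)
      (hH.semiconj w ▸ exp_add_mem_of_mem_logDisc hℓ hHw)
  · simp only [hH.iterate_add_int_mul, hH.iterate_log_eq hℓ (hx i).mem (hx i).iterate_mem, hσ]
    push_cast
    ring
  · have := exp_add_mem_of_mem_logDisc hℓ hmem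
    rw [hH.exp_iterate, exp_log_add hℓ (hx i).mem, sub_add_cancel, sub_add_cancel] at this
    exact (hx i).notMem r hr hrn this

theorem returnTurns_nonneg_of_nonneg (hH : IsPuncturedLift f z' H) (hfix : ∀ w, H w ≠ w)
    (hU : IsOpen U) (hU' : IsPreconnected U) (hfree : MapsTo f U Uᶜ) (hℓc : ContinuousOn ℓ U)
    (hℓ : ∀ z ∈ U, Complex.exp (ℓ z) = z - z') {z₀ z₁ : ℂ} {n₀ n₁ : ℕ}
    (h₀ : IsFirstReturn f U n₀ z₀) (h₁ : IsFirstReturn f U n₁ z₁)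
    (hturns : 0 ≤ returnTurns f H ℓ n₀ z₀) : 0 ≤ returnTurns f H ℓ n₁ z₁ := by
  by_contra! hneg
  obtain ⟨p, hp⟩ := Int.eq_ofNat_of_zero_le hturns
  obtain ⟨q, hq⟩ := Int.eq_ofNat_of_zero_le (neg_nonneg.2 hneg.le)
  have : NeZero (p + q) := ⟨by lia⟩
  let σ : Equiv.Perm (Fin (p + q)) := Equiv.addRight (Fin.ofNat (p + q) p)
  have hσ : ∀ j, (σ j : ℕ) = if (j : ℕ) < q then (j : ℕ) + p else j - q := by
    intro j
    have hval : (σ j : ℕ) = (j + p % (p + q)) % (p + q) := rfl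
    rw [hval, Nat.mod_eq_of_lt (by lia : p < p + q)]
    split_ifs with hj
    · exact Nat.mod_eq_of_lt (by lia)
    · rw [Nat.mod_eq_sub_mod (by lia), Nat.mod_eq_of_lt (by lia)]
      lia
  obtain ⟨w, hw⟩ := exists_fixed_of_permuted_first_returns hH hU hU' hfree hℓc hℓ
    (e := fun j : Fin (p + q) => ((j : ℕ) : ℤ))
    (Nat.cast_injective.comp Fin.val_injective) σ
    (n := fun j => if (j : ℕ) < q then n₀ else n₁) (x := fun j => if (j : ℕ) < q then z₀ else z₁)
    (fun j => by split_ifs <;> assumption)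
    (fun j => by simp only [hσ]; split_ifs <;> lia)
  exact hfix w hw

theorem mul_le_returnTurns_of_mul_le (hH : IsPuncturedLift f z' H) {k : ℤ}
    (hk : ∀ w, H w ≠ w + k * (2 * Real.pi * Complex.I))
    (hU : IsOpen U) (hU' : IsPreconnected U) (hfree : MapsTo f U Uᶜ) (hℓc : ContinuousOn ℓ U)
    (hℓ : ∀ z ∈ U, Complex.exp (ℓ z) = z - z') {z₀ z₁ : ℂ} {n₀ n₁ : ℕ}
    (h₀ : IsFirstReturn f U n₀ z₀) (h₁ : IsFirstReturn f U n₁ z₁)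
    (hturns : n₀ * k ≤ returnTurns f H ℓ n₀ z₀) : n₁ * k ≤ returnTurns f H ℓ n₁ z₁ := by
  have hshift := fun {n z} (h : IsFirstReturn f U n z) =>
    hH.returnTurns_trans_addRight hℓ (-k) h.mem h.iterate_mem
  have := returnTurns_nonneg_of_nonneg (hH.trans_addRight (-k)) (fun w hw => hk w ?_) hU hU' hfree
    hℓc hℓ h₀ h₁ (by rw [hshift h₀]; linarith)
  · rw [hshift h₁] at this
    linarith
  · rw [Homeomorph.trans_apply, Homeomorph.coe_addRight] at hw
    push_cast at hw
    linear_combination hw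

theorem IsPuncturedLift.birkhoffSum_eq (hH : IsPuncturedLift f z' H) {E : ℂ → ℝ}
    (hE : ∀ w, E (Complex.exp w + z') = (H w - w).im / (2 * Real.pi)) (n : ℕ) (w : ℂ) :
    birkhoffSum f E n (Complex.exp w + z') = (H^[n] w - w).im / (2 * Real.pi) := by
  induction n with
  | zero => simp
  | succ n ih =>
    rw [birkhoffSum_succ, ih, ← hH.semiconj.iterate_right n w, hE, Function.iterate_succ_apply',
      Complex.sub_im, Complex.sub_im, Complex.sub_im]
    ring

theorem abs_birkhoffSum_sub_returnTurns_le (hH : IsPuncturedLift f z' H) {E : ℂ → ℝ}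
    (hE : ∀ w, E (Complex.exp w + z') = (H w - w).im / (2 * Real.pi))
    (hℓ : ∀ z ∈ U, Complex.exp (ℓ z) = z - z')
    (hℓU : ∀ z ∈ U, ∀ w ∈ U, |(ℓ z - ℓ w).im| ≤ Real.pi) {n : ℕ} {z : ℂ} (hz : z ∈ U)
    (hn : f^[n] z ∈ U) : |birkhoffSum f E n z - returnTurns f H ℓ n z| ≤ 1 / 2 := by
  have hsum : birkhoffSum f E n z = (H^[n] (ℓ z) - ℓ z).im / (2 * Real.pi) := by
    rw [← hH.birkhoffSum_eq hE, hℓ z hz, sub_add_cancel]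
  have hdiff : birkhoffSum f E n z - returnTurns f H ℓ n z =
      (ℓ (f^[n] z) - ℓ z).im / (2 * Real.pi) := by
    rw [hsum, hH.iterate_log_eq hℓ hz hn]
    simp [Complex.mul_im]
    field_simp
    ring
  rw [hdiff, abs_div, abs_of_pos Real.two_pi_pos, div_le_iff₀ Real.two_pi_pos]
  linarith [hℓU _ hn z hz]

theorem exists_log_branch_ball {c z' : ℂ} {δ : ℝ} (hz' : z' ∉ ball c δ) :
    ∃ ℓ : ℂ → ℂ, ContinuousOn ℓ (ball c δ) ∧ (∀ z ∈ ball c δ, Complex.exp (ℓ z) = z - z') ∧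
      ∀ z ∈ ball c δ, ∀ w ∈ ball c δ, |(ℓ z - ℓ w).im| ≤ Real.pi := by
  rcases le_or_gt δ 0 with hδ | hδ
  · exact ⟨0, by simp [ball_eq_empty.2 hδ]⟩
  have hle : δ ≤ ‖c - z'‖ := by simpa [dist_eq_norm, norm_sub_rev] using hz'
  have hcz : c - z' ≠ 0 := norm_pos_iff.1 (hδ.trans_le hle)
  have hre : ∀ z ∈ ball c δ, 0 < ((z - z') / (c - z')).re := fun z hz => by
    have hlt : ‖(z - c) / (c - z')‖ < 1 := by
      rw [norm_div, div_lt_one (norm_pos_iff.2 hcz)]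
      exact (mem_ball_iff_norm.1 hz).trans_le hle
    have hadd : (z - z') / (c - z') = 1 + (z - c) / (c - z') := by
      field_simp
      ring
    rw [hadd, Complex.add_re, Complex.one_re]
    linarith [(abs_le.1 (Complex.abs_re_le_norm ((z - c) / (c - z')))).1]
  refine ⟨fun z => Complex.log ((z - z') / (c - z')) + Complex.log (c - z'), ?_, fun z hz => ?_,
    fun z hz w hw => ?_⟩
  · exact (ContinuousOn.clog (by fun_prop) fun z hz => Or.inl (hre z hz)).add continuousOn_const
  · have hne : (z - z') / (c - z') ≠ 0 := fun h => by simpa [h] using hre z hz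
    rw [Complex.exp_add, Complex.exp_log hne, Complex.exp_log hcz, div_mul_cancel₀ _ hcz]
  · have harg := fun z hz => abs_lt.1 (Complex.abs_arg_lt_pi_div_two_iff.2 (.inl (hre z hz)))
    rw [add_sub_add_right_eq_sub, Complex.sub_im, Complex.log_im, Complex.log_im, abs_le]
    constructor <;> linarith [harg z hz, harg w hw]

end Returns

theorem IsPuncturedLift.ne_add_int_mul {f : ℂ ≃ₜ ℂ} {I : HIsotopy f} {z' : ℂ} {H : ℂ ≃ₜ ℂ}
    (hH : IsPuncturedLift f z' H)
    (hE : ∀ w, Enlace I (Complex.exp w + z') z' = (H w - w).im / (2 * Real.pi)) {M : ℝ}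
    (hM : ∀ z ∈ FixPts f, z ≠ z' → |Enlace I z z'| ≤ M) {k : ℤ} (hk : M < |k|) (w : ℂ) :
    H w ≠ w + k * (2 * Real.pi * Complex.I) := by
  intro hw
  have hfix : Complex.exp w + z' ∈ FixPts f := by
    have := hH.semiconj w
    simp only [hw, Complex.exp_periodic.int_mul k w] at this
    exact this.symm
  have hle := hM _ hfix (by simp)
  have hval : Enlace I (Complex.exp w + z') z' = k := by
    rw [hE, hw, add_sub_cancel_left]
    simp [Complex.mul_im, Real.pi_ne_zero]
  rw [hval] at hle
  push_cast at hk
  linarith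

theorem exists_returnCocycle {f : ℂ ≃ₜ ℂ} (I : HIsotopy f) {z' : ℂ} (hz' : z' ∈ FixPts f)
    {M : ℝ} (hM : ∀ z ∈ FixPts f, z ≠ z' → |Enlace I z z'| ≤ M) {k : ℕ} (hk : 0 < k)
    (hMk : M < k) {c : ℂ} {δ : ℝ}
    (hfree : MapsTo f (ball c δ) (ball c δ)ᶜ) :
    ∃ A : ℕ → ℂ → ℤ, IsReturnCocycle f (ball c δ) A ∧
      (∀ n, ∀ z ∈ ball c δ, f^[n] z ∈ ball c δ →
        |birkhoffSum f (fun z => Enlace I z z') n z - A n z| ≤ 1 / 2) ∧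
      ((∃ n z, IsFirstReturn f (ball c δ) n z ∧ A n z = 0) →
        ∀ n z, IsFirstReturn f (ball c δ) n z → |A n z| ≤ n * k) := by
  have hz'_mem : z' ∉ ball c δ := fun h => hfree h (hz'.symm ▸ h)
  obtain ⟨ℓ, hℓc, hℓ, hℓU⟩ := exists_log_branch_ball hz'_mem
  obtain ⟨H, hH, hE⟩ := exists_isPuncturedLift I z' hz'
  refine ⟨returnTurns f H ℓ, hH.isReturnCocycle_returnTurns hℓ, fun n z hz hn =>
    abs_birkhoffSum_sub_returnTurns_le hH hE hℓ hℓU hz hn, ?_⟩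
  rintro ⟨n₀, z₀, h₀, hzero⟩ n z h
  have hn₀ : (0 : ℤ) < n₀ * k := mul_pos (mod_cast h₀.pos) (mod_cast hk)
  rw [abs_le]
  constructor <;> by_contra! hlt
  · have := mul_le_returnTurns_of_mul_le hH (k := -k)
      (hH.ne_add_int_mul hE hM (by simpa using hMk)) isOpen_ball (convex_ball c δ).isPreconnected
      hfree hℓc hℓ h₀ h (by linarith)
    linarith
  · have := mul_le_returnTurns_of_mul_le hH (k := k)
      (hH.ne_add_int_mul hE hM (by simpa using hMk)) isOpen_ball (convex_ball c δ).isPreconnected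
      hfree hℓc hℓ h h₀ hlt.le
    linarith

/-! ### Fixed points near infinity -/

/-- Neighbourhoods of infinity in the set of fixed points of `f`. -/
def fixedInfinity (f : ℂ ≃ₜ ℂ) : Filter ℂ := cocompact ℂ ⊓ 𝓟 (FixPts f)

theorem eventually_mem_fixPts (f : ℂ ≃ₜ ℂ) : ∀ᶠ z' in fixedInfinity f, z' ∈ FixPts f :=
  mem_inf_of_right (mem_principal_self _)

theorem angVar_sub {β γ : ℝ → ℂ} (hβ : Continuous β) (hγ : Continuous γ)
    (hlt : ∀ t ∈ Icc (0 : ℝ) 1, ‖β t‖ < ‖γ t‖) :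
    angVar (fun t => β t - γ t) =
      angVar γ + ((1 - β 1 / γ 1).arg - (1 - β 0 / γ 0).arg) / (2 * Real.pi) := by
  have hγ₀ : ∀ t : unitInterval, γ t ≠ 0 := fun t =>
    norm_pos_iff.1 ((norm_nonneg _).trans_lt (hlt t t.2))
  have hslit : ∀ t : unitInterval, 1 - β t / γ t ∈ Complex.slitPlane := fun t => by
    rw [sub_eq_add_neg]
    apply Complex.mem_slitPlane_of_norm_lt_one
    rw [norm_neg, norm_div, div_lt_one (norm_pos_iff.2 (hγ₀ t))]
    exact hlt t t.2
  have := (convex_Icc (0 : ℝ) 1).contractibleSpace (nonempty_Icc.2 zero_le_one)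
  obtain ⟨φ, hφ, hφγ⟩ := exists_continuous_log (X := unitInterval) (u := fun t => γ t)
    (by fun_prop) hγ₀
  have hlog : Continuous fun t : unitInterval => Complex.log (1 - β t / γ t) :=
    Continuous.clog (continuous_const.sub (.div (by fun_prop) (by fun_prop) hγ₀)) hslit
  rw [angVar_eq_of_log hφ hφγ, angVar_eq_of_log
    (Λ := fun t => φ t + Real.pi * Complex.I + Complex.log (1 - β t / γ t)) (by fun_prop)]
  · simp [Complex.log_im]
    ring
  · intro t
    rw [Complex.exp_add, Complex.exp_add, Complex.exp_pi_mul_I, hφγ,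
      Complex.exp_log (Complex.slitPlane_ne_zero (hslit t))]
    field_simp [hγ₀ t]
    ring

theorem HIsotopy.eventually_cocompact_forall_notMem {X : Type*} [TopologicalSpace X] {f : X ≃ₜ X}
    (I : HIsotopy f) {K : Set X} (hK : IsCompact K) :
    ∀ᶠ x in cocompact X, ∀ t ∈ Icc (0 : ℝ) 1, I.F t x ∉ K := by
  have hcompact := (isCompact_Icc (a := (0 : ℝ)) (b := 1) |>.prod hK).image I.cont_symm
  filter_upwards [hcompact.compl_mem_cocompact] with x hx t ht hxK
  exact hx ⟨(t, I.F t x), ⟨ht, hxK⟩, (I.F t).symm_apply_apply x⟩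

theorem exists_abs_arg_one_sub_lt {η : ℝ} (hη : 0 < η) :
    ∃ s > 0, s ≤ 1 ∧ ∀ q : ℂ, ‖q‖ < s → |(1 - q).arg| < η := by
  have hcont : ContinuousAt (fun q : ℂ => (1 - q).arg) 0 :=
    ContinuousAt.comp (g := Complex.arg) (Complex.continuousAt_arg (by simp)) (by fun_prop)
  obtain ⟨s, hs, hsη⟩ := Metric.continuousAt_iff.1 hcont η hη
  refine ⟨min s 1, by positivity, min_le_right _ _, fun q hq => ?_⟩
  simpa [Real.dist_eq] using hsη (x := q) (by simpa using hq.trans_le (min_le_left _ _))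

theorem eventually_abs_enlace_lt {f : ℂ ≃ₜ ℂ} {I : HIsotopy f} (hA : Adapted I) {K : Set ℂ}
    (hK : IsCompact K) {η : ℝ} (hη : 0 < η) :
    ∀ᶠ z' in fixedInfinity f, ∀ z ∈ K, |Enlace I z z'| < η := by
  obtain ⟨K', hK', hTourne⟩ := hA
  have hcompact := (isCompact_Icc (a := (0 : ℝ)) (b := 1) |>.prod hK).image I.cont
  obtain ⟨B, hB⟩ := hcompact.isBounded.exists_norm_le
  obtain ⟨s, hs, hs₁, harg⟩ := exists_abs_arg_one_sub_lt hη
  have hfar : ∀ᶠ z' in fixedInfinity f, z' ∉ K' ∧ ∀ t ∈ Icc (0 : ℝ) 1, I.F t z' ∉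
      closedBall 0 (max (B / s) 0) :=
    (Filter.Eventually.and hK'.compl_mem_cocompact (I.eventually_cocompact_forall_notMem
      (isCompact_closedBall _ _))).filter_mono inf_le_left
  filter_upwards [hfar, eventually_mem_fixPts f] with z' ⟨hz'K', hz'far⟩ hz' z hz
  have hratio : ∀ t ∈ Icc (0 : ℝ) 1, 0 < ‖I.F t z'‖ ∧ ‖I.F t z‖ < s * ‖I.F t z'‖ := by
    intro t ht
    have hlt := hz'far t ht
    rw [mem_closedBall_zero_iff, not_le, max_lt_iff, div_lt_iff₀' hs] at hlt
    exact ⟨hlt.2, (hB _ ⟨(t, z), ⟨ht, hz⟩, rfl⟩).trans_lt hlt.1⟩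
  have hsmall : ∀ t ∈ Icc (0 : ℝ) 1, |(1 - I.F t z / I.F t z').arg| < η := fun t ht => by
    refine harg _ ?_
    rw [norm_div, div_lt_iff₀ (hratio t ht).1]
    exact (hratio t ht).2
  have hF : ∀ x, Continuous fun t => I.F t x := fun x =>
    I.cont.comp (continuous_id.prodMk continuous_const)
  have hEnlace := angVar_sub (hF z) (hF z') fun t ht =>
    (hratio t ht).2.trans_le (mul_le_of_le_one_left (norm_nonneg _) hs₁)
  rw [Enlace, hEnlace, show angVar (fun t => I.F t z') = 0 from hTourne z' ⟨hz', hz'K'⟩, zero_add,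
    abs_div, abs_of_pos Real.two_pi_pos, div_lt_iff₀ Real.two_pi_pos]
  have h₁ := hsmall 1 (by simp)
  have h₀ := hsmall 0 (by simp)
  calc _ ≤ |(1 - I.F 1 z / I.F 1 z').arg| + |(1 - I.F 0 z / I.F 0 z').arg| := abs_sub _ _
    _ < η * 2 := by linarith
    _ ≤ η * (2 * Real.pi) := by gcongr; linarith [Real.pi_gt_three]

/-! ### The maximal ergodic inequality -/

/-- The maximum of the Birkhoff sums of `g` over times at most `N` along the orbits of `T`, in the
recursive form on which Garsia's proof of the maximal ergodic inequality rests. -/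
def garsiaMax {X : Type*} (T : X → X) (g : X → ℝ) : ℕ → X → ℝ
  | 0, _ => 0
  | N + 1, x => max 0 (g x + garsiaMax T g N (T x))

section garsiaMax

variable {X : Type*} (T : X → X) (g : X → ℝ)

theorem garsiaMax_nonneg : ∀ N x, 0 ≤ garsiaMax T g N x
  | 0, _ => le_rfl
  | _ + 1, _ => le_max_left _ _

theorem garsiaMax_le_succ (N : ℕ) (x : X) : garsiaMax T g N x ≤ garsiaMax T g (N + 1) x := by
  induction N generalizing x with
  | zero => exact garsiaMax_nonneg T g 1 x
  | succ N ih => exact max_le_max le_rfl (add_le_add le_rfl (ih (T x)))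

theorem birkhoffSum_le_garsiaMax (N : ℕ) (x : X) : birkhoffSum T g N x ≤ garsiaMax T g N x := by
  induction N generalizing x with
  | zero => exact le_rfl
  | succ N ih =>
    rw [birkhoffSum_succ']
    exact (add_le_add le_rfl (ih (T x))).trans (le_max_right _ _)

theorem garsiaMax_le_indicator_add (N : ℕ) (x : X) :
    garsiaMax T g N x ≤ {x | 0 < garsiaMax T g N x}.indicator g x + garsiaMax T g N (T x) := by
  by_cases hx : 0 < garsiaMax T g N x
  · rw [indicator_of_mem (by exact hx)]
    cases N with
    | zero => exact absurd hx (lt_irrefl _)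
    | succ N =>
      have hpos : 0 < g x + garsiaMax T g N (T x) := by
        simpa only [garsiaMax, lt_max_iff, lt_irrefl, false_or] using hx
      calc garsiaMax T g (N + 1) x = g x + garsiaMax T g N (T x) := max_eq_right hpos.le
        _ ≤ g x + garsiaMax T g (N + 1) (T x) := add_le_add le_rfl (garsiaMax_le_succ T g N (T x))
  · rw [indicator_of_notMem (by exact hx), zero_add]
    exact (not_lt.1 hx).trans (garsiaMax_nonneg T g N (T x))

variable [MeasurableSpace X] {T g} {μ : Measure X}

theorem integrable_garsiaMax (hT : MeasurePreserving T μ μ) (hg : Integrable g μ) :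
    ∀ N, Integrable (garsiaMax T g N) μ
  | 0 => integrable_zero X ℝ μ
  | N + 1 => (integrable_zero X ℝ μ).sup
      (hg.add (hT.integrable_comp_of_integrable (integrable_garsiaMax hT hg N)))

theorem measurable_garsiaMax (hT : Measurable T) (hg : Measurable g) :
    ∀ N, Measurable (garsiaMax T g N)
  | 0 => measurable_const
  | N + 1 => measurable_const.max (hg.add ((measurable_garsiaMax hT hg N).comp hT))

end garsiaMax

section MaximalInequality

variable {X : Type*} [MeasurableSpace X] {T : X → X} {μ : Measure X}

theorem setIntegral_garsiaMax_pos_nonneg {g : X → ℝ} (hT : MeasurePreserving T μ μ)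
    (hg : Measurable g) (hgi : Integrable g μ) (N : ℕ) :
    0 ≤ ∫ x in {x | 0 < garsiaMax T g N x}, g x ∂μ := by
  have hpos : MeasurableSet {x | 0 < garsiaMax T g N x} :=
    measurableSet_lt measurable_const (measurable_garsiaMax hT.measurable hg N)
  have hM := integrable_garsiaMax hT hgi N
  have hle := integral_mono hM ((hgi.indicator hpos).add (hT.integrable_comp_of_integrable hM))
    (garsiaMax_le_indicator_add T g N)
  have hinv : ∫ x, garsiaMax T g N (T x) ∂μ = ∫ x, garsiaMax T g N x ∂μ := by
    rw [← integral_map hT.aemeasurable (by rw [hT.map_eq]; exact hM.1), hT.map_eq]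
  rw [integral_add' (hgi.indicator hpos) (hT.integrable_comp_of_integrable hM),
    integral_indicator hpos] at hle
  simp only [Function.comp_apply, hinv] at hle
  linarith

theorem measure_exists_lt_birkhoffSum_le [IsFiniteMeasure μ] (hT : MeasurePreserving T μ μ)
    {W : Set X} (hW : MeasurableSet W) {c : ℝ} (hc : 0 < c) :
    μ {x | ∃ n : ℕ, c * n < birkhoffSum T (W.indicator 1) n x} ≤ μ W / ENNReal.ofReal c := by
  set g : X → ℝ := fun x => W.indicator 1 x - c with hg
  have hW₁ : Integrable (W.indicator (1 : X → ℝ)) μ := (integrable_const 1).indicator hW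
  have hgi : Integrable g μ := hW₁.sub (integrable_const c)
  have hgm : Measurable g := (measurable_const.indicator hW).sub measurable_const
  have hsub : {x | ∃ n : ℕ, c * n < birkhoffSum T (W.indicator 1) n x} ⊆
      ⋃ N, {x | 0 < garsiaMax T g N x} := by
    rintro x ⟨n, hn⟩
    refine mem_iUnion.2 ⟨n, lt_of_lt_of_le ?_ (birkhoffSum_le_garsiaMax T g n x)⟩
    simpa [hg, birkhoffSum, mul_comm] using hn
  have hmono : Monotone fun N => {x | 0 < garsiaMax T g N x} :=
    monotone_nat_of_le_succ fun N x hx => lt_of_lt_of_le hx (garsiaMax_le_succ T g N x)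
  refine (measure_mono hsub).trans ?_
  rw [hmono.measure_iUnion]
  refine iSup_le fun N => ?_
  set E := {x | 0 < garsiaMax T g N x}
  have hE : μ.real E * c ≤ μ.real W := by
    have hnonneg := setIntegral_garsiaMax_pos_nonneg hT hgm hgi N
    rw [integral_sub hW₁.integrableOn (integrable_const c), setIntegral_const,
      integral_indicator_one hW] at hnonneg
    have : (μ.restrict E).real W ≤ μ.real W :=
      ENNReal.toReal_mono (measure_ne_top μ W) (Measure.restrict_apply_le E W)
    simp only [smul_eq_mul] at hnonneg
    linarith
  rw [ENNReal.le_div_iff_mul_le (by simp [hc]) (by simp), ← ofReal_measureReal,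
    ← ofReal_measureReal, ← ENNReal.ofReal_mul measureReal_nonneg]
  exact ENNReal.ofReal_le_ofReal hE

end MaximalInequality

/-! ### Long returns -/

/-- The part of the Kakutani tower over `U` that lies above the points with first return time
greater than `m`. -/
def longTower {X : Type*} (f : X → X) (U : Set X) (m : ℕ) : Set X :=
  {y | ∃ n r z, m < n ∧ r < n ∧ IsFirstReturn f U n z ∧ f^[r] z = y}

section LongTower

variable {X : Type*}

theorem antitone_longTower (f : X → X) (U : Set X) : Antitone (longTower f U) :=
  fun _ _ hm _ ⟨n, r, z, hmn, h⟩ => ⟨n, r, z, hm.trans_lt hmn, h⟩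

theorem IsFirstReturn.unique {f : X → X} {U : Set X} {n n' : ℕ} {z : X}
    (h : IsFirstReturn f U n z) (h' : IsFirstReturn f U n' z) : n = n' :=
  le_antisymm (not_lt.1 fun hlt => h.notMem n' h'.pos hlt h'.iterate_mem)
    (not_lt.1 fun hlt => h'.notMem n h.pos hlt h.iterate_mem)

theorem IsFirstReturn.eq_of_iterate_eq {f : X → X} (hf : f.Injective) {U : Set X} {n r r' : ℕ}
    {z w : X} (hw : IsFirstReturn f U n w) (hz : z ∈ U) (hr : r ≤ r') (hr' : r' < n)
    (heq : f^[r] z = f^[r'] w) : z = w := by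
  obtain ⟨d, rfl⟩ := Nat.exists_eq_add_of_le hr
  rw [Function.iterate_add_apply] at heq
  obtain rfl := hf.iterate r heq
  obtain rfl | hd := Nat.eq_zero_or_pos d
  · rfl
  · exact absurd hz (hw.notMem d hd (by omega))

theorem iInter_longTower {f : X → X} (hf : f.Injective) (U : Set X) :
    ⋂ m, longTower f U m = ∅ := by
  refine eq_empty_of_forall_notMem fun y hy => ?_
  rw [mem_iInter] at hy
  obtain ⟨n, r, z, -, hr, hz, hzy⟩ := hy 0
  obtain ⟨n', r', z', hn', hr', hz', hzy'⟩ := hy n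
  obtain rfl : z = z' := by
    rcases le_total r r' with hle | hle
    · exact hz'.eq_of_iterate_eq hf hz.mem hle hr' (hzy.trans hzy'.symm)
    · exact (hz.eq_of_iterate_eq hf hz'.mem hle hr (hzy'.trans hzy.symm)).symm
  exact hn'.ne (hz.unique hz')

theorem exists_isFirstReturn {f : X → X} {U : Set X} {n : ℕ} (hn : 0 < n) {z : X} (hz : z ∈ U)
    (hnz : f^[n] z ∈ U) : ∃ m ≤ n, IsFirstReturn f U m z := by
  have hex : ∃ n, 0 < n ∧ f^[n] z ∈ U := ⟨n, hn, hnz⟩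
  exact ⟨Nat.find hex, Nat.find_min' hex ⟨hn, hnz⟩, hz, (Nat.find_spec hex).1,
    (Nat.find_spec hex).2, fun r hr₀ hr hrU => Nat.find_min hex hr ⟨hr₀, hrU⟩⟩

theorem IsReturnCocycle.abs_le_mul_birkhoffSum {f : X → X} {U : Set X} {A : ℕ → X → ℤ}
    (hA : IsReturnCocycle f U A) {k m : ℕ}
    (hk : ∀ n z, IsFirstReturn f U n z → |A n z| ≤ n * k)
    (hm : ∀ n ≤ m, ∀ z, IsFirstReturn f U n z → A n z = 0) (n : ℕ) {z : X} (hz : z ∈ U)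
    (hnz : f^[n] z ∈ U) :
    (|A n z| : ℝ) ≤ k * birkhoffSum f ((longTower f U m).indicator 1) n z := by
  induction n using Nat.strong_induction_on generalizing z with
  | _ n ih =>
    obtain rfl | hn := Nat.eq_zero_or_pos n
    · have h₀ : A 0 z = 0 := by simpa using hA 0 0 z hz hz hz
      simp [h₀]
    obtain ⟨p, hpn, hp⟩ := exists_isFirstReturn hn hz hnz
    obtain ⟨q, rfl⟩ := Nat.exists_eq_add_of_le hpn
    rw [add_comm, Function.iterate_add_apply] at hnz
    have hfirst : (|A p z| : ℝ) ≤ k * birkhoffSum f ((longTower f U m).indicator 1) p z := by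
      rcases le_or_gt p m with hpm | hmp
      · rw [hm p hpm z hp, Int.cast_zero, abs_zero]
        exact mul_nonneg k.cast_nonneg (Finset.sum_nonneg fun r _ =>
          indicator_nonneg (fun _ _ => zero_le_one) _)
      · have hsum : birkhoffSum f ((longTower f U m).indicator (1 : X → ℝ)) p z = p := by
          have hmem : ∀ r ∈ Finset.range p, f^[r] z ∈ longTower f U m := fun r hr =>
            ⟨p, r, z, hmp, Finset.mem_range.1 hr, hp, rfl⟩
          rw [birkhoffSum, Finset.sum_congr rfl fun r hr => indicator_of_mem (hmem r hr) _]
          simp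
        rw [hsum, mul_comm]
        exact_mod_cast hk p z hp
    rw [hA p q z hz hp.iterate_mem hnz, birkhoffSum_add, mul_add, Int.cast_add]
    exact (abs_add_le _ _).trans
      (add_le_add hfirst (ih q (by have := hp.pos; omega) hp.iterate_mem hnz))

variable [MeasurableSpace X] {U : Set X}

theorem measurableSet_isFirstReturn {f : X → X} (hf : Measurable f) (hU : MeasurableSet U)
    (n : ℕ) : MeasurableSet {z | IsFirstReturn f U n z} := by
  have hiter : ∀ r, MeasurableSet {z | f^[r] z ∈ U} := fun r => hf.iterate r hU
  have hset : {z | IsFirstReturn f U n z} = {z | z ∈ U ∧ 0 < n ∧ f^[n] z ∈ U ∧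
      ∀ r ∈ Finset.Ioo 0 n, f^[r] z ∉ U} := by
    ext z
    exact ⟨fun h => ⟨h.mem, h.pos, h.iterate_mem, fun r hr =>
        h.notMem r (Finset.mem_Ioo.1 hr).1 (Finset.mem_Ioo.1 hr).2⟩,
      fun ⟨hz, hn, hnz, hr⟩ => ⟨hz, hn, hnz, fun r hr₀ hrn => hr r (Finset.mem_Ioo.2 ⟨hr₀, hrn⟩)⟩⟩
  rw [hset]
  measurability

theorem measurableSet_longTower {f : X → X} (hf : MeasurableEmbedding f) (hU : MeasurableSet U)
    (m : ℕ) : MeasurableSet (longTower f U m) := by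
  have hiter : ∀ r, MeasurableEmbedding f^[r] := fun r => by
    induction r with
    | zero => exact MeasurableEmbedding.id
    | succ r ih => exact ih.comp hf
  have hset : longTower f U m = ⋃ n > m, ⋃ r < n, f^[r] '' {z | IsFirstReturn f U n z} := by
    ext y
    simp only [longTower, mem_ofPred_eq, mem_iUnion, mem_image]
    grind
  rw [hset]
  exact .biUnion (to_countable _) fun n _ => .biUnion (to_countable _) fun r _ =>
    (hiter r).measurableSet_image.2 (measurableSet_isFirstReturn hf.measurable hU n)

theorem tendsto_measure_longTower (μ : Measure X) [IsFiniteMeasure μ] {f : X → X}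
    (hf : MeasurableEmbedding f) (hU : MeasurableSet U) :
    Tendsto (fun m => μ (longTower f U m)) atTop (𝓝 0) := by
  simpa only [iInter_longTower hf.injective, measure_empty, Function.comp_def] using
    tendsto_measure_iInter_atTop (μ := μ)
      (fun m => (measurableSet_longTower hf hU m).nullMeasurableSet) (antitone_longTower f U)
      ⟨0, measure_ne_top μ _⟩

end LongTower

/-! ### Points of large rotation number -/

theorem tendsto_measure_inter_of_locally {X ι : Type*} [TopologicalSpace X] [T2Space X]
    [MeasurableSpace X] [OpensMeasurableSpace X] {μ : Measure X} [IsFiniteMeasure μ]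
    [μ.InnerRegularCompactLTTop] {l : Filter ι} {S : ι → Set X} {V : Set X} (hV : MeasurableSet V)
    (h : ∀ x ∈ V, ∃ U ∈ 𝓝[V] x, Tendsto (fun i => μ (S i ∩ U)) l (𝓝 0)) :
    Tendsto (fun i => μ (S i ∩ V)) l (𝓝 0) := by
  refine ENNReal.tendsto_nhds_zero.2 fun ε hε => ?_
  obtain ⟨K, hKV, hK, hμK⟩ :=
    hV.exists_isCompact_sdiff_lt (measure_ne_top μ V) (ENNReal.half_pos hε.ne').ne'
  have hlim : Tendsto (fun i => μ (S i ∩ K)) l (𝓝 0) := by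
    refine hK.induction_on (p := fun s => Tendsto (fun i => μ (S i ∩ s)) l (𝓝 0))
      (by simp [tendsto_const_nhds]) (fun s t hst ht => ?_) (fun s t hs ht => ?_) fun x hx => ?_
    · exact tendsto_of_tendsto_of_tendsto_of_le_of_le tendsto_const_nhds ht
        (fun _ => zero_le) fun i => measure_mono (inter_subset_inter_right _ hst)
    · refine tendsto_of_tendsto_of_tendsto_of_le_of_le tendsto_const_nhds
        (by simpa only [add_zero] using hs.add ht) (fun _ => zero_le) fun i => ?_
      rw [inter_union_distrib_left]
      exact measure_union_le _ _
    · obtain ⟨U, hU, hlim⟩ := h x (hKV hx)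
      exact ⟨U, nhdsWithin_mono x hKV hU, hlim⟩
  filter_upwards [ENNReal.tendsto_nhds_zero.1 hlim _ (ENNReal.half_pos hε.ne')] with i hi
  calc μ (S i ∩ V) ≤ μ (S i ∩ K ∪ V \ K) := measure_mono fun x hx =>
        (em (x ∈ K)).imp (fun hxK => ⟨hx.1, hxK⟩) fun hxK => ⟨hx.2, hxK⟩
    _ ≤ μ (S i ∩ K) + μ (V \ K) := measure_union_le _ _
    _ ≤ ε / 2 + ε / 2 := add_le_add hi hμK.le
    _ = ε := ENNReal.add_halves ε

/-- The recurrent points whose orbit has a rotation number of absolute value at least `a`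
around `z'`. -/
def largeRotation {f : ℂ ≃ₜ ℂ} (I : HIsotopy f) (a : ℝ) (z' : ℂ) : Set ℂ :=
  {z | z ∈ RecPlus f ∧ ∃ ρ : ℝ, HasRot I z' z ρ ∧ a ≤ |ρ|}

section LargeRotation

variable {f : ℂ ≃ₜ ℂ} {I : HIsotopy f} {a : ℝ}

theorem HasRot.eq_enlace {z z' : ℂ} {ρ : ℝ} (h : HasRot I z' z ρ) (hz : z ∈ FixPts f) :
    ρ = Enlace I z z' := by
  have hiter : ∀ n, f^[n] z = z := Function.iterate_fixed hz
  have hlim := h (· + 1) (fun i j hij => by simpa using hij) (by simp [hiter])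
  refine tendsto_nhds_unique hlim (tendsto_const_nhds.congr fun k => ?_)
  simp only [hiter, Finset.sum_const, Finset.card_range, nsmul_eq_mul]
  rw [mul_div_cancel_left₀ _ (by positivity)]

theorem exists_lt_abs_birkhoffSum_of_mem_largeRotation {z z' : ℂ}
    (hz : z ∈ largeRotation I a z') {U : Set ℂ} (hU : U ∈ 𝓝 z) {b : ℝ} (hb : b < a) (N : ℕ) :
    ∃ n ≥ N, f^[n] z ∈ U ∧ b * n < |birkhoffSum f (fun z => Enlace I z z') n z| := by
  obtain ⟨⟨n, hn, hrec⟩, ρ, hρ, haρ⟩ := hz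
  obtain ⟨j, hjU, hjN, hj⟩ := ((hrec.eventually hU).and
    ((hn.tendsto_atTop.eventually_ge_atTop (N + 1)).and
      ((hρ n hn hrec).abs.eventually (lt_mem_nhds (hb.trans_le haρ))))).exists
  have hpos : (0 : ℝ) < n j := by exact_mod_cast (show 0 < n j by omega)
  rw [abs_div, abs_of_pos hpos, lt_div_iff₀ hpos] at hj
  exact ⟨n j, by omega, hjU, hj⟩

theorem eventually_abs_birkhoffSum_enlace_lt (hA : Adapted I) {K : Set ℂ} (hK : IsCompact K)
    (n : ℕ) {η : ℝ} (hη : 0 < η) :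
    ∀ᶠ z' in fixedInfinity f, ∀ z ∈ K, |birkhoffSum f (fun z => Enlace I z z') n z| < η := by
  induction n generalizing η with
  | zero => simp [hη]
  | succ n ih =>
    filter_upwards [ih (half_pos hη), eventually_abs_enlace_lt hA
      (hK.image (f.continuous.iterate n)) (half_pos hη)] with z' hsum hlast z hz
    rw [birkhoffSum_succ]
    exact (abs_add_le _ _).trans_lt
      ((add_lt_add (hsum z hz) (hlast _ (mem_image_of_mem _ hz))).trans_eq (add_halves η))

theorem largeRotation_inter_subset {z' : ℂ} {U : Set ℂ} (hU : IsOpen U) (ha : 0 < a)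
    {W : Set ℂ} {k : ℕ} (hk : 0 < k)
    (hsum : ∀ n, ∀ z ∈ U, f^[n] z ∈ U →
      |birkhoffSum f (fun z => Enlace I z z') n z| ≤
        k * birkhoffSum f (W.indicator 1) n z + 1 / 2) :
    largeRotation I a z' ∩ U ⊆
      {z | ∃ n : ℕ, a / (2 * k) * n < birkhoffSum f (W.indicator 1) n z} := by
  rintro z ⟨hz, hzU⟩
  obtain ⟨N, hN⟩ := exists_nat_gt (2 / a)
  obtain ⟨n, hn, hnU, hlt⟩ := exists_lt_abs_birkhoffSum_of_mem_largeRotation hz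
    (hU.mem_nhds hzU) (show 3 / 4 * a < a by linarith) N
  have hlarge : 2 < a * n := by
    rw [div_lt_iff₀' ha] at hN
    exact hN.trans_le (by gcongr)
  refine ⟨n, ?_⟩
  rw [div_mul_eq_mul_div, div_lt_iff₀ (by positivity)]
  linarith [hsum n z hzU hnU]

theorem IsReturnCocycle.abs_birkhoffSum_enlace_le {A : ℕ → ℂ → ℤ} {U : Set ℂ} {z' : ℂ}
    (hA : IsReturnCocycle f U A) {k m : ℕ}
    (hk : ∀ n z, IsFirstReturn f U n z → |A n z| ≤ n * k)
    (hm : ∀ n ≤ m, ∀ z, IsFirstReturn f U n z → A n z = 0)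
    (hEnlace : ∀ n, ∀ z ∈ U, f^[n] z ∈ U →
      |birkhoffSum f (fun z => Enlace I z z') n z - A n z| ≤ 1 / 2)
    (n : ℕ) {z : ℂ} (hz : z ∈ U) (hnz : f^[n] z ∈ U) :
    |birkhoffSum f (fun z => Enlace I z z') n z| ≤
      k * birkhoffSum f ((longTower f U m).indicator 1) n z + 1 / 2 := by
  linarith [hA.abs_le_mul_birkhoffSum hk hm n hz hnz, hEnlace n z hz hnz,
    abs_sub_abs_le_abs_sub (birkhoffSum f (fun z => Enlace I z z') n z) (A n z : ℝ)]

theorem eventually_largeRotation_inter_ball_subset (hA : Adapted I) (ha : 0 < a) {M : ℝ}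
    (hM : ∀ z ∈ FixPts f, ∀ z' ∈ FixPts f, z ≠ z' → |Enlace I z z'| ≤ M) {k : ℕ} (hk : 0 < k)
    (hMk : M < k) {c : ℂ} {δ : ℝ} (hfree : MapsTo f (ball c δ) (ball c δ)ᶜ) {n₀ : ℕ} {z₀ : ℂ}
    (h₀ : IsFirstReturn f (ball c δ) n₀ z₀) {m : ℕ} (hm : n₀ ≤ m) :
    ∀ᶠ z' in fixedInfinity f, largeRotation I a z' ∩ ball c δ ⊆
      {z | ∃ n : ℕ, a / (2 * k) * n <
        birkhoffSum f ((longTower f (ball c δ) m).indicator 1) n z} := by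
  have hsmall : ∀ᶠ z' in fixedInfinity f, ∀ n ≤ m, ∀ z ∈ closedBall c δ,
      |birkhoffSum f (fun z => Enlace I z z') n z| < 1 / 2 :=
    (eventually_all_finite (finite_Iic m)).2 fun n _ =>
      eventually_abs_birkhoffSum_enlace_lt hA (isCompact_closedBall c δ) n one_half_pos
  filter_upwards [hsmall, eventually_mem_fixPts f] with z' hsmall hz'
  obtain ⟨A, hAadd, hAsum, hAle⟩ := exists_returnCocycle I hz'
    (fun z hz hne => hM z hz z' hz' hne) hk hMk hfree
  have hzero : ∀ n ≤ m, ∀ z, IsFirstReturn f (ball c δ) n z → A n z = 0 := by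
    intro n hn z hz
    have hlt : |(A n z : ℝ)| < 1 := by
      linarith [hsmall n hn z (ball_subset_closedBall hz.mem), hAsum n z hz.mem hz.iterate_mem,
        abs_sub_comm (birkhoffSum f (fun z => Enlace I z z') n z) (A n z : ℝ),
        abs_sub_abs_le_abs_sub (A n z : ℝ) (birkhoffSum f (fun z => Enlace I z z') n z)]
    exact Int.abs_lt_one_iff.1 (by exact_mod_cast hlt)
  exact largeRotation_inter_subset isOpen_ball ha hk fun n z hz hnz =>
    hAadd.abs_birkhoffSum_enlace_le (hAle ⟨n₀, z₀, h₀, hzero n₀ hm z₀ h₀⟩) hzero hAsum n hz hnz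

variable {μ : Measure ℂ} [IsFiniteMeasure μ]

theorem tendsto_measure_largeRotation_inter_ball (hP1 : P1 I) (hA : Adapted I)
    (hμ : MeasurePreserving f μ μ) (ha : 0 < a) {c : ℂ} {δ : ℝ}
    (hfree : MapsTo f (ball c δ) (ball c δ)ᶜ) :
    Tendsto (fun z' => μ (largeRotation I a z' ∩ ball c δ)) (fixedInfinity f) (𝓝 0) := by
  by_cases hret : ∃ n z, IsFirstReturn f (ball c δ) n z
  · obtain ⟨n₀, z₀, h₀⟩ := hret
    obtain ⟨M, hM⟩ := hP1
    obtain ⟨k, hk⟩ := exists_nat_gt (max M 0)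
    have hk₀ : 0 < k := by exact_mod_cast (le_max_right M 0).trans_lt hk
    have hc : 0 < a / (2 * k) := by positivity
    have hlim := ENNReal.Tendsto.div_const (tendsto_measure_longTower μ f.measurableEmbedding
      (measurableSet_ball (x := c) (ε := δ))) (.inr (ENNReal.ofReal_pos.2 hc).ne')
    rw [ENNReal.zero_div] at hlim
    refine ENNReal.tendsto_nhds_zero.2 fun ε hε => ?_
    obtain ⟨m, hmε, hm⟩ :=
      ((ENNReal.tendsto_nhds_zero.1 hlim ε hε).and (eventually_ge_atTop n₀)).exists
    filter_upwards [eventually_largeRotation_inter_ball_subset hA ha hM hk₀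
      ((le_max_left M 0).trans_lt hk) hfree h₀ hm] with z' hsub
    calc _ ≤ _ := measure_mono hsub
      _ ≤ _ := measure_exists_lt_birkhoffSum_le hμ
        (measurableSet_longTower f.measurableEmbedding measurableSet_ball m) hc
      _ ≤ ε := hmε
  · suffices h : ∀ z', largeRotation I a z' ∩ ball c δ = ∅ by
      simp [h, tendsto_const_nhds]
    refine fun z' => eq_empty_of_forall_notMem fun z ⟨hz, hzU⟩ => ?_
    obtain ⟨n, hn, hnU, -⟩ := exists_lt_abs_birkhoffSum_of_mem_largeRotation hz
      (isOpen_ball.mem_nhds hzU) (sub_one_lt a) 1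
    obtain ⟨p, -, hp⟩ := exists_isFirstReturn hn hzU hnU
    exact hret ⟨p, z, hp⟩

theorem exists_ball_mapsTo_compl {z : ℂ} (hz : z ∉ FixPts f) :
    ∃ δ > 0, MapsTo f (ball z δ) (ball z δ)ᶜ := by
  obtain ⟨u, v, hu, hv, hzu, hzv, huv⟩ := t2_separation hz
  obtain ⟨δ, hδ, hball⟩ :=
    Metric.isOpen_iff.1 (hv.inter (hu.preimage f.continuous)) z ⟨hzv, hzu⟩
  exact ⟨δ, hδ, fun x hx hfx => disjoint_left.1 huv (hball hx).2 (hball hfx).1⟩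

theorem tendsto_measure_largeRotation_inter_compl_fixPts (hP1 : P1 I) (hA : Adapted I)
    (hμ : MeasurePreserving f μ μ) (ha : 0 < a) :
    Tendsto (fun z' => μ (largeRotation I a z' ∩ (FixPts f)ᶜ)) (fixedInfinity f) (𝓝 0) := by
  refine tendsto_measure_inter_of_locally
    (isClosed_eq f.continuous continuous_id).measurableSet.compl fun z hz => ?_
  obtain ⟨δ, hδ, hfree⟩ := exists_ball_mapsTo_compl hz
  exact ⟨ball z δ, mem_nhdsWithin_of_mem_nhds (ball_mem_nhds z hδ),
    tendsto_measure_largeRotation_inter_ball hP1 hA hμ ha hfree⟩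

theorem tendsto_measure_largeRotation_inter_fixPts (μ : Measure ℂ) [IsFiniteMeasure μ]
    (hA : Adapted I) (ha : 0 < a) :
    Tendsto (fun z' => μ (largeRotation I a z' ∩ FixPts f)) (fixedInfinity f) (𝓝 0) := by
  refine tendsto_measure_inter_of_locally
    (isClosed_eq f.continuous continuous_id).measurableSet fun z _ => ?_
  refine ⟨closedBall z 1 ∩ FixPts f, inter_mem (mem_nhdsWithin_of_mem_nhds
    (closedBall_mem_nhds z one_pos)) self_mem_nhdsWithin, tendsto_const_nhds.congr' ?_⟩
  filter_upwards [eventually_abs_enlace_lt hA (isCompact_closedBall z 1) ha] with z' hz'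
  suffices h : largeRotation I a z' ∩ (closedBall z 1 ∩ FixPts f) = ∅ by rw [h, measure_empty]
  refine eq_empty_of_forall_notMem fun x ⟨⟨_, ρ, hρ, haρ⟩, hx, hfx⟩ => ?_
  rw [hρ.eq_enlace hfx] at haρ
  exact haρ.not_gt (hz' x hx)

theorem tendsto_measure_largeRotation (hP1 : P1 I) (hA : Adapted I)
    (hμ : MeasurePreserving f μ μ) (ha : 0 < a) :
    Tendsto (fun z' => μ (largeRotation I a z')) (fixedInfinity f) (𝓝 0) := by
  have hlim := (tendsto_measure_largeRotation_inter_fixPts μ hA ha).add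
    (tendsto_measure_largeRotation_inter_compl_fixPts hP1 hA hμ ha)
  have hFix : MeasurableSet (FixPts f) := (isClosed_eq f.continuous continuous_id).measurableSet
  simpa only [← sdiff_eq, measure_inter_add_sdiff _ hFix, add_zero] using hlim

end LargeRotation

theorem stmt8_measure_of_large_rotation_tendsto_zero
    (f : ℂ ≃ₜ ℂ) (I : HIsotopy f) (hP1 : P1 I) (hP2 : P2 I)
    (hnc : ¬ IsCompact (FixPts ⇑f)) (hA : Adapted I)
    (μ : Measure ℂ) [IsFiniteMeasure μ] (hinv : Measure.map (⇑f) μ = μ)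
    (a : ℝ) (ha : 0 < a) :
    ∀ ε : ℝ, 0 < ε → ∃ K : Set ℂ, IsCompact K ∧
      ∀ z' ∈ FixPts ⇑f \ K,
        μ {zz | zz ∈ RecPlus f ∧ ∃ ρ : ℝ, HasRot I z' zz ρ ∧ a ≤ |ρ|}
          < ENNReal.ofReal ε := by
  intro ε hε
  have hlim : Tendsto (fun z' => μ (largeRotation I a z')) (fixedInfinity f) (𝓝 0) :=
    tendsto_measure_largeRotation hP1 hA ⟨f.continuous.measurable, hinv⟩ ha
  have hsmall : ∀ᶠ z' in cocompact ℂ, z' ∈ FixPts f →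
      μ (largeRotation I a z') < ENNReal.ofReal ε :=
    eventually_inf_principal.1 (hlim.eventually_lt_const (ENNReal.ofReal_pos.2 hε))
  obtain ⟨K, hK, hKε⟩ := mem_cocompact.1 hsmall
  exact ⟨K, hK, fun z' hz' => hKε hz'.2 hz'.1⟩

end
end

section
/- Let f be an orientation-preserving homeomorphism of ℝ² satisfying (P1) and (P2), with Fix(f) not compact, and let I be an adapted isotopy. Let M be a bound with |Enlace_I(z, z')| ≤ M for all distinct z, z' ∈ Fix(f), let z' ∈ Fix(f), and let U be a free disc for f. Then the image of the function z ↦ α_{U,z'}(z)/τ_U(z), defined on Rec⁺(f) ∩ U, is contained in an interval of length 2M + 4. -/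
open MeasureTheory Filter Topology Set Metric

noncomputable section

attribute [local instance] Classical.propDecidable

/-! Lift `f` to a homeomorphism `h` of the universal cover `w ↦ z' + exp w` of `ℂ ∖ {z'}` by lifting
the isotopy. Linking numbers with `z'` are read off from `h`, and so is `α / τ`, as the mean number
of sheets by which an orbit climbs before it returns to a lift of the free disc `U`. Suppose that an
integer `p` with `M < |p|` lies strictly between two values of `α / τ`. Since the linking numbers of
the fixed points are bounded by `M`, the lift shifted by `-p` turns has no fixed point: it is a
Brouwer homeomorphism. The first returns to the lifts of `U` climb for one of the two points and
descend for the other, so they form a closed chain of free discs. As in Franks' lemma, pushing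
inside these discs turns the chain into a periodic orbit of another Brouwer homeomorphism, which
contradicts Brouwer's theorem. Hence no such `p` exists, and the values of `α / τ` differ by at most
`2 * M + 2`. -/

section RotationBounds

open Complex
open scoped NNReal Function Real

section Logarithms

variable {A : Type*} [TopologicalSpace A]

lemma exists_log_homotopy_s13 {K : unitInterval × A → ℂ} (hK : Continuous K) (hK0 : ∀ p, K p ≠ 0)
    {l : A → ℂ} (hl : Continuous l) (hKl : ∀ a, exp (l a) = K (0, a)) :
    ∃ L : unitInterval × A → ℂ,
      Continuous L ∧ (∀ p, exp (L p) = K p) ∧ ∀ a, L (0, a) = l a := by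
  let H : C(unitInterval × A, {z : ℂ // z ≠ 0}) := ⟨fun p => ⟨K p, hK0 p⟩, by fun_prop⟩
  have hH : ∀ a, H (0, a) = ⟨exp (l a), exp_ne_zero _⟩ := fun a => Subtype.ext (hKl a).symm
  let L := isCoveringMap_exp.liftHomotopy H ⟨l, hl⟩ hH
  exact ⟨L, L.continuous,
    fun p => congrArg Subtype.val (congrFun (isCoveringMap_exp.liftHomotopy_lifts H ⟨l, hl⟩ hH) p),
    isCoveringMap_exp.liftHomotopy_zero H ⟨l, hl⟩ hH⟩

lemma exists_continuous_log_of_eq_at [SimplyConnectedSpace A] [LocallyPathConnectedSpace A]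
    {g : A → ℂ} (hg : Continuous g) (hg0 : ∀ a, g a ≠ 0) {a₀ : A} {w₀ : ℂ} (hw₀ : exp w₀ = g a₀) :
    ∃ l : A → ℂ, Continuous l ∧ l a₀ = w₀ ∧ ∀ a, exp (l a) = g a := by
  obtain ⟨l, ⟨hl₀, hl⟩, -⟩ := isCoveringMapOn_exp.existsUnique_continuousMap_lifts
    (f := ⟨g, hg⟩) (a₀ := a₀) (e₀ := w₀) hw₀ hg0
  exact ⟨l, l.continuous, hl₀, congrFun hl⟩

lemma exists_continuous_log_s13 [SimplyConnectedSpace A] [LocallyPathConnectedSpace A] {g : A → ℂ}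
    (hg : Continuous g) (hg0 : ∀ a, g a ≠ 0) :
    ∃ l : A → ℂ, Continuous l ∧ ∀ a, exp (l a) = g a := by
  obtain ⟨a₀⟩ : Nonempty A := inferInstance
  obtain ⟨l, hl, -, hexp⟩ := exists_continuous_log_of_eq_at hg hg0 (exp_log (hg0 a₀))
  exact ⟨l, hl, hexp⟩

variable [PreconnectedSpace A] {l₁ l₂ : A → ℂ}

lemma log_eq_of_eq_at (h₁ : Continuous l₁) (h₂ : Continuous l₂)
    (hexp : ∀ a, exp (l₁ a) = exp (l₂ a)) {a : A} (ha : l₁ a = l₂ a) : l₁ = l₂ :=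
  isCoveringMap_exp.eq_of_comp_eq h₁ h₂ (funext fun x => Subtype.ext (hexp x)) a ha

lemma log_sub_log_eq (h₁ : Continuous l₁) (h₂ : Continuous l₂)
    (hexp : ∀ a, exp (l₁ a) = exp (l₂ a)) (a b : A) : l₁ b - l₁ a = l₂ b - l₂ a := by
  have heq : l₁ = fun x => l₂ x + (l₁ a - l₂ a) :=
    log_eq_of_eq_at h₁ (by fun_prop)
      (fun x => by rw [exp_add, exp_sub, hexp a, div_self (exp_ne_zero _), mul_one, hexp x])
      (a := a) (by ring)
  linear_combination congrFun heq b

end Logarithms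

/-- The slopes of the plane homeomorphism `h` have a continuous logarithm off the diagonal that is
symmetric in the two points. This is the form in which preservation of orientation enters: it holds
for every homeomorphism isotopic to the identity. -/
def HasSymmLogSlope (h : ℂ ≃ₜ ℂ) : Prop :=
  ∃ E : ℂ → ℂ → ℂ, ContinuousOn (fun p : ℂ × ℂ => E p.1 p.2) {p | p.1 ≠ p.2} ∧
    (∀ x y, x ≠ y → h x - h y = (x - y) * exp (E x y)) ∧ ∀ x y, x ≠ y → E x y = E y x

namespace HasSymmLogSlope

variable {g h : ℂ ≃ₜ ℂ}

lemma refl : HasSymmLogSlope (Homeomorph.refl ℂ) :=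
  ⟨fun _ _ => 0, continuousOn_const, by simp, by simp⟩

lemma addRight (c : ℂ) : HasSymmLogSlope (Homeomorph.addRight c) :=
  ⟨fun _ _ => 0, continuousOn_const, by simp, by simp⟩

lemma trans (hg : HasSymmLogSlope g) (hh : HasSymmLogSlope h) : HasSymmLogSlope (g.trans h) := by
  obtain ⟨E, hE, hgE, hEsymm⟩ := hg
  obtain ⟨D, hD, hhD, hDsymm⟩ := hh
  refine ⟨fun x y => E x y + D (g x) (g y), hE.add ?_, fun x y hxy => ?_, fun x y hxy => ?_⟩
  · exact hD.comp (f := fun p : ℂ × ℂ => (g p.1, g p.2)) (by fun_prop) fun p hp => g.injective.ne hp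
  · rw [Homeomorph.trans_apply, Homeomorph.trans_apply, hhD _ _ (g.injective.ne hxy), hgE _ _ hxy,
      exp_add, mul_assoc]
  · simp only [hEsymm _ _ hxy, hDsymm _ _ (g.injective.ne hxy)]

lemma symm (hg : HasSymmLogSlope g) : HasSymmLogSlope g.symm := by
  obtain ⟨E, hE, hgE, hEsymm⟩ := hg
  refine ⟨fun x y => -E (g.symm x) (g.symm y), ContinuousOn.neg ?_, fun x y hxy => ?_,
    fun x y hxy => ?_⟩
  · exact hE.comp (f := fun p : ℂ × ℂ => (g.symm p.1, g.symm p.2)) (by fun_prop)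
      fun p hp => g.symm.injective.ne hp
  · have hslope := hgE _ _ (g.symm.injective.ne hxy)
    rw [g.apply_symm_apply, g.apply_symm_apply] at hslope
    rw [hslope, mul_assoc, ← exp_add, add_neg_cancel, exp_zero, mul_one]
  · simp only [hEsymm _ _ (g.symm.injective.ne hxy)]

lemma of_slope_mem_slitPlane
    (hslit : ∀ x y, x ≠ y → (h x - h y) / (x - y) ∈ slitPlane) : HasSymmLogSlope h := by
  refine ⟨fun x y => log ((h x - h y) / (x - y)), ?_, fun x y hxy => ?_, fun x y _ => ?_⟩
  · exact ((by fun_prop : ContinuousOn _ _).div (by fun_prop) fun p hp => sub_ne_zero.2 hp).clog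
      fun p hp => hslit _ _ hp
  · rw [exp_log (slitPlane_ne_zero (hslit _ _ hxy)), mul_div_cancel₀ _ (sub_ne_zero.2 hxy)]
  · beta_reduce
    rw [← neg_sub (h y), ← neg_sub y, neg_div_neg_eq]

end HasSymmLogSlope

/-- Brouwer homeomorphisms: orientation-preserving homeomorphisms of the plane without fixed
points. -/
structure IsBrouwer (h : ℂ ≃ₜ ℂ) : Prop where
  hasSymmLogSlope : HasSymmLogSlope h
  apply_ne : ∀ x, h x ≠ x

lemma IsBrouwer.apply_apply_ne {h : ℂ ≃ₜ ℂ} (hh : IsBrouwer h) (x : ℂ) : h (h x) ≠ x := by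
  intro hx
  obtain ⟨⟨E, hE, hhE, hEsymm⟩, hfree⟩ := hh
  obtain ⟨v, hv, hexpv⟩ := exists_continuous_log_s13 (g := fun x => h x - x) (by fun_prop)
    fun x => sub_ne_zero.2 (hfree x)
  have hE' : Continuous fun x => E (h x) x :=
    hE.comp_continuous (f := fun x => (h x, x)) (by fun_prop) hfree
  -- Moving the vector `h x - x` along the orbit turns it by `E (h x) x`, up to a constant.
  have hconst := log_sub_log_eq (l₁ := fun x => v (h x)) (l₂ := fun x => v x + E (h x) x)
    (by fun_prop) (hv.add hE') (fun a => by rw [exp_add, hexpv, hexpv, hhE _ _ (hfree a)]) x (h x)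
  simp only [hx, hEsymm x (h x) (hfree x).symm] at hconst
  have hveq : v (h x) = v x := by linear_combination (-1 / 2) * hconst
  have hdisp := hexpv (h x)
  rw [hveq, hexpv, hx] at hdisp
  exact hfree x (by linear_combination (1 / 2) * hdisp)

section Pushes

lemma exists_homeomorph_add_of_lipschitz {E : Type*} [NormedAddCommGroup E] [NormedSpace ℝ E]
    [CompleteSpace E] {K : ℝ≥0} {g : E → E} (hg : LipschitzWith K g) (hK : K < 1) :
    ∃ φ : E ≃ₜ E, ∀ x, φ x = x + g x := by
  have happrox : ApproximatesLinearOn (fun x => x + g x)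
      (ContinuousLinearEquiv.refl ℝ E : E →L[ℝ] E) univ K := by
    intro x _ y _
    simpa [add_sub_add_comm] using hg.norm_sub_le x y
  refine ⟨happrox.toHomeomorph _ ?_, fun x => rfl⟩
  rcases subsingleton_or_nontrivial E with hE | hE
  · exact .inl hE
  · right
    have hone : ‖((ContinuousLinearEquiv.refl ℝ E).symm : E →L[ℝ] E)‖₊ = 1 :=
      NNReal.eq ContinuousLinearMap.norm_id
    rwa [hone, inv_one]

lemma HasSymmLogSlope.of_add_lipschitz {K : ℝ≥0} {g : ℂ → ℂ} (hg : LipschitzWith K g)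
    (hK : K < 1) {φ : ℂ ≃ₜ ℂ} (hφ : ∀ x, φ x = x + g x) : HasSymmLogSlope φ := by
  refine of_slope_mem_slitPlane fun x y hxy => ?_
  have hne : x - y ≠ 0 := sub_ne_zero.2 hxy
  have hslope : (φ x - φ y) / (x - y) = 1 + (g x - g y) / (x - y) := by
    rw [hφ, hφ]; field_simp; ring
  have hsmall : ‖(g x - g y) / (x - y)‖ < 1 := by
    rw [norm_div, div_lt_one (norm_pos_iff.2 hne)]
    exact (hg.norm_sub_le x y).trans_lt
      (mul_lt_of_lt_one_left (norm_pos_iff.2 hne) (by exact_mod_cast hK))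
  left
  rw [hslope, add_re, one_re]
  linarith [neg_lt_of_abs_lt ((abs_re_le_norm _).trans_lt hsmall)]

lemma mapsTo_of_eqOn_id_compl {X : Type*} {φ : X → X} (hφ : φ.Injective) {W : Set X}
    (hW : EqOn φ id Wᶜ) : MapsTo φ W W := by
  intro x hx
  by_contra hφx
  exact hφx (by rwa [hφ (hW hφx)])

lemma eventually_exists_push {W : Set ℂ} (hW : IsOpen W) {a : ℂ} (ha : a ∈ W) :
    ∀ᶠ b in 𝓝 a, ∃ φ : ℂ ≃ₜ ℂ, HasSymmLogSlope φ ∧ φ a = b ∧ EqOn φ id Wᶜ := by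
  obtain ⟨r, hr, hrW⟩ := Metric.isOpen_iff.1 hW a ha
  filter_upwards [Metric.ball_mem_nhds a hr] with b hb
  have hsmul : LipschitzWith ‖b - a‖₊ fun c : ℝ≥0 => c • (b - a) :=
    LipschitzWith.of_dist_le_mul fun c d => by
      rw [dist_eq_norm, NNReal.smul_def, NNReal.smul_def, ← sub_smul, norm_smul, NNReal.dist_eq,
        Real.norm_eq_abs, coe_nnnorm, mul_comm]
  have hg := hsmul.comp (lipschitzWith_thickenedIndicator hr {a})
  have hlt : ‖b - a‖₊ * r.toNNReal⁻¹ < 1 := by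
    rw [← div_eq_mul_inv, div_lt_one (Real.toNNReal_pos.2 hr), ← NNReal.coe_lt_coe,
      Real.coe_toNNReal _ hr.le]
    simpa [dist_eq_norm] using hb
  obtain ⟨φ, hφ⟩ := exists_homeomorph_add_of_lipschitz hg hlt
  refine ⟨φ, .of_add_lipschitz hg hlt hφ, ?_, fun x hx => ?_⟩
  · simp [hφ, thickenedIndicator_one hr {a} (mem_singleton a)]
  · have hxa : x ∉ thickening r {a} := by
      rw [thickening_singleton]
      exact fun hxr => hx (hrW hxr)
    simp [hφ, thickenedIndicator_zero hr {a} hxa]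

lemma exists_push {W : Set ℂ} (hW : IsOpen W) (hWc : IsPreconnected W) {a b : ℂ} (ha : a ∈ W)
    (hb : b ∈ W) : ∃ φ : ℂ ≃ₜ ℂ, HasSymmLogSlope φ ∧ φ a = b ∧ EqOn φ id Wᶜ := by
  refine hWc.induction₂ (fun a b => ∃ φ : ℂ ≃ₜ ℂ, HasSymmLogSlope φ ∧ φ a = b ∧ EqOn φ id Wᶜ)
    (fun x hx => nhdsWithin_le_nhds (eventually_exists_push hW hx)) ?_ ?_ ha hb
  · rintro x y z - - - ⟨φ, hφ, hφx, hφW⟩ ⟨ψ, hψ, hψy, hψW⟩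
    refine ⟨φ.trans ψ, hφ.trans hψ, by simp [hφx, hψy], fun w hw => ?_⟩
    rw [Homeomorph.trans_apply, hφW hw, id, hψW hw, id]
  · rintro x y - - ⟨φ, hφ, hφx, hφW⟩
    refine ⟨φ.symm, hφ.symm, by simp [← hφx], fun w hw => ?_⟩
    rw [Homeomorph.symm_apply_eq, id, hφW hw, id]

end Pushes

section Closing

lemma iterate_comp_eq_of_eqOn_id {X : Type*} {Φ g : X → X} {V : Set X} (hΦ : EqOn Φ id Vᶜ) {x : X}
    {n : ℕ} (hn : 0 < n) (hV : ∀ k, 0 < k → k < n → g^[k] x ∉ V) :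
    (Φ ∘ g)^[n] x = Φ (g^[n] x) := by
  induction n, hn using Nat.le_induction with
  | base => rfl
  | succ n hn ih =>
    rw [Function.iterate_succ_apply', ih fun k hk hkn => hV k hk (hkn.trans n.lt_succ_self),
      hΦ (hV n hn n.lt_succ_self), id, Function.comp_apply, ← Function.iterate_succ_apply' g]

variable {ι : Type*} {g Φ : ℂ ≃ₜ ℂ} {W : ι → Set ℂ}

lemma IsBrouwer.trans_of_mapsTo (hg : IsBrouwer g) (hfree : ∀ i, MapsTo g (W i) (W i)ᶜ)
    (hΦ : HasSymmLogSlope Φ) (hΦW : ∀ i, MapsTo Φ (W i) (W i)) (hid : EqOn Φ id (⋃ i, W i)ᶜ) :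
    IsBrouwer (g.trans Φ) := by
  refine ⟨hg.hasSymmLogSlope.trans hΦ, fun x (hx : Φ (g x) = x) => ?_⟩
  by_cases hgx : g x ∈ ⋃ i, W i
  · obtain ⟨i, hi⟩ := mem_iUnion.1 hgx
    exact hfree i (hx ▸ hΦW i hi) hi
  · exact hg.apply_ne x ((hid hgx).symm.trans hx)

lemma exists_simultaneous_push [Finite ι] (hWo : ∀ i, IsOpen (W i))
    (hWc : ∀ i, IsPreconnected (W i)) (hWd : Pairwise (Disjoint on W)) {a b : ι → ℂ}
    (ha : ∀ i, a i ∈ W i) (hb : ∀ i, b i ∈ W i) :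
    ∃ Φ : ℂ ≃ₜ ℂ, HasSymmLogSlope Φ ∧ (∀ i, Φ (a i) = b i) ∧ (∀ i, MapsTo Φ (W i) (W i)) ∧
      EqOn Φ id (⋃ i, W i)ᶜ := by
  have hmem {i j : ι} {z : ℂ} (hi : z ∈ W i) (hj : z ∈ W j) : i = j :=
    hWd.eq (not_disjoint_iff.2 ⟨z, hi, hj⟩)
  suffices hfinset : ∀ S : Finset ι, ∃ Φ : ℂ ≃ₜ ℂ, HasSymmLogSlope Φ ∧ (∀ i ∈ S, Φ (a i) = b i) ∧
      (∀ i, MapsTo Φ (W i) (W i)) ∧ EqOn Φ id (⋃ i ∈ S, W i)ᶜ by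
    cases nonempty_fintype ι
    simpa using hfinset Finset.univ
  intro S
  induction S using Finset.induction_on with
  | empty => exact ⟨.refl ℂ, .refl, by simp, fun i => mapsTo_id _, fun _ _ => rfl⟩
  | insert k S hk ih =>
    obtain ⟨Φ, hΦ, hab, hΦW, hid⟩ := ih
    obtain ⟨φ, hφ, hφa, hφid⟩ := exists_push (hWo k) (hWc k) (ha k) (hb k)
    have hφW : ∀ i, MapsTo φ (W i) (W i) := fun i x hx => by
      by_cases hxk : x ∈ W k
      · rw [hmem hx hxk]
        exact mapsTo_of_eqOn_id_compl φ.injective hφid hxk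
      · rwa [hφid hxk]
    refine ⟨Φ.trans φ, hΦ.trans hφ, fun i hi => ?_, fun i => (hφW i).comp (hΦW i), fun x hx => ?_⟩
    · rw [Homeomorph.trans_apply]
      rcases Finset.mem_insert.1 hi with rfl | hiS
      · rw [hid, id, hφa]
        simp only [mem_compl_iff, mem_iUnion₂, not_exists]
        exact fun j hj haj => hk (hmem (ha i) haj ▸ hj)
      · rw [hab i hiS, hφid fun hbk => hk (hmem (hb i) hbk ▸ hiS), id]
    · rw [Finset.set_biUnion_insert, compl_union] at hx
      rw [Homeomorph.trans_apply, hid hx.2, id, hφid hx.1, id]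

lemma IsBrouwer.exists_closing_chain [Finite ι] (hg : IsBrouwer g) (hWo : ∀ i, IsOpen (W i))
    (hWc : ∀ i, IsPreconnected (W i)) (hWd : Pairwise (Disjoint on W))
    (hfree : ∀ i, MapsTo g (W i) (W i)ᶜ) (σ : Equiv.Perm ι) {d : ι → ℂ} {N : ι → ℕ}
    (hd : ∀ i, d i ∈ W i) (hN : ∀ i, 0 < N i) (hret : ∀ i, g^[N i] (d i) ∈ W (σ i))
    (hfirst : ∀ i k, 0 < k → k < N i → g^[k] (d i) ∉ ⋃ j, W j) :
    ∃ g' : ℂ ≃ₜ ℂ, IsBrouwer g' ∧ ∀ i, g'^[N i] (d i) = d (σ i) := by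
  obtain ⟨Φ, hΦ, hΦret, hΦW, hid⟩ := exists_simultaneous_push hWo hWc hWd
    (a := fun i => g^[N (σ.symm i)] (d (σ.symm i))) (b := d)
    (fun i => by simpa only [σ.apply_symm_apply] using hret (σ.symm i)) hd
  refine ⟨g.trans Φ, hg.trans_of_mapsTo hfree hΦ hΦW hid, fun i => ?_⟩
  exact (iterate_comp_eq_of_eqOn_id hid (hN i) (hfirst i)).trans
    (by simpa only [σ.symm_apply_apply] using hΦret (σ i))

lemma IsBrouwer.exists_closing (hg : IsBrouwer g) {W : Set ℂ} (hWo : IsOpen W)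
    (hWc : IsPreconnected W) (hfree : MapsTo g W Wᶜ) {x : ℂ} (hx : x ∈ W) {n : ℕ} (hn : 0 < n)
    (hret : g^[n] x ∈ W) (hfirst : ∀ k, 0 < k → k < n → g^[k] x ∉ W) :
    ∃ g' : ℂ ≃ₜ ℂ, IsBrouwer g' ∧ g'^[n] x = x := by
  obtain ⟨g', hg', hper⟩ := hg.exists_closing_chain (W := fun _ : Unit => W) (fun _ => hWo)
    (fun _ => hWc) (Subsingleton.pairwise) (fun _ => hfree) 1 (d := fun _ => x) (N := fun _ => n)
    (fun _ => hx) (fun _ => hn) (fun _ => hret) (fun _ => by simpa only [iUnion_const] using hfirst)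
  exact ⟨g', hg', hper ()⟩

end Closing

section FreeSets

variable {E : Type*} [NormedAddCommGroup E] [NormedSpace ℝ E] {S O : Set E}

lemma exists_open_convex_free_superset (hS : IsCompact S) (hSc : Convex ℝ S) {h : E → E}
    (hh : Continuous h) (hfree : MapsTo h S Sᶜ) (hO : IsOpen O) (hSO : S ⊆ O) :
    ∃ W, IsOpen W ∧ Convex ℝ W ∧ S ⊆ W ∧ W ⊆ O ∧ MapsTo h W Wᶜ := by
  obtain ⟨A, B, hA, hB, hSA, hSB, hAB⟩ := SeparatedNhds.of_isCompact_isCompact hS (hS.image hh)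
    (disjoint_right.2 (forall_mem_image.2 hfree))
  obtain ⟨δ, hδ, hsub⟩ := hS.exists_thickening_subset_open ((hO.inter hA).inter (hB.preimage hh))
    fun x hx => ⟨⟨hSO hx, hSA hx⟩, hSB (mem_image_of_mem h hx)⟩
  exact ⟨thickening δ S, isOpen_thickening, hSc.thickening δ, self_subset_thickening hδ S,
    fun x hx => (hsub hx).1.1,
    fun x hx hhx => disjoint_left.1 hAB (hsub hhx).1.2 (hsub hx).2⟩

lemma exists_open_convex_free_superset_avoiding_iterates (hS : IsCompact S) (hSc : Convex ℝ S)
    {h : E → E} (hh : Continuous h) (hfree : MapsTo h S Sᶜ) (hO : IsOpen O) (hSO : S ⊆ O) {x : E}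
    {n : ℕ} (havoid : ∀ k, 0 < k → k < n → h^[k] x ∉ S) :
    ∃ W, IsOpen W ∧ Convex ℝ W ∧ S ⊆ W ∧ W ⊆ O ∧ MapsTo h W Wᶜ ∧
      ∀ k, 0 < k → k < n → h^[k] x ∉ W := by
  let orbit := (fun k => h^[k] x) '' Ioo 0 n
  have horbit : IsOpen orbitᶜ := ((finite_Ioo 0 n).image _).isClosed.isOpen_compl
  have hSorbit : S ⊆ orbitᶜ :=
    subset_compl_comm.1 (image_subset_iff.2 fun k hk => havoid k hk.1 hk.2)
  obtain ⟨W, hWo, hWc, hSW, hWO, hWfree⟩ := exists_open_convex_free_superset hS hSc hh hfree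
    (hO.inter horbit) (subset_inter hSO hSorbit)
  exact ⟨W, hWo, hWc, hSW, fun z hz => (hWO hz).1, hWfree,
    fun k hk hkn hkW => (hWO hkW).2 ⟨k, ⟨hk, hkn⟩, rfl⟩⟩

lemma isCompact_segment (x y : E) : IsCompact (segment ℝ x y) := by
  rw [segment_eq_image_lineMap]
  exact isCompact_Icc.image (by fun_prop)

lemma eq_of_mem_segment_of_notMem_ball {c p q z : E} {r : ℝ} (hp : p ∈ ball c r)
    (hq : q ∈ closedBall c r) (hz : z ∈ segment ℝ p q) (hzr : z ∉ ball c r) : z = q := by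
  rcases insert_endpoints_openSegment ℝ p q ▸ hz with rfl | rfl | hz
  · exact absurd hp hzr
  · rfl
  · refine absurd (?_ : z ∈ ball c r) hzr
    have hr : r ≠ 0 := (pos_of_mem_ball hp).ne'
    rw [← interior_closedBall c hr] at hp ⊢
    exact (convex_closedBall c r).openSegment_interior_self_subset_interior hp hq hz

end FreeSets

section Brouwer

lemma IsBrouwer.exists_closing_of_convex {h : ℂ ≃ₜ ℂ} (hh : IsBrouwer h) {S : Set ℂ}
    (hS : IsCompact S) (hSc : Convex ℝ S) (hfree : MapsTo h S Sᶜ) {x : ℂ} (hx : x ∈ S) {n : ℕ}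
    (hn : 0 < n) (hret : h^[n] x ∈ S) (hfirst : ∀ k, 0 < k → k < n → h^[k] x ∉ S) :
    ∃ g : ℂ ≃ₜ ℂ, IsBrouwer g ∧ g^[n] x = x := by
  obtain ⟨W, hWo, hWc, hSW, -, hWfree, hWfirst⟩ :=
    exists_open_convex_free_superset_avoiding_iterates hS hSc h.continuous hfree isOpen_univ
      (subset_univ S) hfirst
  exact hh.exists_closing hWo hWc.isPreconnected hWfree (hSW hx) hn (hSW hret) hWfirst

lemma IsBrouwer.iterate_notMem_of_convex {h : ℂ ≃ₜ ℂ} (hh : IsBrouwer h) {n : ℕ}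
    (hper : ∀ k, 0 < k → k < n → ∀ g : ℂ ≃ₜ ℂ, IsBrouwer g → ∀ x, g^[k] x ≠ x) {S : Set ℂ}
    (hS : IsCompact S) (hSc : Convex ℝ S) (hfree : MapsTo h S Sᶜ) {x : ℂ} (hx : x ∈ S) {k : ℕ}
    (hk : 0 < k) (hkn : k < n) : h^[k] x ∉ S := by
  induction k using Nat.strong_induction_on with
  | _ k ih =>
    intro hret
    obtain ⟨g, hg, hgx⟩ := hh.exists_closing_of_convex hS hSc hfree hx hk hret
      fun i hi hik => ih i hik hi (hik.trans hkn)
    exact hper k hk hkn g hg x hgx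

/-- `r` is the radius of the largest open disc centred at `x` that is disjoint from its image
under `h`, so that the images of the closed disc and of its boundary first meet at this radius. -/
structure IsCriticalRadius (h : ℂ ≃ₜ ℂ) (x : ℂ) (r : ℝ) : Prop where
  pos : 0 < r
  mapsTo_ball : MapsTo h (ball x r) (closedBall x r)ᶜ
  mapsTo_closedBall : MapsTo h (closedBall x r) (ball x r)ᶜ
  exists_mem_closedBall : ∃ y ∈ closedBall x r, h y ∈ closedBall x r

lemma exists_isCriticalRadius {h : ℂ ≃ₜ ℂ} (hfix : ∀ x, h x ≠ x) (x : ℂ) :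
    ∃ r, IsCriticalRadius h x r := by
  obtain ⟨y, hy⟩ := Continuous.exists_forall_le (f := fun u => max (dist u x) (dist (h u) x))
    (by fun_prop)
    (tendsto_atTop_mono (fun u => le_max_left _ _) (tendsto_dist_right_cocompact_atTop x))
  set r := max (dist y x) (dist (h y) x)
  have hr : 0 < r := by
    by_contra! hr
    rw [max_le_iff, dist_le_zero, dist_le_zero] at hr
    exact hfix y (hr.2.trans hr.1.symm)
  have hdisj : Disjoint (h '' ball x r) (ball x r) := by
    rw [disjoint_left, forall_mem_image]
    exact fun u hu hhu => (hy u).not_gt (max_lt hu hhu)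
  have hcl : closure (ball x r) = closedBall x r := closure_ball x hr.ne'
  have hopen : IsOpen (h '' ball x r) := h.isOpenMap _ isOpen_ball
  refine ⟨r, hr, fun u hu => ?_, fun u hu => ?_, y, mem_closedBall.2 (le_max_left _ _),
    mem_closedBall.2 (le_max_right _ _)⟩
  · have := hdisj.closure_right hopen
    rw [hcl] at this
    exact disjoint_left.1 this (mem_image_of_mem h hu)
  · have := hdisj.closure_left isOpen_ball
    rw [← h.image_closure, hcl] at this
    exact disjoint_left.1 this (mem_image_of_mem h hu)

lemma IsCriticalRadius.mapsTo_segment {h : ℂ ≃ₜ ℂ} (hh : IsBrouwer h) {x : ℂ} {r : ℝ}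
    (hr : IsCriticalRadius h x r) {p q : ℂ} (hp : p ∈ ball x r) (hq : q ∈ closedBall x r) :
    MapsTo h (segment ℝ p q) (segment ℝ p q)ᶜ := by
  intro z hz hhz
  have hsub : segment ℝ p q ⊆ closedBall x r :=
    (convex_closedBall x r).segment_subset (ball_subset_closedBall hp) hq
  have hzq : z = q :=
    eq_of_mem_segment_of_notMem_ball hp hq hz fun hzr => hr.mapsTo_ball hzr (hsub hhz)
  have hhzq : h z = q :=
    eq_of_mem_segment_of_notMem_ball hp hq hhz (hr.mapsTo_closedBall (hsub hz))
  exact hh.apply_ne z (hhzq.trans hzq.symm)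

lemma IsCriticalRadius.apply_apply_notMem_segment {h : ℂ ≃ₜ ℂ} (hh : IsBrouwer h) {x : ℂ} {r : ℝ}
    (hr : IsCriticalRadius h x r) {y : ℂ} (hy : y ∈ closedBall x r) (hhy : h y ∈ closedBall x r) :
    MapsTo (h ∘ h) (segment ℝ x y) (segment ℝ x (h y))ᶜ := by
  intro u hu hw
  have hx : x ∈ ball x r := mem_ball_self hr.pos
  have hconv : ∀ q ∈ closedBall x r, segment ℝ x q ⊆ closedBall x r := fun q =>
    (convex_closedBall x r).segment_subset (ball_subset_closedBall hx)
  have hfree : MapsTo h (segment ℝ u (h (h u))) (segment ℝ u (h (h u)))ᶜ := by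
    by_cases hur : u ∈ ball x r
    · exact hr.mapsTo_segment hh hur (hconv _ hhy hw)
    by_cases hwr : h (h u) ∈ ball x r
    · rw [segment_symm]
      exact hr.mapsTo_segment hh hwr (hconv _ hy hu)
    · obtain rfl := eq_of_mem_segment_of_notMem_ball hx hy hu hur
      exact absurd (eq_of_mem_segment_of_notMem_ball hx hhy hw hwr) (hh.apply_ne _)
  have hhu : h u ∉ segment ℝ u (h (h u)) := hfree (left_mem_segment ℝ _ _)
  obtain ⟨g, hg, hgu⟩ := hh.exists_closing_of_convex (isCompact_segment u (h (h u)))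
    (convex_segment _ _) hfree (left_mem_segment ℝ _ _) two_pos (right_mem_segment ℝ _ _)
    fun k hk hk2 => by rwa [show k = 1 by lia]
  exact hg.apply_apply_ne u hgu

/-- Follow `h` by a push from `x` to `h y` supported in `W₁`: the orbit of `h x` then reaches
`h y ∈ h '' W₂` one step early, and it is closed up inside `h '' W₂`. -/
lemma IsBrouwer.exists_closing_shorter {h : ℂ ≃ₜ ℂ} (hh : IsBrouwer h) {n : ℕ} (hn : 0 < n)
    {x y : ℂ} (hper : h^[n + 1] x = x) {W₁ W₂ : Set ℂ} (hW₁o : IsOpen W₁)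
    (hW₁c : IsPreconnected W₁) (hW₁ : MapsTo h W₁ W₁ᶜ) (hW₂o : IsOpen W₂)
    (hW₂c : IsPreconnected W₂) (hW₂ : MapsTo h W₂ W₂ᶜ) (hx₁ : x ∈ W₁) (hy₁ : h y ∈ W₁)
    (hx₂ : x ∈ W₂) (hy₂ : y ∈ W₂) (horbit₁ : ∀ k, 0 < k → k < n + 1 → h^[k] x ∉ W₁)
    (horbit₂ : ∀ k, 0 < k → k < n + 1 → h^[k] x ∉ W₂) (hsq : MapsTo (h ∘ h) W₂ W₁ᶜ) :
    ∃ g : ℂ ≃ₜ ℂ, IsBrouwer g ∧ g^[n] (h x) = h x := by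
  obtain ⟨φ, hφ, hφx, hφid⟩ := exists_push hW₁o hW₁c hx₁ hy₁
  have hg : IsBrouwer (h.trans φ) := hh.trans_of_mapsTo (W := fun _ : Unit => W₁) (fun _ => hW₁) hφ
    (fun _ => mapsTo_of_eqOn_id_compl φ.injective hφid) (by rwa [iUnion_const])
  have hiter : ∀ k, k ≤ n → (h.trans φ)^[k] (h x) = φ (h^[k + 1] x) := fun k hk => by
    have hhx : h x = (h.trans φ) x := (hφid (horbit₁ 1 one_pos (by lia))).symm
    rw [hhx, ← Function.iterate_succ_apply]
    exact iterate_comp_eq_of_eqOn_id hφid k.succ_pos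
      fun i hi hik => horbit₁ i hi (by lia)
  refine hg.exists_closing (h.isOpenMap _ hW₂o) (hW₂c.image _ h.continuous.continuousOn) ?_
    (mem_image_of_mem h hx₂) hn ?_ fun k hk hkn => ?_
  · rintro _ ⟨w, hw, rfl⟩
    have hφw : φ (h (h w)) = h (h w) := hφid (hsq hw)
    rw [Homeomorph.trans_apply, hφw, mem_compl_iff, h.injective.mem_set_image]
    exact hW₂ hw
  · rw [hiter n le_rfl, hper, hφx]
    exact mem_image_of_mem h hy₂
  · rw [hiter k hkn.le, hφid (horbit₁ _ k.succ_pos (by lia)), id, Function.iterate_succ_apply',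
      h.injective.mem_set_image]
    exact horbit₂ k hk (by lia)

theorem IsBrouwer.iterate_ne {h : ℂ ≃ₜ ℂ} (hh : IsBrouwer h) {n : ℕ} (hn : 0 < n) (x : ℂ) :
    h^[n] x ≠ x := by
  induction n using Nat.strong_induction_on generalizing h x with
  | _ n ih =>
  intro hper
  obtain _ | _ | n := n
  · exact hn.ne rfl
  · exact hh.apply_ne x hper
  obtain ⟨r, hr⟩ := exists_isCriticalRadius hh.apply_ne x
  obtain ⟨y, hy, hhy⟩ := hr.exists_mem_closedBall
  have hfree : ∀ q ∈ closedBall x r, MapsTo h (segment ℝ x q) (segment ℝ x q)ᶜ :=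
    fun q => hr.mapsTo_segment hh (mem_ball_self hr.pos)
  have havoid : ∀ q ∈ closedBall x r, ∀ k, 0 < k → k < n + 1 + 1 → h^[k] x ∉ segment ℝ x q :=
    fun q hq k => hh.iterate_notMem_of_convex (fun k hk hkn g hg => ih k hkn hg hk)
      (isCompact_segment x q) (convex_segment x q) (hfree q hq) (left_mem_segment ℝ x q)
  have hsq : Continuous (h ∘ h) := h.continuous.comp h.continuous
  obtain ⟨A, B, hA, hB, hyA, hyB, hAB⟩ := SeparatedNhds.of_isCompact_isCompact
    (isCompact_segment x (h y)) ((isCompact_segment x y).image hsq)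
    (disjoint_right.2 (forall_mem_image.2 (hr.apply_apply_notMem_segment hh hy hhy)))
  obtain ⟨W₁, hW₁o, hW₁c, hyW₁, hW₁A, hfree₁, havoid₁⟩ :=
    exists_open_convex_free_superset_avoiding_iterates (isCompact_segment x (h y))
      (convex_segment _ _) h.continuous (hfree _ hhy) hA hyA (havoid _ hhy)
  obtain ⟨W₂, hW₂o, hW₂c, hyW₂, hW₂B, hfree₂, havoid₂⟩ :=
    exists_open_convex_free_superset_avoiding_iterates (isCompact_segment x y)
      (convex_segment _ _) h.continuous (hfree _ hy) (hB.preimage hsq) (image_subset_iff.1 hyB)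
      (havoid _ hy)
  obtain ⟨g, hg, hgx⟩ := hh.exists_closing_shorter n.succ_pos hper hW₁o hW₁c.isPreconnected hfree₁
    hW₂o hW₂c.isPreconnected hfree₂ (hyW₁ (left_mem_segment ℝ _ _))
    (hyW₁ (right_mem_segment ℝ _ _)) (hyW₂ (left_mem_segment ℝ _ _))
    (hyW₂ (right_mem_segment ℝ _ _)) havoid₁ havoid₂
    fun u hu hu₁ => disjoint_left.1 hAB (hW₁A hu₁) (hW₂B hu)
  exact ih (n + 1) (n + 1).lt_succ_self hg n.succ_pos _ hgx

end Brouwer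

lemma exists_iterate_eq_of_perm {X ι : Type*} [Finite ι] {g : X → X} {d : ι → X} {N : ι → ℕ}
    (hN : ∀ i, 0 < N i) (σ : Equiv.Perm ι) (hchain : ∀ i, g^[N i] (d i) = d (σ i)) (i : ι) :
    ∃ T, 0 < T ∧ g^[T] (d i) = d i := by
  have hreach : ∀ q : ℕ, ∃ T, q ≤ T ∧ g^[T] (d i) = d ((σ ^ q) i) := fun q => by
    induction q with
    | zero => exact ⟨0, le_rfl, rfl⟩
    | succ q ih =>
      obtain ⟨T, hqT, hT⟩ := ih
      refine ⟨N ((σ ^ q) i) + T, by have := hN ((σ ^ q) i); lia, ?_⟩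
      rw [Function.iterate_add_apply, hT, hchain, pow_succ', Equiv.Perm.mul_apply]
  obtain ⟨T, hqT, hT⟩ := hreach (orderOf σ)
  exact ⟨T, (orderOf_pos σ).trans_le hqT, by rwa [pow_orderOf_eq_one] at hT⟩

theorem IsBrouwer.not_exists_free_disc_cycle {ι : Type*} [Finite ι] [Nonempty ι] {g : ℂ ≃ₜ ℂ}
    (hg : IsBrouwer g) {W : ι → Set ℂ} (hWo : ∀ i, IsOpen (W i)) (hWc : ∀ i, IsPreconnected (W i))
    (hWd : Pairwise (Disjoint on W)) (hfree : ∀ i, MapsTo g (W i) (W i)ᶜ) (σ : Equiv.Perm ι)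
    {d : ι → ℂ} {N : ι → ℕ} (hd : ∀ i, d i ∈ W i) (hN : ∀ i, 0 < N i)
    (hfirst : ∀ i k, 0 < k → k < N i → g^[k] (d i) ∉ ⋃ j, W j) :
    ¬∀ i, g^[N i] (d i) ∈ W (σ i) := by
  intro hret
  obtain ⟨g', hg', hchain⟩ := hg.exists_closing_chain hWo hWc hWd hfree σ hd hN hret hfirst
  obtain ⟨i⟩ := ‹Nonempty ι›
  obtain ⟨T, hT, hper⟩ := exists_iterate_eq_of_perm hN σ hchain i
  exact hg'.iterate_ne hT _ hper

lemma exists_perm_Ico {m₁ m₂ : ℤ} (hm₁ : m₁ < 0) (hm₂ : 0 < m₂) :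
    ∃ σ : Equiv.Perm (Ico m₁ m₂), ∀ j, (σ j : ℤ) = if 0 ≤ (j : ℤ) then j + m₁ else j + m₂ := by
  let s (j : Ico m₁ m₂) : Ico m₁ m₂ :=
    ⟨if 0 ≤ (j : ℤ) then j + m₁ else j + m₂, by
      obtain ⟨j, hj₁, hj₂⟩ := j
      constructor <;> split_ifs <;> lia⟩
  have hs : s.Injective := by
    rintro ⟨i, hi₁, hi₂⟩ ⟨j, hj₁, hj₂⟩ hij
    have hval : (if 0 ≤ i then i + m₁ else i + m₂) = if 0 ≤ j then j + m₁ else j + m₂ :=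
      congrArg Subtype.val hij
    exact Subtype.ext (by split_ifs at hval <;> lia)
  exact ⟨.ofBijective s (Finite.injective_iff_bijective.1 hs), fun j => rfl⟩

theorem IsBrouwer.not_exists_opposite_returns {g : ℂ ≃ₜ ℂ} (hg : IsBrouwer g) {W : ℤ → Set ℂ}
    (hWo : ∀ j, IsOpen (W j)) (hWc : ∀ j, IsPreconnected (W j)) (hWd : Pairwise (Disjoint on W))
    (hfree : ∀ j, MapsTo g (W j) (W j)ᶜ) {d₁ d₂ : ℤ → ℂ} (hd₁ : ∀ j, d₁ j ∈ W j)
    (hd₂ : ∀ j, d₂ j ∈ W j) {N₁ N₂ : ℕ} (hN₁ : 0 < N₁) (hN₂ : 0 < N₂)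
    (hfirst₁ : ∀ j k, 0 < k → k < N₁ → g^[k] (d₁ j) ∉ ⋃ i, W i)
    (hfirst₂ : ∀ j k, 0 < k → k < N₂ → g^[k] (d₂ j) ∉ ⋃ i, W i) {m₁ m₂ : ℤ}
    (hm₁ : m₁ < 0) (hm₂ : 0 < m₂) (hret₁ : ∀ j, g^[N₁] (d₁ j) ∈ W (j + m₁)) :
    ¬∀ j, g^[N₂] (d₂ j) ∈ W (j + m₂) := by
  intro hret₂
  -- Moving down from the nonnegative discs and up from the negative ones permutes the discs with
  -- index in `[m₁, m₂)`, which closes up a cycle.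
  obtain ⟨σ, hσ⟩ := exists_perm_Ico hm₁ hm₂
  have : Nonempty (Ico m₁ m₂) := ⟨⟨0, hm₁.le, hm₂⟩⟩
  have hsub : ⋃ i : Ico m₁ m₂, W i ⊆ ⋃ i, W i := iUnion_subset fun i => subset_iUnion W i
  refine hg.not_exists_free_disc_cycle (W := fun i : Ico m₁ m₂ => W i) (fun i => hWo i)
    (fun i => hWc i) (fun i j hij => hWd (Subtype.coe_injective.ne hij)) (fun i => hfree i) σ
    (d := fun i => if 0 ≤ (i : ℤ) then d₁ i else d₂ i)
    (N := fun i => if 0 ≤ (i : ℤ) then N₁ else N₂) ?_ ?_ ?_ ?_ <;> intro i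
  · split_ifs
    exacts [hd₁ i, hd₂ i]
  · split_ifs <;> assumption
  · split_ifs
    exacts [fun k hk hkN hmem => hfirst₁ i k hk hkN (hsub hmem),
      fun k hk hkN hmem => hfirst₂ i k hk hkN (hsub hmem)]
  · rw [hσ]
    split_ifs
    exacts [hret₁ i, hret₂ i]

section Lifts

lemma angVar_eq_of_exp {L : ℝ → ℂ} (hL : ContinuousOn L (Icc 0 1)) {γ : ℝ → ℂ}
    (hγ : ∀ t ∈ Icc (0 : ℝ) 1, exp (L t) = γ t) :
    angVar γ = ((L 1).im - (L 0).im) / (2 * π) := by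
  have hpolar : ∃ θ : ℝ → ℝ, ContinuousOn θ (Icc 0 1) ∧
      ∀ t ∈ Icc (0 : ℝ) 1, γ t = (‖γ t‖ : ℂ) * exp ((θ t : ℂ) * I) := by
    refine ⟨fun t => (L t).im, by fun_prop, fun t ht => ?_⟩
    rw [← hγ t ht, norm_exp, ofReal_exp, ← exp_add, re_add_im]
  obtain ⟨hθ, hγθ⟩ := hpolar.choose_spec
  rw [angVar, dif_pos hpolar]
  set θ := hpolar.choose
  have hθ' : Continuous fun t : unitInterval => θ t := hθ.domRestrict
  have hL' : Continuous fun t : unitInterval => L t := hL.domRestrict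
  have hdiff := log_sub_log_eq (l₁ := fun t : unitInterval => L t)
    (l₂ := fun t : unitInterval => ((L t).re : ℂ) + (θ t : ℂ) * I) hL'
    (.add (continuous_ofReal.comp (continuous_re.comp hL'))
      ((continuous_ofReal.comp hθ').mul continuous_const))
    (fun t => by rw [hγ t t.2, exp_add, ← ofReal_exp, ← norm_exp, hγ t t.2, ← hγθ t t.2]) 0 1
  have him : (L 1).im - (L 0).im = θ 1 - θ 0 := by simpa using congrArg im hdiff
  rw [him]

lemma HIsotopy.zero_apply {f : ℂ ≃ₜ ℂ} (I : HIsotopy f) (x : ℂ) : I.F 0 x = x := by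
  rw [I.zero]; rfl

lemma HIsotopy.zero_symm_apply {f : ℂ ≃ₜ ℂ} (I : HIsotopy f) (x : ℂ) : (I.F 0).symm x = x := by
  rw [I.zero]; rfl

lemma HIsotopy.exists_lift {f : ℂ ≃ₜ ℂ} (I : HIsotopy f) (c : ℂ) :
    ∃ (h : ℂ ≃ₜ ℂ) (J : HIsotopy h), ∀ t w, exp (J.F t w) = I.F t (c + exp w) - I.F t c := by
  have hI : Continuous fun p : ℝ × ℂ => I.F p.1 c :=
    I.cont.comp (f := fun p : ℝ × ℂ => (p.1, c)) (by fun_prop)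
  obtain ⟨L, hL, hL0, hLexp⟩ := exists_continuous_log_of_eq_at (a₀ := ((0, 0) : ℝ × ℂ)) (w₀ := 0)
    (g := fun p : ℝ × ℂ => I.F p.1 (c + exp p.2) - I.F p.1 c)
    (.sub (I.cont.comp (f := fun p : ℝ × ℂ => (p.1, c + exp p.2)) (by fun_prop)) hI)
    (fun p => sub_ne_zero.2 ((I.F p.1).injective.ne (by simp))) (by simp [I.zero_apply])
  obtain ⟨K, hK, hK0, hKexp⟩ := exists_continuous_log_of_eq_at (a₀ := ((0, 0) : ℝ × ℂ)) (w₀ := 0)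
    (g := fun p : ℝ × ℂ => (I.F p.1).symm (I.F p.1 c + exp p.2) - c)
    (.sub (I.cont_symm.comp (f := fun p : ℝ × ℂ => (p.1, I.F p.1 c + exp p.2)) (by fun_prop))
      continuous_const)
    (fun p => sub_ne_zero.2 fun h => by simp [Homeomorph.symm_apply_eq] at h)
    (by simp [I.zero_apply, I.zero_symm_apply])
  have hKL : (fun p : ℝ × ℂ => K (p.1, L p)) = Prod.snd :=
    log_eq_of_eq_at (by fun_prop) continuous_snd (fun p => by simp [hKexp, hLexp]) (a := (0, 0))
      (by simp [hL0, hK0])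
  have hLK : (fun p : ℝ × ℂ => L (p.1, K p)) = Prod.snd :=
    log_eq_of_eq_at (by fun_prop) continuous_snd (fun p => by simp [hKexp, hLexp]) (a := (0, 0))
      (by simp [hL0, hK0])
  have hLid : (fun w => L (0, w)) = id :=
    log_eq_of_eq_at (by fun_prop) continuous_id (fun w => by simp [hLexp, I.zero_apply]) hL0
  let F (t : ℝ) : ℂ ≃ₜ ℂ :=
    { toFun := fun w => L (t, w)
      invFun := fun w => K (t, w)
      left_inv := fun w => congrFun hKL (t, w)
      right_inv := fun w => congrFun hLK (t, w) }
  exact ⟨F 1, ⟨F, hL, hK, Homeomorph.ext (congrFun hLid), rfl⟩, fun t w => hLexp (t, w)⟩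

lemma HIsotopy.hasSymmLogSlope {h : ℂ ≃ₜ ℂ} (J : HIsotopy h) : HasSymmLogSlope h := by
  have hsub (a : {p : ℂ × ℂ // p.1 ≠ p.2}) : a.1.1 - a.1.2 ≠ 0 := sub_ne_zero.2 a.2
  have hJ {q : {p : ℂ × ℂ // p.1 ≠ p.2} → ℂ} (hq : Continuous q) :
      Continuous fun p : unitInterval × {p : ℂ × ℂ // p.1 ≠ p.2} => J.F p.1 (q p.2) :=
    J.cont.comp (f := fun p : unitInterval × {p : ℂ × ℂ // p.1 ≠ p.2} => ((p.1 : ℝ), q p.2))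
      (by fun_prop)
  obtain ⟨L, hL, hLexp, hL0⟩ := exists_log_homotopy_s13
    (K := fun p : unitInterval × {p : ℂ × ℂ // p.1 ≠ p.2} =>
      (J.F p.1 p.2.1.1 - J.F p.1 p.2.1.2) / (p.2.1.1 - p.2.1.2))
    (((hJ (q := fun a => a.1.1) (by fun_prop)).sub (hJ (q := fun a => a.1.2) (by fun_prop))).div
      (by fun_prop) fun p => hsub p.2)
    (fun p => div_ne_zero (sub_ne_zero.2 ((J.F p.1).injective.ne p.2.2)) (hsub p.2))
    (l := fun _ => 0) continuous_const (fun a => by simp [J.zero_apply, div_self (hsub a)])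
  have hLsymm (x y : ℂ) (hxy : x ≠ y) : L (1, ⟨(x, y), hxy⟩) = L (1, ⟨(y, x), hxy.symm⟩) :=
    congrFun (log_eq_of_eq_at (l₁ := fun t : unitInterval => L (t, ⟨(x, y), hxy⟩))
      (l₂ := fun t => L (t, ⟨(y, x), hxy.symm⟩)) (by fun_prop) (by fun_prop)
      (fun t => by rw [hLexp, hLexp, ← neg_div_neg_eq, neg_sub, neg_sub])
      (a := 0) (by rw [hL0, hL0])) 1
  refine ⟨fun x y => if hxy : x ≠ y then L (1, ⟨(x, y), hxy⟩) else 0, ?_, fun x y hxy => ?_,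
    fun x y hxy => ?_⟩
  · have hL1 : Continuous fun a => L (1, a) := by fun_prop
    rw [continuousOn_iff_continuous_domRestrict]
    refine hL1.congr fun ⟨⟨x, y⟩, hxy⟩ => ?_
    simp only [domRestrict_apply, dif_pos (show x ≠ y from hxy)]
  · beta_reduce
    rw [dif_pos hxy, hLexp]
    simp [J.one, mul_div_cancel₀ _ (sub_ne_zero.2 hxy)]
  · beta_reduce
    rw [dif_pos hxy, dif_pos hxy.symm]
    exact hLsymm x y hxy

/-- `h` is a lift of `f` to the universal cover `w ↦ c + exp w` of the complement of the fixed
point `c` of `f`, namely the one that ends the lift of the isotopy `I`, so that linking numbers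
with `c` are read off from `h`. -/
structure IsLiftAt {f : ℂ ≃ₜ ℂ} (I : HIsotopy f) (c : ℂ) (h : ℂ ≃ₜ ℂ) : Prop where
  hasSymmLogSlope : HasSymmLogSlope h
  semiconj : Function.Semiconj (fun w => c + exp w) h f
  map_add_period : ∀ (w : ℂ) (k : ℤ),
    h (w + k * (2 * π * Complex.I)) = h w + k * (2 * π * Complex.I)
  enlace : ∀ w, Enlace I (c + exp w) c = ((h w).im - w.im) / (2 * π)

theorem exists_isLiftAt {f : ℂ ≃ₜ ℂ} (I : HIsotopy f) {c : ℂ} (hc : c ∈ FixPts f) :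
    ∃ h, IsLiftAt I c h := by
  obtain ⟨h, J, hJ⟩ := I.exists_lift c
  have hcont {q : ℝ → ℂ} (hq : Continuous q) : Continuous fun t => J.F t (q t) :=
    J.cont.comp (f := fun t => (t, q t)) (by fun_prop)
  refine ⟨h, J.hasSymmLogSlope, fun w => ?_, fun w k => ?_, fun w => ?_⟩
  · have hJ1 := hJ 1 w
    rw [J.one, I.one, hc] at hJ1
    simp [hJ1]
  · have hper : (fun t => J.F t (w + k * (2 * π * Complex.I))) =
        fun t => J.F t w + k * (2 * π * Complex.I) :=
      log_eq_of_eq_at (hcont continuous_const) ((hcont continuous_const).add continuous_const)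
        (fun t => by simp only [hJ, exp_periodic.int_mul k _]) (a := 0) (by simp [J.zero_apply])
    simpa [J.one] using congrFun hper 1
  · rw [Enlace, angVar_eq_of_exp (L := fun t => J.F t w) (hcont continuous_const).continuousOn
      fun t _ => hJ t w, J.one, J.zero_apply]

end Lifts

section DiscLifts

/-- The lift of index `j` of the disc `U` to the universal cover `w ↦ c + exp w` of `ℂ ∖ {c}`, where
`l` is a continuous determination of `u ↦ log (u - c)` on `U`. -/
def liftedDisc {U : Set ℂ} (l : U → ℂ) (j : ℤ) : Set ℂ :=
  range fun u => l u + j * (2 * π * I)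

variable {U : Set ℂ} {c : ℂ}

lemma exists_continuous_log_sub (φ : U ≃ₜ ℂ) (hc : c ∉ U) :
    ∃ l : U → ℂ, Continuous l ∧ ∀ u, c + exp (l u) = u := by
  obtain ⟨v, hv, hexp⟩ := exists_continuous_log_s13 (g := fun x => (φ.symm x : ℂ) - c) (by fun_prop)
    fun x => sub_ne_zero.2 (ne_of_mem_of_not_mem (φ.symm x).2 hc)
  exact ⟨fun u => v (φ u), by fun_prop, fun u => by simp [hexp]⟩

lemma isLocalHomeomorph_add_exp (c : ℂ) : IsLocalHomeomorph fun w => c + exp w :=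
  have hcompl : IsOpen ({0}ᶜ : Set ℂ) := isOpen_compl_singleton
  (Homeomorph.addLeft c).isLocalHomeomorph.comp <|
    hcompl.isOpenEmbedding_subtypeVal.isLocalHomeomorph.comp isCoveringMap_exp.isLocalHomeomorph

variable {l : U → ℂ} (hl : ∀ u, c + exp (l u) = u)

include hl

lemma add_exp_log_add_period (u : U) (j : ℤ) : c + exp (l u + j * (2 * π * I)) = u := by
  rw [exp_periodic.int_mul, hl]

lemma add_exp_mem_of_mem_liftedDisc {j : ℤ} {w : ℂ} (hw : w ∈ liftedDisc l j) :
    c + exp w ∈ U := by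
  obtain ⟨u, rfl⟩ := hw
  simp only [add_exp_log_add_period hl, u.2]

lemma pairwise_disjoint_liftedDisc : Pairwise (Disjoint on liftedDisc l) := by
  refine fun i j hij => disjoint_left.2 ?_
  rintro _ ⟨u, rfl⟩ ⟨v, huv⟩
  obtain rfl : u = v := Subtype.ext <| by
    simpa only [add_exp_log_add_period hl] using congrArg (fun w => c + exp w) huv.symm
  exact hij (by simpa [Real.pi_ne_zero] using huv.symm)

lemma isOpen_liftedDisc (hU : IsOpen U) (hlc : Continuous l) (j : ℤ) : IsOpen (liftedDisc l j) := by
  have hval : (fun w => c + exp w) ∘ (fun u => l u + j * (2 * π * I)) = Subtype.val :=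
    funext fun u => add_exp_log_add_period hl u j
  refine (IsLocalHomeomorph.of_comp ?_ (isLocalHomeomorph_add_exp c)
    (by fun_prop)).isOpenMap.isOpen_range
  rw [hval]
  exact hU.isOpenEmbedding_subtypeVal.isLocalHomeomorph

lemma exists_eq_log_add_period {w : ℂ} {u : U} (hw : c + exp w = u) :
    ∃ k : ℤ, w = l u + k * (2 * π * I) :=
  exp_eq_exp_iff_exists_int.1 (add_left_cancel (hw.trans (hl u).symm))

end DiscLifts

lemma isPreconnected_liftedDisc {U : Set ℂ} [PreconnectedSpace U] {l : U → ℂ} (hlc : Continuous l)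
    (j : ℤ) : IsPreconnected (liftedDisc l j) :=
  isPreconnected_range (by fun_prop)

section Returns

variable {f h : ℂ ≃ₜ ℂ} {U : Set ℂ} {z : ℂ}

lemma exists_iterate_mem_of_mem_recPlus (hU : IsOpen U) (hz : z ∈ RecPlus f) (hzU : z ∈ U) :
    ∃ n, 0 < n ∧ f^[n] z ∈ U := by
  obtain ⟨n, hn, hlim⟩ := hz
  obtain ⟨k, hkU, hk⟩ :=
    ((hlim.eventually_mem (hU.mem_nhds hzU)).and (eventually_gt_atTop 0)).exists
  exact ⟨n k, hk.trans_le (hn.id_le k), hkU⟩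

lemma retTime_pos_and_iterate_mem (hz : ∃ n, 0 < n ∧ f^[n] z ∈ U) :
    0 < retTime f U z ∧ f^[retTime f U z] z ∈ U :=
  Nat.sInf_mem hz

lemma iterate_notMem_of_lt_retTime {n : ℕ} (hn : 0 < n) (hlt : n < retTime f U z) :
    f^[n] z ∉ U :=
  fun hmem => Nat.notMem_of_lt_sInf hlt ⟨hn, hmem⟩

lemma exists_isPathIn (φ : U ≃ₜ ℂ) {x y : ℂ} (hx : x ∈ U) (hy : y ∈ U) : ∃ γ, IsPathIn U x y γ :=
  ⟨fun t => φ.symm (AffineMap.lineMap (φ ⟨x, hx⟩) (φ ⟨y, hy⟩) t),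
    Continuous.continuousOn (by fun_prop), fun _ _ => Subtype.coe_prop _, by simp, by simp⟩

variable {J : HIsotopy f} {c : ℂ} {l : U → ℂ}

lemma angVar_sub_eq_of_isPathIn (hlc : Continuous l) (hl : ∀ u, c + exp (l u) = u) {x y : U}
    {γ : ℝ → ℂ} (hγ : IsPathIn U x y γ) :
    angVar (fun t => γ t - c) = ((l y).im - (l x).im) / (2 * π) := by
  obtain ⟨hγc, hγU, hγ0, hγ1⟩ := hγ
  let L (t : unitInterval) : ℂ := l ⟨γ t, hγU t t.2⟩
  have hL : Continuous L := hlc.comp (hγc.domRestrict.subtype_mk _)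
  have hL0 : L 0 = l x := congrArg l (Subtype.ext hγ0)
  have hL1 : L 1 = l y := congrArg l (Subtype.ext hγ1)
  rw [angVar_eq_of_exp (L := IccExtend zero_le_one L) hL.Icc_extend'.continuousOn fun t ht => ?_,
    IccExtend_right, IccExtend_left]
  · rw [← hL0, ← hL1]; rfl
  · rw [IccExtend_of_mem _ _ ht, eq_sub_iff_add_eq', hl]

lemma IsLiftAt.add_exp_iterate (hh : IsLiftAt J c h) (n : ℕ) (w : ℂ) :
    c + exp (h^[n] w) = f^[n] (c + exp w) :=
  hh.semiconj.iterate_right n w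

lemma IsLiftAt.sum_enlace (hh : IsLiftAt J c h) (n : ℕ) (w : ℂ) :
    ∑ i ∈ Finset.range n, Enlace J (f^[i] (c + exp w)) c = ((h^[n] w).im - w.im) / (2 * π) := by
  calc ∑ i ∈ Finset.range n, Enlace J (f^[i] (c + exp w)) c
      = ∑ i ∈ Finset.range n, ((h^[i + 1] w).im / (2 * π) - (h^[i] w).im / (2 * π)) :=
        Finset.sum_congr rfl fun i _ => by
          rw [← hh.add_exp_iterate, hh.enlace, Function.iterate_succ_apply', sub_div]
    _ = ((h^[n] w).im - w.im) / (2 * π) := by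
        rw [Finset.sum_range_sub fun i => (h^[i] w).im / (2 * π), sub_div]; rfl

lemma IsLiftAt.alphaU_eq (hh : IsLiftAt J c h) (φ : U ≃ₜ ℂ) (hlc : Continuous l)
    (hl : ∀ u, c + exp (l u) = u) (z : U) (hret : f^[retTime f U z] z ∈ U) :
    alphaU J U c z = ((h^[retTime f U z] (l z)).im - (l ⟨_, hret⟩).im) / (2 * π) := by
  have hpath := exists_isPathIn φ hret z.2
  have hang : angVar (fun t => hpath.choose t - c) = ((l z).im - (l ⟨_, hret⟩).im) / (2 * π) :=
    angVar_sub_eq_of_isPathIn hlc hl hpath.choose_spec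
  have hsum := hh.sum_enlace (retTime f U z) (l z)
  rw [hl] at hsum
  rw [alphaU, dif_pos hpath, hang, hsum]
  ring

lemma IsLiftAt.exists_iterate_retTime_eq (hh : IsLiftAt J c h) (φ : U ≃ₜ ℂ) (hlc : Continuous l)
    (hl : ∀ u, c + exp (l u) = u) (z : U) (hret : f^[retTime f U z] z ∈ U) :
    ∃ k : ℤ, alphaU J U c z = k ∧
      h^[retTime f U z] (l z) = l ⟨_, hret⟩ + k * (2 * π * Complex.I) := by
  obtain ⟨k, hk⟩ := exists_eq_log_add_period hl (u := ⟨_, hret⟩)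
    (w := h^[retTime f U z] (l z)) (by rw [hh.add_exp_iterate, hl])
  refine ⟨k, ?_, hk⟩
  rw [hh.alphaU_eq φ hlc hl z hret, hk, div_eq_iff (by positivity)]
  simp

end Returns

section Separation

/-- The lift `w ↦ h w - 2 * π * I * p` of the same map as `h`, for which points turn `p` times less
around the puncture. -/
def unwind (h : ℂ ≃ₜ ℂ) (p : ℤ) : ℂ ≃ₜ ℂ :=
  h.trans (Homeomorph.addRight (-(p * (2 * π * I))))

lemma unwind_apply (h : ℂ ≃ₜ ℂ) (p : ℤ) (w : ℂ) : unwind h p w = h w - p * (2 * π * I) :=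
  (sub_eq_add_neg _ _).symm

variable {f h : ℂ ≃ₜ ℂ} {J : HIsotopy f} {c : ℂ}

lemma IsLiftAt.unwind_iterate (hh : IsLiftAt J c h) (p : ℤ) (n : ℕ) (w : ℂ) (j : ℤ) :
    (unwind h p)^[n] (w + j * (2 * π * Complex.I)) =
      h^[n] w + (j - n * p : ℤ) * (2 * π * Complex.I) := by
  induction n with
  | zero => simp
  | succ n ih =>
    rw [Function.iterate_succ_apply', Function.iterate_succ_apply', ih, unwind_apply,
      hh.map_add_period]
    push_cast
    ring

lemma IsLiftAt.add_exp_unwind_iterate (hh : IsLiftAt J c h) (p : ℤ) (n : ℕ) (w : ℂ) :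
    c + exp ((unwind h p)^[n] w) = f^[n] (c + exp w) := by
  have hit := hh.unwind_iterate p n w 0
  rw [Int.cast_zero, zero_mul, add_zero] at hit
  rw [hit, exp_periodic.int_mul, hh.add_exp_iterate]

lemma IsLiftAt.isBrouwer_unwind (hh : IsLiftAt J c h) {M : ℝ}
    (hM : ∀ z ∈ FixPts f, z ≠ c → |Enlace J z c| ≤ M) {p : ℤ} (hp : M < |(p : ℝ)|) :
    IsBrouwer (unwind h p) := by
  refine ⟨hh.hasSymmLogSlope.trans (.addRight _), fun w hw => hp.not_ge ?_⟩
  have hfix : c + exp w ∈ FixPts f := by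
    have hit := hh.add_exp_unwind_iterate p 1 w
    rw [Function.iterate_one, Function.iterate_one, hw] at hit
    exact hit.symm
  have hlink : Enlace J (c + exp w) c = p := by
    rw [unwind_apply, sub_eq_iff_eq_add] at hw
    rw [hh.enlace, hw, div_eq_iff (by positivity)]
    simp
  exact hlink ▸ hM _ hfix (by simp)

variable {U : Set ℂ} {l : U → ℂ}

lemma IsLiftAt.unwind_iterate_retTime_mem (hh : IsLiftAt J c h) (φ : U ≃ₜ ℂ) (hlc : Continuous l)
    (hl : ∀ u, c + exp (l u) = u) (z : U) (hret : f^[retTime f U z] z ∈ U) (p : ℤ) :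
    ∃ k : ℤ, alphaU J U c z = k ∧ ∀ j : ℤ,
      (unwind h p)^[retTime f U z] (l z + j * (2 * π * Complex.I)) ∈
        liftedDisc l (j + (k - retTime f U z * p)) := by
  obtain ⟨k, hα, hk⟩ := hh.exists_iterate_retTime_eq φ hlc hl z hret
  refine ⟨k, hα, fun j => ⟨⟨_, hret⟩, ?_⟩⟩
  rw [hh.unwind_iterate, hk]
  push_cast
  ring

lemma IsLiftAt.unwind_iterate_notMem (hh : IsLiftAt J c h) (hl : ∀ u, c + exp (l u) = u) (z : U)
    (p j : ℤ) {n : ℕ} (hn : 0 < n) (hlt : n < retTime f U z) :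
    (unwind h p)^[n] (l z + j * (2 * π * Complex.I)) ∉ ⋃ i, liftedDisc l i := by
  intro hmem
  obtain ⟨i, hi⟩ := mem_iUnion.1 hmem
  have hmemU := add_exp_mem_of_mem_liftedDisc hl hi
  rw [hh.add_exp_unwind_iterate, add_exp_log_add_period hl] at hmemU
  exact iterate_notMem_of_lt_retTime hn hlt hmemU

lemma IsLiftAt.mapsTo_unwind_liftedDisc (hh : IsLiftAt J c h) (hl : ∀ u, c + exp (l u) = u)
    (hfree : MapsTo f U Uᶜ) (p j : ℤ) :
    MapsTo (unwind h p) (liftedDisc l j) (liftedDisc l j)ᶜ := by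
  intro w hw hmem
  have hmemU := add_exp_mem_of_mem_liftedDisc hl hmem
  rw [← Function.iterate_one (unwind h p), hh.add_exp_unwind_iterate] at hmemU
  exact hfree (add_exp_mem_of_mem_liftedDisc hl hw) hmemU

theorem le_div_retTime_of_div_retTime_lt (hc : c ∈ FixPts f) {M : ℝ}
    (hM : ∀ z ∈ FixPts f, z ≠ c → |Enlace J z c| ≤ M) (hU : FreeDisc f U) {p : ℤ}
    (hp : M < |(p : ℝ)|) {z₁ z₂ : ℂ} (hz₁ : z₁ ∈ U) (hz₂ : z₂ ∈ U)
    (hret₁ : ∃ n, 0 < n ∧ f^[n] z₁ ∈ U) (hret₂ : ∃ n, 0 < n ∧ f^[n] z₂ ∈ U)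
    (hlt : alphaU J U c z₁ / retTime f U z₁ < p) :
    alphaU J U c z₂ / retTime f U z₂ ≤ p := by
  by_contra! hgt
  obtain ⟨hUo, ⟨φ⟩, hUd⟩ := hU
  have hfree : MapsTo f U Uᶜ := mapsTo_iff_image_subset.2 hUd.subset_compl_right
  have hcU : c ∉ U := fun hcU => hfree hcU (by rwa [show f c = c from hc])
  have : PreconnectedSpace U := φ.symm.surjective.denseRange.preconnectedSpace φ.symm.continuous
  obtain ⟨h, hh⟩ := exists_isLiftAt J hc
  obtain ⟨l, hlc, hl⟩ := exists_continuous_log_sub φ hcU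
  obtain ⟨hτ₁, hmem₁⟩ := retTime_pos_and_iterate_mem hret₁
  obtain ⟨hτ₂, hmem₂⟩ := retTime_pos_and_iterate_mem hret₂
  obtain ⟨k₁, hα₁, hg₁⟩ := hh.unwind_iterate_retTime_mem φ hlc hl ⟨z₁, hz₁⟩ hmem₁ p
  obtain ⟨k₂, hα₂, hg₂⟩ := hh.unwind_iterate_retTime_mem φ hlc hl ⟨z₂, hz₂⟩ hmem₂ p
  rw [hα₁, div_lt_iff₀' (by positivity)] at hlt
  rw [hα₂, lt_div_iff₀' (by positivity)] at hgt
  exact (hh.isBrouwer_unwind hM hp).not_exists_opposite_returns (isOpen_liftedDisc hl hUo hlc)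
    (isPreconnected_liftedDisc hlc) (pairwise_disjoint_liftedDisc hl)
    (hh.mapsTo_unwind_liftedDisc hl hfree p) (fun j => mem_range_self _) (fun j => mem_range_self _)
    hτ₁ hτ₂ (fun j _ => hh.unwind_iterate_notMem hl ⟨z₁, hz₁⟩ p j)
    (fun j _ => hh.unwind_iterate_notMem hl ⟨z₂, hz₂⟩ p j)
    (sub_neg.2 (by exact_mod_cast hlt)) (sub_pos.2 (by exact_mod_cast hgt)) hg₁ hg₂

end Separation

lemma sub_le_of_forall_int_not_between {M a b : ℝ} (hM : 0 ≤ M)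
    (h : ∀ p : ℤ, M < |(p : ℝ)| → a < p → b ≤ p) : b - a ≤ 2 * M + 2 := by
  by_contra! hlt
  obtain hb | ha : M + 1 < b ∨ a < -(M + 1) := by
    by_contra! hle
    linarith
  · have hceil := Int.le_ceil b
    have hp : ((⌈b⌉ - 1 : ℤ) : ℝ) < b := by push_cast; linarith [Int.ceil_lt_add_one b]
    refine hp.not_ge (h _ (lt_abs.2 (.inl ?_)) ?_) <;> push_cast <;> linarith
  · have hfloor := Int.floor_le a
    have hp : ((⌊a⌋ + 1 : ℤ) : ℝ) < b := by push_cast; linarith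
    refine hp.not_ge (h _ (lt_abs.2 (.inr ?_)) ?_) <;> push_cast <;>
      linarith [Int.lt_floor_add_one a]

lemma exists_forall_mem_Icc_of_sub_le {A : Set ℝ} {d : ℝ} (hA : ∀ a ∈ A, ∀ b ∈ A, b - a ≤ d) :
    ∃ c, ∀ a ∈ A, a ∈ Icc c (c + d) := by
  rcases A.eq_empty_or_nonempty with rfl | hne
  · simp
  obtain ⟨a₀, ha₀⟩ := hne
  have hbdd : BddBelow A := ⟨a₀ - d, fun a ha => by linarith [hA a ha a₀ ha₀]⟩
  refine ⟨sInf A, fun a ha => ⟨csInf_le hbdd ha, ?_⟩⟩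
  linarith [le_csInf ⟨a₀, ha₀⟩ fun b hb => sub_le_comm.1 (hA b hb a ha)]

theorem stmt13_alpha_over_tau_in_interval_general (f : ℂ ≃ₜ ℂ) (I : HIsotopy f) {M : ℝ}
    (hM0 : 0 ≤ M) {z' : ℂ} (hz' : z' ∈ FixPts f)
    (hM : ∀ z ∈ FixPts f, z ≠ z' → |Enlace I z z'| ≤ M) {U : Set ℂ} (hU : FreeDisc f U) :
    ∃ c : ℝ, ∀ z ∈ U, (∃ n, 0 < n ∧ f^[n] z ∈ U) →
      alphaU I U z' z / (retTime f U z : ℝ) ∈ Icc c (c + (2 * M + 2)) := by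
  let A := (fun z => alphaU I U z' z / (retTime f U z : ℝ)) '' {z ∈ U | ∃ n, 0 < n ∧ f^[n] z ∈ U}
  have hA : ∀ a ∈ A, ∀ b ∈ A, b - a ≤ 2 * M + 2 := by
    rintro _ ⟨z₁, ⟨hz₁, hret₁⟩, rfl⟩ _ ⟨z₂, ⟨hz₂, hret₂⟩, rfl⟩
    exact sub_le_of_forall_int_not_between hM0 fun p hp hlt =>
      le_div_retTime_of_div_retTime_lt hz' hM hU hp hz₁ hz₂ hret₁ hret₂ hlt
  obtain ⟨c, hc⟩ := exists_forall_mem_Icc_of_sub_le hA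
  exact ⟨c, fun z hz hret => hc _ ⟨z, ⟨hz, hret⟩, rfl⟩⟩

end RotationBounds

theorem stmt13_alpha_over_tau_in_interval
    (f : ℂ ≃ₜ ℂ) (I : HIsotopy f) (hP1 : P1 I) (hP2 : P2 I)
    (hnc : ¬ IsCompact (FixPts ⇑f)) (hA : Adapted I)
    (M : ℝ)
    (hM : ∀ z ∈ FixPts ⇑f, ∀ z' ∈ FixPts ⇑f, z ≠ z' → |Enlace I z z'| ≤ M)
    (z' : ℂ) (hz' : z' ∈ FixPts ⇑f)
    (U : Set ℂ) (hU : FreeDisc f U) :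
    ∃ c : ℝ, ∀ z ∈ RecPlus f ∩ U,
      alphaU I U z' z / (retTime f U z : ℝ) ∈ Set.Icc c (c + (2 * M + 4)) := by
  have hnt : (FixPts ⇑f).Nontrivial := not_subsingleton_iff.1 fun h => hnc h.finite.isCompact
  obtain ⟨z, hz, hne⟩ := hnt.exists_ne z'
  have hM0 : 0 ≤ M := (abs_nonneg _).trans (hM z hz z' hz' hne)
  obtain ⟨c, hc⟩ := stmt13_alpha_over_tau_in_interval_general f I hM0 hz'
    (fun z hz => hM z hz z' hz') hU
  exact ⟨c, fun z hz => Icc_subset_Icc_right (by linarith)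
    (hc z hz.2 (exists_iterate_mem_of_mem_recPlus hU.1 hz.1 hz.2))⟩

end
end
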